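/- arXiv:1107.2735 — 5 statements merged into one kernel-verified Lean document; each statement's English description precedes it below -/
import Mathlib

section
/- Let n ≥ 3 be an integer and let m, α, β satisfy 0 < m ≤ (n−2)/n, α ≠ 0, β ≠ 0, and m·α/β ≤ n − 2. Let η > 0, R₀ > 0, let v be a radial solution of (E) on [0,R₀), and set k = β/α. Then v(r) + k·r·v'(r) > 0 for all r ∈ [0,R₀); moreover v'(r) < 0 for all r ∈ (0,R₀) if α > 0, and v'(r) > 0 for all r ∈ (0,R₀) if α < 0. -/
open Real Set

/-- `v` is a radial solution of the elliptic equation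
`((n-1)/m)·((v^m)'' + ((n-1)/r)(v^m)') + α v + β r v' = 0` on `[0, R₀)`
with `v > 0`, `v(0) = η`, `v'(0) = 0`. -/
def IsRadialSolOn (n : ℕ) (m α β η R₀ : ℝ) (v : ℝ → ℝ) : Prop :=
  (∀ r ∈ Set.Ico (0:ℝ) R₀, 0 < v r) ∧
  ContinuousOn v (Set.Ico (0:ℝ) R₀) ∧
  ContDiffOn ℝ 2 v (Set.Ioo (0:ℝ) R₀) ∧
  HasDerivWithinAt v 0 (Set.Ico (0:ℝ) R₀) 0 ∧
  v 0 = η ∧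
  ∀ r ∈ Set.Ioo (0:ℝ) R₀,
    (((n : ℝ) - 1) / m) * (deriv (deriv (fun s => v s ^ m)) r
      + (((n : ℝ) - 1) / r) * deriv (fun s => v s ^ m) r)
    + α * v r + β * r * deriv v r = 0

lemma aux_deriv {R₀ : ℝ} {v : ℝ → ℝ} (hC : ContDiffOn ℝ 2 v (Set.Ioo (0:ℝ) R₀)) :
    (∀ r ∈ Set.Ioo (0:ℝ) R₀, HasDerivAt v (deriv v r) r) ∧
    (∀ r ∈ Set.Ioo (0:ℝ) R₀, HasDerivAt (deriv v) (deriv (deriv v) r) r) := by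
  have h2 : ContDiffOn ℝ 1 (deriv v) (Set.Ioo (0:ℝ) R₀) :=
    ((contDiffOn_succ_iff_deriv_of_isOpen (n := 1) isOpen_Ioo).1 hC).2.2
  constructor
  · intro r hr
    exact ((hC.differentiableOn (by norm_num)).differentiableAt (isOpen_Ioo.mem_nhds hr)).hasDerivAt
  · intro r hr
    exact ((h2.differentiableOn (by norm_num)).differentiableAt (isOpen_Ioo.mem_nhds hr)).hasDerivAt

/-- The ODE rewritten for `u = v^(m-1) v'` and for `v'`. -/
lemma aux_ode (N : ℕ) (m α β R₀ : ℝ) (hm : 0 < m) (v : ℝ → ℝ)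
    (hpos : ∀ r ∈ Set.Ico (0:ℝ) R₀, 0 < v r)
    (hC : ContDiffOn ℝ 2 v (Set.Ioo (0:ℝ) R₀))
    (hode : ∀ r ∈ Set.Ioo (0:ℝ) R₀,
    ((((N + 3 : ℕ) : ℝ) - 1) / m) * (deriv (deriv (fun s => v s ^ m)) r
      + ((((N + 3 : ℕ) : ℝ) - 1) / r) * deriv (fun s => v s ^ m) r)
    + α * v r + β * r * deriv v r = 0) (r : ℝ) (hr : r ∈ Set.Ioo (0:ℝ) R₀) :
    HasDerivAt (fun s => v s ^ (m - 1) * deriv v s)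
      (-((N:ℝ) + 2) / r * (v r ^ (m - 1) * deriv v r)
        - (α * v r + β * r * deriv v r) / ((N:ℝ) + 2)) r ∧
    deriv (deriv v) r = -(m - 1) * deriv v r ^ 2 / v r - ((N:ℝ) + 2) / r * deriv v r
      - (v r) ^ (1 - m) * (α * v r + β * r * deriv v r) / ((N:ℝ) + 2) := by
  obtain ⟨hd1, hd2⟩ := aux_deriv hC
  have hv0 : ∀ s ∈ Set.Ioo (0:ℝ) R₀, 0 < v s := fun s hs => hpos s ⟨hs.1.le, hs.2⟩
  have e1 : ∀ s ∈ Set.Ioo (0:ℝ) R₀,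
      deriv (fun s => v s ^ m) s = m * (v s ^ (m - 1) * deriv v s) := by
    intro s hs
    rw [((hd1 s hs).rpow_const (p := m) (Or.inl (hv0 s hs).ne')).deriv]
    ring
  have hu := ((hd1 r hr).rpow_const (p := m - 1) (Or.inl (hv0 r hr).ne')).mul (hd2 r hr)
  have e2 : deriv (deriv (fun s => v s ^ m)) r = m * deriv (fun s => v s ^ (m - 1) * deriv v s) r := by
    have : deriv (fun s => v s ^ m) =ᶠ[nhds r] fun s => m * (v s ^ (m - 1) * deriv v s) := by
      filter_upwards [isOpen_Ioo.mem_nhds hr] with s hs using e1 s hs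
    rw [this.deriv_eq, deriv_const_mul _ (by exact hu.differentiableAt)]
  have hu' : HasDerivAt (fun s => v s ^ (m - 1) * deriv v s)
     (deriv (fun s => v s ^ (m - 1) * deriv v s) r) r := (by exact hu.differentiableAt : DifferentiableAt ℝ (fun s => v s ^ (m - 1) * deriv v s) r).hasDerivAt
  have h := hode r hr
  rw [e2, e1 r hr] at h
  have hr0 : r ≠ 0 := hr.1.ne'
  have hN : (N:ℝ) + 2 ≠ 0 := by positivity
  have key : deriv (fun s => v s ^ (m - 1) * deriv v s) r =
     (-((N:ℝ) + 2) / r * (v r ^ (m - 1) * deriv v r)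
        - (α * v r + β * r * deriv v r) / ((N:ℝ) + 2)) := by
    push_cast at h
    have : (N:ℝ) + 3 - 1 = N + 2 := by ring
    rw [this] at h
    field_simp at h ⊢
    linear_combination h
  rw [← key]
  refine ⟨hu', ?_⟩
  have huq := hu'.unique hu
  rw [key] at huq
  have hvr := hv0 r hr
  have p1 : v r ^ (m - 1 - 1) = v r ^ (m-1) / v r := by
    rw [Real.rpow_sub_one hvr.ne']
  have p2 : v r ^ (1 - m) * v r ^ (m - 1) = 1 := by
    rw [← Real.rpow_add hvr]; simp
  rw [p1] at huq
  have hA : 0 < v r ^ (m-1) := by positivity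
  have hB : v r ^ (1 - m) = (v r ^ (m-1))⁻¹ := eq_inv_of_mul_eq_one_left p2
  rw [hB]
  generalize v r ^ (m-1) = A at *
  field_simp at huq ⊢
  linear_combination -huq

lemma aux_small {R₀ : ℝ} (v : ℝ → ℝ)
    (hcont : ContinuousOn v (Set.Ico (0:ℝ) R₀))
    (hd1 : ∀ r ∈ Set.Ioo (0:ℝ) R₀, HasDerivAt v (deriv v r) r)
    (hd0 : HasDerivWithinAt v 0 (Set.Ico (0:ℝ) R₀) 0) (δ : ℝ) (hδ : 0 < δ) (hδR : δ < R₀) :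
    ∃ ξ ∈ Set.Ioo 0 δ, |deriv v ξ| ≤ 1 := by
  have h1 := hasDerivWithinAt_iff_tendsto_slope.1 hd0
  have h2 : ∀ᶠ x in nhdsWithin (0:ℝ) (Set.Ioi 0), |slope v 0 x| ≤ 1 := by
    have h3 : ∀ᶠ x in nhdsWithin (0:ℝ) (Set.Ico 0 R₀ \ {0}), |slope v 0 x| < 1 := by
      have := h1.abs
      simp only [abs_zero] at this
      exact this.eventually_lt_const one_pos
    have h4 : nhdsWithin (0:ℝ) (Set.Ioi 0) ≤ nhdsWithin (0:ℝ) (Set.Ico 0 R₀ \ {0}) := by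
      rw [← nhdsWithin_Ioo_eq_nhdsGT (hδ.trans hδR)]
      apply nhdsWithin_mono
      intro x hx
      exact ⟨⟨hx.1.le, hx.2⟩, by simpa using hx.1.ne'⟩
    exact (h3.filter_mono h4).mono fun x hx => hx.le
  obtain ⟨x, hx, hxδ⟩ := (h2.and (Ioo_mem_nhdsGT hδ)).exists
  obtain ⟨ξ, hξ, he⟩ := exists_deriv_eq_slope v hxδ.1
    (hcont.mono fun y hy => ⟨hy.1, hy.2.trans_lt (hxδ.2.trans hδR)⟩)
    (fun y hy => (hd1 y ⟨hy.1, hy.2.trans (hxδ.2.trans hδR)⟩).differentiableAt.differentiableWithinAt)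
  refine ⟨ξ, ⟨hξ.1, hξ.2.trans hxδ.2⟩, ?_⟩
  rw [he]
  rwa [slope_def_field] at hx

/-- `r v'(r)` is continuous up to `0`. -/
lemma aux_q (N : ℕ) (m α β R₀ : ℝ) (hR : 0 < R₀) (v : ℝ → ℝ)
    (hpos : ∀ r ∈ Set.Ico (0:ℝ) R₀, 0 < v r)
    (hcont : ContinuousOn v (Set.Ico (0:ℝ) R₀))
    (hd1 : ∀ r ∈ Set.Ioo (0:ℝ) R₀, HasDerivAt v (deriv v r) r)
    (hd2 : ∀ r ∈ Set.Ioo (0:ℝ) R₀, HasDerivAt (deriv v) (deriv (deriv v) r) r)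
    (hd0 : HasDerivWithinAt v 0 (Set.Ico (0:ℝ) R₀) 0)
    (hu : ∀ r ∈ Set.Ioo (0:ℝ) R₀, HasDerivAt (fun s => v s ^ (m - 1) * deriv v s)
      (-((N:ℝ) + 2) / r * (v r ^ (m - 1) * deriv v r)
        - (α * v r + β * r * deriv v r) / ((N:ℝ) + 2)) r) :
    ContinuousOn (fun r => r * deriv v r) (Set.Ico (0:ℝ) R₀) := by
  intro r hr
  rcases hr.1.eq_or_lt with h0 | h0
  swap
  · exact (continuousAt_id.mul (hd2 r ⟨h0, hr.2⟩).continuousAt).continuousWithinAt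
  subst h0
  have hN : (0:ℝ) < (N:ℝ) + 2 := by positivity
  set R := R₀ / 2 with hRdef
  have hR' : 0 < R := by positivity
  have hRR : R < R₀ := by rw [hRdef]; linarith
  have hsub : Set.Icc 0 R ⊆ Set.Ico 0 R₀ := fun y hy => ⟨hy.1, hy.2.trans_lt hRR⟩
  obtain ⟨V, hV⟩ := isCompact_Icc.exists_bound_of_continuousOn (hcont.mono hsub)
  have hcm : ContinuousOn (fun r => v r ^ (m - 1)) (Set.Icc 0 R) :=
    (hcont.mono hsub).rpow_const fun x hx => Or.inl (hpos x (hsub hx)).ne'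
  obtain ⟨M, hM⟩ := isCompact_Icc.exists_bound_of_continuousOn hcm
  simp only [Real.norm_eq_abs] at hV hM
  have hV0 : 0 ≤ V := (abs_nonneg _).trans (hV 0 ⟨le_rfl, hR'.le⟩)
  have hM0 : 0 ≤ M := (abs_nonneg _).trans (hM 0 ⟨le_rfl, hR'.le⟩)
  set b := β / ((N:ℝ) + 2) with hb
  set K := ((N+3) * β - α) / ((N:ℝ) + 2) with hK
  set G : ℝ → ℝ := fun r => r ^ (N+2) * (v r ^ (m - 1) * deriv v r) + b * (r ^ (N+3) * v r) with hG
  have hGd : ∀ r ∈ Set.Ioo (0:ℝ) R₀, HasDerivAt G (K * r ^ (N+2) * v r) r := by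
    intro r hr
    have := ((hasDerivAt_pow (N+2) r).mul (hu r hr)).add
      (((hasDerivAt_pow (N+3) r).mul (hd1 r hr)).const_mul b)
    refine this.congr_deriv ?_
    have hr0 := hr.1.ne'
    simp only [hb, hK]
    push_cast
    field_simp
    ring
  set C := |K| * V with hCd
  have hC0 : 0 ≤ C := by positivity
  have hdiff : ∀ r ∈ Set.Ioc 0 R, ∀ ξ ∈ Set.Ioo 0 r, |G r - G ξ| ≤ C * r ^ (N+3) := by
    intro r hr ξ hξ
    have := (convex_Icc ξ r).norm_image_sub_le_of_norm_hasDerivWithin_le (f := G)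
      (f' := fun r => K * r ^ (N+2) * v r) (C := C * r ^ (N+2)) (x := ξ) (y := r)
      (fun x hx => (hGd x ⟨hξ.1.trans_le hx.1, (hx.2.trans hr.2).trans_lt hRR⟩).hasDerivWithinAt)
      (fun x hx => by
        have hx0 : 0 < x := hξ.1.trans_le hx.1
        rw [Real.norm_eq_abs, abs_mul, abs_mul, abs_of_pos (pow_pos hx0 _)]
        have h1 : x ^ (N+2) ≤ r ^ (N+2) := pow_le_pow_left₀ hx0.le hx.2 _
        have h2 := hV x ⟨hx0.le, hx.2.trans hr.2⟩
        calc |K| * x ^ (N+2) * |v x| ≤ |K| * r ^ (N+2) * V := by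
              have hr00 : 0 < r := hr.1
              gcongr
          _ = C * r ^ (N+2) := by rw [hCd]; ring)
      ⟨le_rfl, hξ.2.le⟩ ⟨hξ.2.le, le_rfl⟩
    rw [Real.norm_eq_abs, Real.norm_eq_abs, abs_of_pos (sub_pos.2 hξ.2)] at this
    refine this.trans ?_
    have hr0 := hr.1
    calc C * r ^ (N+2) * (r - ξ) ≤ C * r ^ (N+2) * r := by
          gcongr; linarith [hξ.1]
      _ = C * r ^ (N+3) := by ring
  have hGb : ∀ r ∈ Set.Ioc 0 R, |G r| ≤ C * r ^ (N+3) := by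
    intro r hr
    apply le_of_forall_pos_le_add
    intro ε hε
    set B := M + |b| * V + 1 with hB
    have hB0 : 0 < B := by positivity
    obtain ⟨ξ, hξ, h1⟩ := aux_small v hcont hd1 hd0 (min (min r 1) (ε / B))
      (lt_min (lt_min hr.1 one_pos) (by positivity))
      (((min_le_left _ _).trans (min_le_left _ _)).trans_lt (hr.2.trans_lt hRR))
    have hξr : ξ < r := hξ.2.trans_le ((min_le_left _ _).trans (min_le_left _ _))
    have hξ1 : ξ < 1 := hξ.2.trans_le ((min_le_left _ _).trans (min_le_right _ _))
    have hξε : ξ < ε / B := hξ.2.trans_le (min_le_right _ _)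
    have hξ0 := hξ.1
    have hξm : ξ ∈ Set.Icc 0 R := ⟨hξ0.le, hξr.le.trans hr.2⟩
    have hGξ : |G ξ| ≤ ε := by
      have p1 : ξ ^ (N+2) ≤ ξ := pow_le_of_le_one hξ0.le hξ1.le (by omega)
      have p2 : ξ ^ (N+3) ≤ ξ := pow_le_of_le_one hξ0.le hξ1.le (by omega)
      calc |G ξ| ≤ |ξ ^ (N+2) * (v ξ ^ (m - 1) * deriv v ξ)| + |b * (ξ ^ (N+3) * v ξ)| := abs_add_le _ _
        _ = ξ ^ (N+2) * (|v ξ ^ (m - 1)| * |deriv v ξ|) + |b| * (ξ ^ (N+3) * |v ξ|) := by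
          rw [abs_mul, abs_mul, abs_mul, abs_mul, abs_of_pos (pow_pos hξ0 _), abs_of_pos (pow_pos hξ0 _)]
        _ ≤ ξ * (M * 1) + |b| * (ξ * V) := by
          gcongr
          · exact hM ξ hξm
          · exact hV ξ hξm
        _ ≤ ξ * B := by rw [hB]; nlinarith
        _ ≤ ε := by rw [lt_div_iff₀ hB0] at hξε; exact hξε.le
    have h2 := hdiff r hr ξ ⟨hξ0, hξr⟩
    have h3 : |G r| ≤ |G r - G ξ| + |G ξ| := by
      simpa using abs_add_le (G r - G ξ) (G ξ)
    linarith
  have hqb : ∀ r ∈ Set.Icc 0 R, |r * deriv v r| ≤ (C + |b| * V) * r ^ 2 * v r ^ (1 - m) := by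
    intro r hr
    rcases hr.1.eq_or_lt with h0 | h0
    · subst h0; simp
    have hvr := hpos r (hsub hr)
    have p2 : v r ^ (1 - m) * v r ^ (m - 1) = 1 := by
      rw [← Real.rpow_add hvr]; simp
    have e : r ^ (N+1) * (r * deriv v r) = (G r - b * (r ^ (N+3) * v r)) * v r ^ (1 - m) := by
      simp only [hG]
      linear_combination (-(r ^ (N+2) * deriv v r)) * p2
    have h1 : r ^ (N+1) * |r * deriv v r| ≤ r ^ (N+1) * ((C + |b| * V) * r ^ 2 * v r ^ (1 - m)) := by
      have hA : 0 < v r ^ (1 - m) := by positivity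
      calc r ^ (N+1) * |r * deriv v r| = |r ^ (N+1) * (r * deriv v r)| := by
            rw [abs_mul (r ^ (N+1)), abs_of_pos (pow_pos h0 (N+1))]
        _ = |G r - b * (r ^ (N+3) * v r)| * v r ^ (1 - m) := by rw [e, abs_mul, abs_of_pos hA]
        _ ≤ (|G r| + |b * (r ^ (N+3) * v r)|) * v r ^ (1 - m) := by
            gcongr; exact abs_sub _ _
        _ = (|G r| + |b| * (r ^ (N+3) * |v r|)) * v r ^ (1 - m) := by
            rw [abs_mul, abs_mul, abs_of_pos (pow_pos h0 (N+3))]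
        _ ≤ (C * r ^ (N+3) + |b| * (r ^ (N+3) * V)) * v r ^ (1 - m) := by
            gcongr
            · exact hGb r ⟨h0, hr.2⟩
            · exact hV r hr
        _ = _ := by ring
    exact le_of_mul_le_mul_left h1 (pow_pos h0 _)
  have hmem : (0:ℝ) ∈ Set.Ico 0 R₀ := ⟨le_rfl, hR⟩
  have hlim : Filter.Tendsto (fun r => (C + |b| * V) * r ^ 2 * v r ^ (1 - m))
      (nhdsWithin 0 (Set.Ico 0 R₀)) (nhds 0) := by
    have : ContinuousWithinAt (fun r => (C + |b| * V) * r ^ 2 * v r ^ (1 - m)) (Set.Ico 0 R₀) 0 :=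
      ContinuousWithinAt.mul (by fun_prop)
        ((hcont 0 hmem).rpow_const (Or.inl (hpos 0 hmem).ne'))
    simpa [ContinuousWithinAt] using this
  unfold ContinuousWithinAt
  simp only [zero_mul]
  apply squeeze_zero_norm' _ hlim
  have hnear : ∀ᶠ r in nhdsWithin (0:ℝ) (Set.Ico 0 R₀), r < R :=
    nhdsWithin_le_nhds (Iio_mem_nhds hR')
  filter_upwards [hnear, self_mem_nhdsWithin] with r h1 h2
  exact hqb r ⟨h2.1, h1.le⟩

theorem stmt0 (n : ℕ) (hn : 3 ≤ n) (m α β η R₀ : ℝ)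
    (hm : 0 < m) (hm' : m ≤ ((n : ℝ) - 2) / n)
    (hα : α ≠ 0) (hβ : β ≠ 0) (hmαβ : m * α / β ≤ (n : ℝ) - 2)
    (hη : 0 < η) (hR₀ : 0 < R₀) (v : ℝ → ℝ)
    (hv : IsRadialSolOn n m α β η R₀ v) :
    (∀ r ∈ Set.Ico (0:ℝ) R₀, 0 < v r + (β / α) * r * deriv v r) ∧
    (0 < α → ∀ r ∈ Set.Ioo (0:ℝ) R₀, deriv v r < 0) ∧
    (α < 0 → ∀ r ∈ Set.Ioo (0:ℝ) R₀, 0 < deriv v r) := by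
  obtain ⟨hpos, hcont, hC, hd0, -, hode⟩ := hv
  obtain ⟨N, rfl⟩ : ∃ N, n = N + 3 := ⟨n - 3, by omega⟩
  obtain ⟨hd1, hd2⟩ := aux_deriv hC
  have hO := aux_ode N m α β R₀ hm v hpos hC hode
  have hq := aux_q N m α β R₀ hR₀ v hpos hcont hd1 hd2 hd0 (fun r hr => (hO r hr).1)
  have hN : (0:ℝ) < (N:ℝ) + 2 := by positivity
  set h : ℝ → ℝ := fun r => v r + (β / α) * r * deriv v r with hh
  have hhc : ContinuousOn h (Set.Ico 0 R₀) := by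
    have : h = fun r => v r + (β / α) * (r * deriv v r) := by funext r; simp only [hh]; ring
    rw [this]
    exact hcont.add (continuousOn_const.mul hq)
  -- monotonicity step
  have hW : ∀ r₀ ∈ Set.Ioo 0 R₀, (∀ r ∈ Set.Ioo 0 r₀, 0 < h r) →
      ∀ r ∈ Set.Ioc 0 r₀, 0 < -α * deriv v r := by
    intro r₀ hr₀ hp r hr
    set F : ℝ → ℝ := fun r => -α * (r ^ (N+1) * (v r ^ (m-1) * (r * deriv v r))) with hF
    have hsub : Set.Icc 0 r₀ ⊆ Set.Ico 0 R₀ := fun y hy => ⟨hy.1, hy.2.trans_lt hr₀.2⟩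
    have hFc : ContinuousOn F (Set.Icc 0 r₀) := by
      refine ContinuousOn.mono ?_ hsub
      exact continuousOn_const.mul ((continuousOn_id.pow _).mul
        ((hcont.rpow_const fun x hx => Or.inl (hpos x hx).ne').mul hq))
    have hFm : StrictMonoOn F (Set.Icc 0 r₀) := by
      apply strictMonoOn_of_deriv_pos (convex_Icc 0 r₀) hFc
      intro x hx
      rw [interior_Icc] at hx
      have hx' : x ∈ Set.Ioo 0 R₀ := ⟨hx.1, hx.2.trans hr₀.2⟩
      have hFe : F = fun r => -α * (r ^ (N+2) * (v r ^ (m-1) * deriv v r)) := by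
        funext r; simp only [hF]; ring
      have hder := ((hasDerivAt_pow (N+2) x).mul (hO x hx').1).const_mul (-α)
      have hder' : HasDerivAt F (α ^ 2 / ((N:ℝ) + 2) * x ^ (N+2) * h x) x := by
        rw [hFe]
        refine hder.congr_deriv ?_
        have hx0 := hx.1.ne'
        simp only [hh]
        have e1 : N + 2 - 1 = N + 1 := by omega
        rw [e1]
        push_cast
        field_simp
        ring
      rw [hder'.deriv]
      have := hp x hx
      have hx0 := hx.1
      positivity
    have h1 := hFm ⟨le_rfl, hr₀.1.le⟩ ⟨hr.1.le, hr.2⟩ hr.1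
    have h2 : F 0 = 0 := by simp [hF]
    rw [h2] at h1
    have hr0 := hr.1
    have hvr := hpos r (hsub ⟨hr.1.le, hr.2⟩)
    have h3 : F r = (r ^ (N+2) * v r ^ (m-1)) * (-α * deriv v r) := by simp only [hF]; ring
    rw [h3] at h1
    exact (pos_iff_pos_of_mul_pos h1).1 (by positivity)
  have hmain : ∀ r ∈ Set.Ico (0:ℝ) R₀, 0 < h r := by
    by_contra! hcon
    obtain ⟨r₁, hr₁, hle⟩ := hcon
    have hsub1 : Set.Icc 0 r₁ ⊆ Set.Ico 0 R₀ := fun y hy => ⟨hy.1, hy.2.trans_lt hr₁.2⟩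
    have hcomp : IsCompact (Set.Icc 0 r₁ ∩ h ⁻¹' Set.Iic 0) :=
      isCompact_Icc.of_isClosed_subset
        ((hhc.mono hsub1).preimage_isClosed_of_isClosed isClosed_Icc isClosed_Iic)
        Set.inter_subset_left
    obtain ⟨r₀, hr₀, hleast⟩ := hcomp.exists_isLeast ⟨r₁, ⟨hr₁.1, le_rfl⟩, hle⟩
    have hle0 : h r₀ ≤ 0 := hr₀.2
    have h00 : 0 < h 0 := by simpa [hh] using hpos 0 ⟨le_rfl, hR₀⟩
    have hr₀0 : 0 < r₀ := by
      rcases hr₀.1.1.eq_or_lt with h' | h'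
      · rw [← h'] at hle0; linarith
      · exact h'
    have hr₀m : r₀ ∈ Set.Ioo 0 R₀ := ⟨hr₀0, (hsub1 hr₀.1).2⟩
    have hp : ∀ r ∈ Set.Ioo 0 r₀, 0 < h r := by
      intro r hr
      by_contra! hc
      exact absurd (hleast ⟨⟨hr.1.le, hr.2.le.trans hr₀.1.2⟩, hc⟩) (not_le.2 hr.2)
    have hw := hW r₀ hr₀m hp
    rcases lt_or_gt_of_ne hβ with hb | hb
    · have h1 := hw r₀ ⟨hr₀0, le_rfl⟩
      have h2 := hpos r₀ ⟨hr₀0.le, hr₀m.2⟩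
      have h3 : h r₀ = v r₀ + (-β) / α ^ 2 * r₀ * (-α * deriv v r₀) := by
        simp only [hh]; field_simp
      have hb' : 0 < -β := by linarith
      have hα2 : 0 < α ^ 2 := by positivity
      have : 0 < (-β) / α ^ 2 * r₀ * (-α * deriv v r₀) := by
        have : 0 < (-β) / α ^ 2 * r₀ := by positivity
        exact mul_pos this h1
      linarith
    · -- Gronwall
      set a : ℝ → ℝ := fun r => (1 - m) * deriv v r / v r - β / ((N:ℝ) + 2) * r * v r ^ (1 - m) with ha
      have hhd : ∀ r ∈ Set.Ioo 0 R₀, HasDerivAt h ((m - β / α * (N + 1)) * deriv v r + a r * h r) r := by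
        intro r hr
        have hder := (hd1 r hr).add ((((hasDerivAt_id r).const_mul (β / α))).mul (hd2 r hr))
        refine hder.congr_deriv ?_
        rw [(hO r hr).2]
        have hr0 := hr.1.ne'
        have hv0 := (hpos r ⟨hr.1.le, hr.2⟩).ne'
        simp only [hh, ha, id]
        generalize v r ^ (1 - m) = A
        field_simp
        ring
      have hIsub : Set.Icc (r₀/2) r₀ ⊆ Set.Ioo 0 R₀ :=
        fun y hy => ⟨by linarith [hy.1], hy.2.trans_lt hr₀m.2⟩
      have hac : ContinuousOn a (Set.Icc (r₀/2) r₀) := by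
        have hvc : ContinuousOn v (Set.Icc (r₀/2) r₀) :=
          hcont.mono fun y hy => ⟨(hIsub hy).1.le, (hIsub hy).2⟩
        have hvp : ∀ x ∈ Set.Icc (r₀/2) r₀, v x ≠ 0 :=
          fun x hx => (hpos x ⟨(hIsub hx).1.le, (hIsub hx).2⟩).ne'
        have hpc : ContinuousOn (deriv v) (Set.Icc (r₀/2) r₀) :=
          fun x hx => (hd2 x (hIsub hx)).continuousAt.continuousWithinAt
        exact ((continuousOn_const.mul hpc).div hvc hvp).sub
          ((continuousOn_const.mul continuousOn_id).mul
            (hvc.rpow_const fun x hx => Or.inl (hvp x hx)))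
      obtain ⟨A, hA⟩ := isCompact_Icc.exists_bound_of_continuousOn hac
      have hcm : ContinuousOn (fun r => h r * Real.exp (A * r)) (Set.Icc (r₀/2) r₀) :=
        (hhc.mono fun y hy => ⟨(hIsub hy).1.le, (hIsub hy).2⟩).mul (by fun_prop)
      have hmono : MonotoneOn (fun r => h r * Real.exp (A * r)) (Set.Icc (r₀/2) r₀) := by
        have hdd : ∀ x ∈ Set.Ioo (r₀/2) r₀, HasDerivAt (fun r => h r * Real.exp (A * r))
          (((m - β / α * (N + 1)) * deriv v x + (a x + A) * h x) * Real.exp (A * x)) x := by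
          intro x hx
          have := (hhd x (hIsub ⟨hx.1.le, hx.2.le⟩)).mul (((hasDerivAt_id x).const_mul A).exp)
          refine this.congr_deriv ?_
          simp only [id]
          ring
        apply monotoneOn_of_deriv_nonneg (convex_Icc _ _) hcm
        · rw [interior_Icc]
          exact fun x hx => (hdd x hx).differentiableAt.differentiableWithinAt
        · rw [interior_Icc]
          intro x hx
          rw [(hdd x hx).deriv]
          have hx0 : 0 < x := by linarith [hx.1]
          have h1 := hw x ⟨hx0, hx.2.le⟩
          have h2 := hp x ⟨hx0, hx.2⟩
          have h3 := hA x ⟨hx.1.le, hx.2.le⟩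
          rw [Real.norm_eq_abs] at h3
          have h4 := (abs_le.1 h3).1
          have h5 : 0 ≤ (a x + A) * h x := mul_nonneg (by linarith) h2.le
          have h6 : (m - β / α * (N + 1)) * deriv v x =
              β / α ^ 2 * ((N + 1) - m * α / β) * (-α * deriv v x) := by
            field_simp
            ring
          have h7 : 0 ≤ (N + 1 : ℝ) - m * α / β := by
            push_cast at hmαβ
            linarith
          have h8 : 0 ≤ (m - β / α * (N + 1)) * deriv v x := by
            rw [h6]
            exact mul_nonneg (mul_nonneg (by positivity) h7) h1.le
          exact mul_nonneg (add_nonneg h8 h5) (Real.exp_pos _).le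
      have hfin := hmono ⟨le_rfl, by linarith⟩ ⟨by linarith, le_rfl⟩ (by linarith : r₀/2 ≤ r₀)
      have h1 : 0 < h (r₀/2) * Real.exp (A * (r₀/2)) :=
        mul_pos (hp _ ⟨by linarith, by linarith⟩) (Real.exp_pos _)
      have h2 : h r₀ * Real.exp (A * r₀) ≤ 0 :=
        mul_nonpos_of_nonpos_of_nonneg hle0 (Real.exp_pos _).le
      simp only at hfin
      linarith
  refine ⟨hmain, fun hα' r hr => ?_, fun hα' r hr => ?_⟩
  · have := hW r hr (fun x hx => hmain x ⟨hx.1.le, hx.2.trans hr.2⟩) r ⟨hr.1, le_rfl⟩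
    by_contra! hc
    nlinarith
  · have := hW r hr (fun x hx => hmain x ⟨hx.1.le, hx.2.trans hr.2⟩) r ⟨hr.1, le_rfl⟩
    by_contra! hc
    nlinarith
end

section
/- Let n ≥ 3 be an integer, let η > 0, and let m, α, β satisfy 0 < m ≤ (n−2)/n, β > 0, and α ≤ β·(n−2)/m. Then there exists a unique radial solution v of (E) on [0,∞). Moreover, if α ≠ 0 then, with k = β/α, the function w₁(r) = r²·v(r)^{2k} satisfies w₁'(r) > 0 for all r > 0. -/
open Real Set

/-- `v` is a radial solution of the elliptic equation
`((n-1)/m)·((v^m)'' + ((n-1)/r)(v^m)') + α v + β r v' = 0` on `[0, ∞)`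
with `v > 0`, `v(0) = η`, `v'(0) = 0`. -/
def IsRadialSol (n : ℕ) (m α β η : ℝ) (v : ℝ → ℝ) : Prop :=
  (∀ r ∈ Set.Ici (0:ℝ), 0 < v r) ∧
  ContinuousOn v (Set.Ici (0:ℝ)) ∧
  ContDiffOn ℝ 2 v (Set.Ioi (0:ℝ)) ∧
  HasDerivWithinAt v 0 (Set.Ici (0:ℝ)) 0 ∧
  v 0 = η ∧
  ∀ r ∈ Set.Ioi (0:ℝ),
    (((n : ℝ) - 1) / m) * (deriv (deriv (fun s => v s ^ m)) r
      + (((n : ℝ) - 1) / r) * deriv (fun s => v s ^ m) r)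
    + α * v r + β * r * deriv v r = 0


noncomputable def Jop (n : ℕ) (g : ℝ → ℝ) (s : ℝ) : ℝ := ∫ t in (0:ℝ)..1, t ^ (n-1) * g (t * s)

noncomputable def Kop (n : ℕ) (β d : ℝ) (g : ℝ → ℝ) (s : ℝ) : ℝ := s * (β * g s + d * Jop n g s)

noncomputable def Oop (n : ℕ) (β d : ℝ) (g : ℝ → ℝ) (r : ℝ) : ℝ :=
  ∫ s in (0:ℝ)..r, Kop n β d g s

lemma Jop_cont (n : ℕ) {g : ℝ → ℝ} (hg : Continuous g) : Continuous (Jop n g) := by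
  unfold Jop
  apply intervalIntegral.continuous_parametric_intervalIntegral_of_continuous'
  simp only [Function.uncurry_def]
  fun_prop

lemma Kop_cont (n : ℕ) (β d : ℝ) {g : ℝ → ℝ} (hg : Continuous g) : Continuous (Kop n β d g) := by
  have := Jop_cont n hg
  unfold Kop
  fun_prop

lemma Oop_hasDeriv (n : ℕ) (β d : ℝ) {g : ℝ → ℝ} (hg : Continuous g) (r : ℝ) :
    HasDerivAt (Oop n β d g) (Kop n β d g r) r := by
  have h := Kop_cont n β d hg
  exact intervalIntegral.integral_hasDerivAt_right (h.intervalIntegrable _ _)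
    h.stronglyMeasurable.stronglyMeasurableAtFilter h.continuousAt

lemma Oop_cont (n : ℕ) (β d : ℝ) {g : ℝ → ℝ} (hg : Continuous g) : Continuous (Oop n β d g) :=
  continuous_iff_continuousAt.2 fun r => (Oop_hasDeriv n β d hg r).continuousAt

lemma Jop_congr (n : ℕ) {g1 g2 : ℝ → ℝ} {s : ℝ} (hs : 0 ≤ s)
    (h : ∀ x, 0 ≤ x → x ≤ s → g1 x = g2 x) : Jop n g1 s = Jop n g2 s := by
  unfold Jop
  apply intervalIntegral.integral_congr
  intro t ht
  rw [uIcc_of_le zero_le_one] at ht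
  simp only
  rw [h (t*s) (mul_nonneg ht.1 hs) (mul_le_of_le_one_left hs ht.2)]

lemma Oop_congr (n : ℕ) (β d : ℝ) {g1 g2 : ℝ → ℝ} {r : ℝ} (hr : 0 ≤ r)
    (h : ∀ x, 0 ≤ x → x ≤ r → g1 x = g2 x) : Oop n β d g1 r = Oop n β d g2 r := by
  unfold Oop
  apply intervalIntegral.integral_congr
  intro s hs
  rw [uIcc_of_le hr] at hs
  simp only [Kop]
  rw [h s hs.1 hs.2, Jop_congr n hs.1 fun x h0 h1 => h x h0 (h1.trans hs.2)]

lemma Jop_mul (n : ℕ) (hn : 1 ≤ n) (g : ℝ → ℝ) (s : ℝ) :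
    s ^ n * Jop n g s = ∫ x in (0:ℝ)..s, x ^ (n-1) * g x := by
  unfold Jop
  have h := intervalIntegral.smul_integral_comp_mul_right (a := 0) (b := 1)
    (fun x => x ^ (n-1) * g x) s
  simp only [zero_mul, one_mul, smul_eq_mul] at h
  rw [← h]
  obtain ⟨k, rfl⟩ : ∃ k, n = k + 1 := ⟨n - 1, by omega⟩
  simp only [Nat.add_sub_cancel]
  rw [pow_succ', mul_assoc, ← intervalIntegral.integral_const_mul]
  congr 1
  apply intervalIntegral.integral_congr
  intro t _
  simp only
  rw [mul_pow]; ring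

lemma Jop_diff (n : ℕ) {g1 g2 : ℝ → ℝ} (h1 : Continuous g1) (h2 : Continuous g2)
    {K D s : ℝ} (hK : 0 ≤ K) (hD : 0 ≤ D) (hs : 0 ≤ s)
    (h : ∀ x, 0 ≤ x → x ≤ s → |g1 x - g2 x| ≤ D * exp (K * x^2)) :
    |Jop n g1 s - Jop n g2 s| ≤ D * exp (K * s^2) := by
  unfold Jop
  rw [← intervalIntegral.integral_sub (Continuous.intervalIntegrable (by fun_prop) _ _)
    (Continuous.intervalIntegrable (by fun_prop) _ _)]
  have := intervalIntegral.norm_integral_le_of_norm_le_const (a := (0:ℝ)) (b := 1)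
    (f := fun t => t ^ (n-1) * g1 (t * s) - t ^ (n-1) * g2 (t * s)) (C := D * exp (K * s^2)) ?_
  · simpa using this
  · intro t ht
    rw [uIoc_of_le zero_le_one] at ht
    rw [← mul_sub, norm_mul, Real.norm_eq_abs, Real.norm_eq_abs, abs_of_nonneg (pow_nonneg ht.1.le _)]
    have a1 := h (t*s) (mul_nonneg ht.1.le hs) (mul_le_of_le_one_left hs ht.2)
    have a2 : t ^ (n-1) ≤ 1 := pow_le_one₀ ht.1.le ht.2
    have a3 : exp (K * (t*s)^2) ≤ exp (K * s^2) := by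
      apply exp_le_exp.2
      apply mul_le_mul_of_nonneg_left _ hK
      exact pow_le_pow_left₀ (mul_nonneg ht.1.le hs) (mul_le_of_le_one_left hs ht.2) 2
    calc t ^ (n-1) * |g1 (t*s) - g2 (t*s)| ≤ 1 * |g1 (t*s) - g2 (t*s)| := by gcongr
      _ ≤ D * exp (K * (t*s)^2) := by rw [one_mul]; exact a1
      _ ≤ _ := by gcongr

lemma Oop_diff (n : ℕ) (β d : ℝ) {g1 g2 : ℝ → ℝ} (h1 : Continuous g1) (h2 : Continuous g2)
    {K D r : ℝ} (hK : 0 < K) (hD : 0 ≤ D) (hr : 0 ≤ r)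
    (h : ∀ x, 0 ≤ x → x ≤ r → |g1 x - g2 x| ≤ D * exp (K * x^2)) :
    |Oop n β d g1 r - Oop n β d g2 r| ≤ (|β| + |d|) * D / (2 * K) * exp (K * r^2) := by
  have c1 := Kop_cont n β d h1
  have c2 := Kop_cont n β d h2
  unfold Oop
  rw [← intervalIntegral.integral_sub (c1.intervalIntegrable _ _) (c2.intervalIntegrable _ _)]
  have hder : ∀ x : ℝ, HasDerivAt (fun s => (|β| + |d|) * D / (2 * K) * exp (K * s^2))
      ((|β| + |d|) * D * (x * exp (K * x^2))) x := by
    intro x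
    have := (((hasDerivAt_pow 2 x).const_mul K).exp).const_mul ((|β| + |d|) * D / (2 * K))
    refine this.congr_deriv ?_
    simp only [Nat.cast_ofNat, Nat.add_one_sub_one, pow_one]
    field_simp
  have hint : ∫ s in (0:ℝ)..r, (|β| + |d|) * D * (s * exp (K * s^2))
      = (|β| + |d|) * D / (2 * K) * exp (K * r^2) - (|β| + |d|) * D / (2 * K) * exp (K * 0^2) :=
    intervalIntegral.integral_eq_sub_of_hasDerivAt (fun x _ => hder x)
      (Continuous.intervalIntegrable (by fun_prop) _ _)
  have hb : ‖∫ s in (0:ℝ)..r, (Kop n β d g1 s - Kop n β d g2 s)‖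
      ≤ ∫ s in (0:ℝ)..r, (|β| + |d|) * D * (s * exp (K * s^2)) := by
    apply intervalIntegral.norm_integral_le_of_norm_le hr
    · refine Filter.Eventually.of_forall fun s hs => ?_
      have e1 := h s hs.1.le hs.2
      have e2 := Jop_diff n h1 h2 hK.le hD hs.1.le fun x h0 h1 => h x h0 (h1.trans hs.2)
      have : Kop n β d g1 s - Kop n β d g2 s
          = s * (β * (g1 s - g2 s) + d * (Jop n g1 s - Jop n g2 s)) := by
        unfold Kop; ring
      rw [this, Real.norm_eq_abs, abs_mul, abs_of_pos hs.1]
      have e3 : |β * (g1 s - g2 s) + d * (Jop n g1 s - Jop n g2 s)|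
          ≤ |β| * (D * exp (K * s^2)) + |d| * (D * exp (K * s^2)) := by
        refine (abs_add_le _ _).trans ?_
        rw [abs_mul, abs_mul]
        gcongr
      calc s * _ ≤ s * (|β| * (D * exp (K * s^2)) + |d| * (D * exp (K * s^2))) :=
            mul_le_mul_of_nonneg_left e3 hs.1.le
        _ = _ := by ring
    · exact Continuous.intervalIntegrable (by fun_prop) _ _
  rw [Real.norm_eq_abs, hint] at hb
  have : 0 ≤ (|β| + |d|) * D / (2 * K) * exp (K * 0^2) := by positivity
  linarith

noncomputable def trunc (M p x : ℝ) : ℝ := (max 0 (min x M)) ^ p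

lemma trunc_lip {M p : ℝ} (hM : 0 < M) (hp : 1 ≤ p) (x y : ℝ) :
    |trunc M p x - trunc M p y| ≤ p * M ^ (p-1) * |x - y| := by
  unfold trunc
  have hx : ∀ z : ℝ, max 0 (min z M) ∈ Icc 0 M := fun z =>
    ⟨le_max_left _ _, max_le hM.le (min_le_right _ _)⟩
  have h := Convex.norm_image_sub_le_of_norm_hasDerivWithin_le (f := fun z : ℝ => z ^ p)
    (f' := fun z => p * z ^ (p-1)) (s := Icc 0 M) (C := p * M ^ (p-1))
    (fun z _ => (Real.hasDerivAt_rpow_const (Or.inr hp)).hasDerivWithinAt) (fun z hz => by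
      rw [Real.norm_eq_abs, abs_of_nonneg (mul_nonneg (by linarith) (rpow_nonneg hz.1 _))]
      have := rpow_le_rpow hz.1 hz.2 (by linarith : 0 ≤ p - 1)
      gcongr) (convex_Icc 0 M) (hx y) (hx x)
  simp only [Real.norm_eq_abs] at h
  refine h.trans ?_
  have : 0 ≤ p * M ^ (p-1) := mul_nonneg (by linarith) (rpow_nonneg hM.le _)
  refine mul_le_mul_of_nonneg_left ?_ this
  have a1 := abs_max_sub_max_le_max 0 (min x M) 0 (min y M)
  have a2 := abs_min_sub_min_le_max x M y M
  simp only [sub_self, abs_zero, abs_nonneg, max_eq_right, max_eq_left] at a1 a2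
  exact a1.trans a2

lemma trunc_cont {M p : ℝ} (hp : 1 ≤ p) : Continuous (trunc M p) := by
  unfold trunc
  exact Continuous.rpow_const (by fun_prop) fun x => Or.inr (by linarith)

lemma trunc_bound {M p : ℝ} (hM : 0 < M) (hp : 1 ≤ p) (x : ℝ) : |trunc M p x| ≤ M ^ p := by
  unfold trunc
  rw [abs_of_nonneg (rpow_nonneg (le_max_left _ _) _)]
  exact rpow_le_rpow (le_max_left _ _) (max_le hM.le (min_le_right _ _)) (by linarith)

lemma trunc_eq {M p x : ℝ} (h0 : 0 ≤ x) (h1 : x ≤ M) : trunc M p x = x ^ p := by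
  unfold trunc
  rw [min_eq_left h1, max_eq_right h0]

/-- global solution of the truncated problem -/
lemma trunc_exists (n : ℕ) (β d κ c0 M p : ℝ) (hM : 0 < M) (hp : 1 ≤ p) :
    ∃ u : ℝ → ℝ, Continuous u ∧ ∀ r, 0 ≤ r →
      u r = c0 - κ * Oop n β d (fun s => trunc M p (u s)) r := by
  set L := p * M ^ (p-1) with hL
  have hL0 : 0 ≤ L := mul_nonneg (by linarith) (rpow_nonneg hM.le _)
  set K := |κ| * (|β| + |d|) * L + 1 with hKdef
  have hK : 0 < K := by positivity
  set S : BoundedContinuousFunction ℝ ℝ → ℝ → ℝ := fun z s => exp (K * s^2) * z s with hS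
  have Scont : ∀ z, Continuous (S z) := fun z => by
    have := z.continuous
    simp only [hS]; fun_prop
  have gcont : ∀ z, Continuous (fun s => trunc M p (S z s)) := fun z =>
    (trunc_cont hp).comp (Scont z)
  have hbd : ∀ z : BoundedContinuousFunction ℝ ℝ, ∀ r : ℝ,
      ‖exp (-(K * r^2)) * (c0 - κ * Oop n β d (fun s => trunc M p (S z s)) |r|)‖
        ≤ |c0| + |κ| * ((|β| + |d|) * M ^ p / (2 * K)) := by
    intro z r
    have h := Oop_diff n β d (gcont z) (continuous_const (y := (0:ℝ))) hK
      (rpow_nonneg hM.le p) (abs_nonneg r) (fun x h0 h1 => by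
        rw [sub_zero]
        refine (trunc_bound hM hp _).trans ?_
        exact le_mul_of_one_le_right (rpow_nonneg hM.le p) (one_le_exp (by positivity)))
    have h0 : Oop n β d (fun _ => (0:ℝ)) |r| = 0 := by simp [Oop, Kop, Jop]
    rw [h0, sub_zero, sq_abs] at h
    rw [norm_mul, Real.norm_eq_abs, Real.norm_eq_abs, abs_of_pos (exp_pos _)]
    set E := exp (K * r^2)
    have hE : 1 ≤ E := one_le_exp (by positivity)
    rw [exp_neg]
    have : abs (c0 - κ * Oop n β d (fun s => trunc M p (S z s)) (abs r))
        ≤ E * (|c0| + |κ| * ((|β| + |d|) * M ^ p / (2 * K))) := by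
      refine (abs_sub _ _).trans ?_
      rw [abs_mul]
      have h' := mul_le_mul_of_nonneg_left h (abs_nonneg κ)
      have : |c0| ≤ E * |c0| := le_mul_of_one_le_left (abs_nonneg _) hE
      nlinarith
    exact inv_mul_le_of_le_mul₀ (by positivity) (by positivity) this
  let Φ : BoundedContinuousFunction ℝ ℝ → BoundedContinuousFunction ℝ ℝ := fun z =>
    BoundedContinuousFunction.ofNormedAddCommGroup
      (fun r => exp (-(K * r^2)) * (c0 - κ * Oop n β d (fun s => trunc M p (S z s)) |r|))
      (by
        have := (Oop_cont n β d (gcont z)).comp continuous_abs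
        simp only [Function.comp_def] at this
        fun_prop) _ (hbd z)
  have hΦ : ContractingWith (1/2) Φ := by
    refine ⟨by norm_num [← NNReal.coe_lt_coe], LipschitzWith.of_dist_le_mul fun z1 z2 => ?_⟩
    rw [BoundedContinuousFunction.dist_le (by positivity)]
    intro r
    have h := Oop_diff n β d (gcont z1) (gcont z2) hK (D := L * dist z1 z2)
      (by positivity) (abs_nonneg r) (fun x h0 h1 => by
        refine (trunc_lip hM hp _ _).trans ?_
        rw [← hL, mul_assoc L]
        refine mul_le_mul_of_nonneg_left ?_ hL0
        simp only [hS]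
        rw [← mul_sub, abs_mul, abs_of_pos (exp_pos _), mul_comm]
        refine mul_le_mul_of_nonneg_right ?_ (exp_pos _).le
        rw [← Real.dist_eq]
        exact BoundedContinuousFunction.dist_coe_le_dist x)
    rw [sq_abs] at h
    have e : dist (Φ z1 r) (Φ z2 r) = exp (-(K*r^2)) * (|κ| *
      abs (Oop n β d (fun s => trunc M p (S z1 s)) (abs r) - Oop n β d (fun s => trunc M p (S z2 s)) (abs r))) := by
      rw [Real.dist_eq, ← abs_mul, ← abs_of_pos (exp_pos (-(K*r^2))), ← abs_mul, ← abs_neg]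
      congr 1
      simp only [Φ, BoundedContinuousFunction.coe_ofNormedAddCommGroup]
      ring
    rw [e]
    set E := exp (K * r^2)
    have hE : 0 < E := exp_pos _
    rw [exp_neg]
    apply inv_mul_le_of_le_mul₀ (by positivity) (by positivity)
    refine (mul_le_mul_of_nonneg_left h (abs_nonneg κ)).trans ?_
    have : |κ| * ((|β| + |d|) * (L * dist z1 z2) / (2 * K) * E)
       = (|κ| * (|β| + |d|) * L / K) * (1/2 * (E * dist z1 z2)) := by field_simp
    rw [this]
    have h1 : |κ| * (|β| + |d|) * L / K ≤ 1 := by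
      rw [div_le_one hK, hKdef]; linarith
    calc _ ≤ 1 * (1/2 * (E * dist z1 z2)) := by gcongr
      _ = _ := by push_cast; ring
  obtain ⟨z, hz⟩ : ∃ z, Φ z = z := ⟨_, hΦ.fixedPoint_isFixedPt⟩
  refine ⟨S z, Scont z, fun r hr => ?_⟩
  have h := congrArg (fun f : BoundedContinuousFunction ℝ ℝ => f r) hz
  simp only [Φ, BoundedContinuousFunction.coe_ofNormedAddCommGroup] at h
  rw [abs_of_nonneg hr] at h
  have : S z r = exp (K * r^2) * z r := rfl
  rw [this, ← h, ← mul_assoc, ← exp_add]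
  simp

def Psol (n : ℕ) (p κ β d c0 T : ℝ) (u : ℝ → ℝ) : Prop :=
  Continuous u ∧ ∀ r, 0 ≤ r → r < T →
    0 < u r ∧ u r = c0 - κ * Oop n β d (fun s => u s ^ p) r

lemma Oop_zero (n : ℕ) (β d : ℝ) (g : ℝ → ℝ) : Oop n β d g 0 = 0 := by simp [Oop]

lemma gp_cont {u : ℝ → ℝ} {p : ℝ} (hp : 1 ≤ p) (h : Continuous u) : Continuous fun s => u s ^ p :=
  h.rpow_const fun _ => Or.inr (by linarith)

lemma Psol_mono {n : ℕ} {p κ β d c0 T T' : ℝ} {u : ℝ → ℝ} (h : Psol n p κ β d c0 T u)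
    (hT : T' ≤ T) : Psol n p κ β d c0 T' u :=
  ⟨h.1, fun r h0 h1 => h.2 r h0 (h1.trans_le hT)⟩

lemma Psol_unique_aux {n : ℕ} {p κ β d c0 T : ℝ} (hp : 1 ≤ p) {u1 u2 : ℝ → ℝ}
    (h1 : Psol n p κ β d c0 T u1) (h2 : Psol n p κ β d c0 T u2) (R : ℝ) (hR0 : 0 ≤ R) (hR : R < T) :
    u1 R = u2 R := by
  obtain ⟨C1, hC1⟩ := isCompact_Icc.exists_bound_of_continuousOn (s := Icc 0 R) h1.1.continuousOn
  obtain ⟨C2, hC2⟩ := isCompact_Icc.exists_bound_of_continuousOn (s := Icc 0 R) h2.1.continuousOn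
  set M := |C1| + |C2| + 1
  have hM : 0 < M := by positivity
  set L := p * M ^ (p-1) with hL
  have hL0 : 0 ≤ L := mul_nonneg (by linarith) (rpow_nonneg hM.le _)
  set K := |κ| * (|β| + |d|) * L + 1 with hKdef
  have hK : 0 < K := by positivity
  have c1 := h1.1
  have c2 := h2.1
  obtain ⟨x0, hx0, hmax⟩ := isCompact_Icc.exists_isMaxOn (s := Icc 0 R) ⟨0, by simp [hR0]⟩
    (f := fun r => |u1 r - u2 r| * exp (-(K * r^2))) (by fun_prop)
  set N := |u1 x0 - u2 x0| * exp (-(K * x0^2)) with hN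
  have hN0 : 0 ≤ N := by positivity
  have hle : ∀ x ∈ Icc 0 R, |u1 x - u2 x| ≤ N * exp (K * x^2) := by
    intro x hx
    have := hmax hx
    simp only [mem_ofPred_eq] at this
    rw [← hN, exp_neg, ← div_eq_mul_inv, div_le_iff₀ (exp_pos _)] at this
    exact this
  have htr : ∀ x ∈ Icc 0 R, u1 x ^ p = trunc M p (u1 x) ∧ u2 x ^ p = trunc M p (u2 x) := by
    intro x hx
    have a1 := hC1 x hx
    have a2 := hC2 x hx
    rw [Real.norm_eq_abs] at a1 a2
    constructor
    · rw [trunc_eq (h1.2 x hx.1 (hx.2.trans_lt hR)).1.le]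
      have := le_abs_self (u1 x); have := le_abs_self C1; have := abs_nonneg C2
      simp only [M]; linarith
    · rw [trunc_eq (h2.2 x hx.1 (hx.2.trans_lt hR)).1.le]
      have := le_abs_self (u2 x); have := le_abs_self C2; have := abs_nonneg C1
      simp only [M]; linarith
  have h := Oop_diff n β d (gp_cont hp c1) (gp_cont hp c2) hK (D := L * N) (by positivity) hx0.1
    (fun x h0 hxx => by
      have hx : x ∈ Icc 0 R := ⟨h0, hxx.trans hx0.2⟩
      rw [(htr x hx).1, (htr x hx).2]
      refine (trunc_lip hM hp _ _).trans ?_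
      rw [← hL, mul_assoc L]
      exact mul_le_mul_of_nonneg_left (hle x hx) hL0)
  have e1 := (h1.2 x0 hx0.1 (hx0.2.trans_lt hR)).2
  have e2 := (h2.2 x0 hx0.1 (hx0.2.trans_lt hR)).2
  have e3 : |u1 x0 - u2 x0| = |κ| * |Oop n β d (fun s => u1 s ^ p) x0 - Oop n β d (fun s => u2 s ^ p) x0| := by
    rw [← abs_mul, ← abs_neg]
    congr 1
    nth_rewrite 1 [e1, e2]; ring
  have e4 : |u1 x0 - u2 x0| ≤ 1/2 * N * exp (K * x0^2) := by
    rw [e3]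
    refine (mul_le_mul_of_nonneg_left h (abs_nonneg κ)).trans ?_
    have : |κ| * ((|β| + |d|) * (L * N) / (2 * K) * exp (K * x0^2))
       = (|κ| * (|β| + |d|) * L / K) * (1/2 * N * exp (K * x0^2)) := by field_simp
    rw [this]
    have h1 : |κ| * (|β| + |d|) * L / K ≤ 1 := by
      rw [div_le_one hK, hKdef]; linarith
    exact mul_le_of_le_one_left (by positivity) h1
  have e5 : N ≤ 1/2 * N := by
    rw [← div_le_iff₀ (exp_pos _), div_eq_mul_inv, ← exp_neg] at e4
    exact e4
  have e6 : N = 0 := by linarith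
  have := hle R ⟨hR0, le_rfl⟩
  rw [e6, zero_mul] at this
  exact sub_eq_zero.1 (abs_eq_zero.1 (le_antisymm this (abs_nonneg _)))

lemma Psol_unique {n : ℕ} {p κ β d c0 T : ℝ} (hp : 1 ≤ p) (hT : 0 < T) {u1 u2 : ℝ → ℝ}
    (h1 : Psol n p κ β d c0 T u1) (h2 : Psol n p κ β d c0 T u2) : EqOn u1 u2 (Icc 0 T) := by
  have : EqOn u1 u2 (Ico 0 T) := fun r hr => Psol_unique_aux hp h1 h2 r hr.1 hr.2
  have := this.closure h1.1 h2.1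
  rwa [closure_Ico hT.ne] at this

lemma Wop_hasDeriv (n : ℕ) {g : ℝ → ℝ} (hg : Continuous g) (r : ℝ) :
    HasDerivAt (fun s => ∫ x in (0:ℝ)..s, x ^ (n-1) * g x) (r ^ (n-1) * g r) r := by
  have h : Continuous fun x : ℝ => x ^ (n-1) * g x := by fun_prop
  exact intervalIntegral.integral_hasDerivAt_right (h.intervalIntegrable _ _)
    h.stronglyMeasurable.stronglyMeasurableAtFilter h.continuousAt

lemma Kop_mul (n : ℕ) (hn : 1 ≤ n) (β d : ℝ) (g : ℝ → ℝ) (s : ℝ) :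
    s ^ (n-1) * Kop n β d g s = β * s ^ n * g s + d * ∫ x in (0:ℝ)..s, x ^ (n-1) * g x := by
  rw [← Jop_mul n hn]
  obtain ⟨k, rfl⟩ : ∃ k, n = k + 1 := ⟨n - 1, by omega⟩
  simp only [Nat.add_sub_cancel, Kop]
  ring

lemma KopW_hasDeriv (n : ℕ) (hn : 1 ≤ n) (β d : ℝ) {g : ℝ → ℝ} (hg : Continuous g) {r g' : ℝ}
    (h : HasDerivAt g g' r) :
    HasDerivAt (fun s => s ^ (n-1) * Kop n β d g s)
      (r ^ (n-1) * ((d + n * β) * g r + β * r * g')) r := by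
  have : (fun s => s ^ (n-1) * Kop n β d g s)
    = fun s => β * s ^ n * g s + d * ∫ x in (0:ℝ)..s, x ^ (n-1) * g x := by
    funext s; exact Kop_mul n hn β d g s
  rw [this]
  have h1 := (((hasDerivAt_pow n r).const_mul β).mul h).add ((Wop_hasDeriv n hg r).const_mul d)
  refine h1.congr_deriv ?_
  obtain ⟨k, rfl⟩ : ∃ k, n = k + 1 := ⟨n - 1, by omega⟩
  simp only [Nat.add_sub_cancel]
  ring

lemma Kop_hasDeriv (n : ℕ) (hn : 1 ≤ n) (β d : ℝ) {g : ℝ → ℝ} (hg : Continuous g) {r g' : ℝ}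
    (hr : 0 < r) (h : HasDerivAt g g' r) :
    HasDerivAt (Kop n β d g)
      ((d + n * β) * g r + β * r * g' - ((n:ℝ) - 1) * Kop n β d g r / r) r := by
  have h1 := KopW_hasDeriv n hn β d hg h
  have h2 := h1.div (hasDerivAt_pow (n-1) r) (pow_pos hr _).ne'
  have h3 := h2.congr_of_eventuallyEq (f₁ := Kop n β d g) (by
    filter_upwards [lt_mem_nhds hr] with s hs
    have : s ^ (n-1) ≠ 0 := (pow_pos hs _).ne'
    simp only [Pi.div_apply]
    field_simp)
  refine h3.congr_deriv ?_
  obtain ⟨k, rfl⟩ : ∃ k, n = k + 1 := ⟨n - 1, by omega⟩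
  simp only [Nat.add_sub_cancel]
  rcases Nat.eq_zero_or_pos k with rfl | hk
  · simp
  · obtain ⟨j, rfl⟩ : ∃ j, k = j + 1 := ⟨k - 1, by omega⟩
    simp only [Nat.add_sub_cancel]
    push_cast
    field_simp
    ring

lemma Psol_zero {n : ℕ} {p κ β d c0 T : ℝ} {u : ℝ → ℝ} (h : Psol n p κ β d c0 T u) (hT : 0 < T) :
    u 0 = c0 := by
  have := (h.2 0 le_rfl hT).2
  rwa [Oop_zero, mul_zero, sub_zero] at this

lemma Psol_deriv {n : ℕ} {p κ β d c0 T : ℝ} (hp : 1 ≤ p) {u : ℝ → ℝ} (h : Psol n p κ β d c0 T u)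
    {r : ℝ} (h0 : 0 < r) (h1 : r < T) :
    HasDerivAt u (-κ * Kop n β d (fun s => u s ^ p) r) r := by
  have h2 := ((Oop_hasDeriv n β d (gp_cont hp h.1) r).const_mul κ).const_sub c0
  have h3 := h2.congr_of_eventuallyEq (f₁ := u) (by
    filter_upwards [lt_mem_nhds h0, gt_mem_nhds h1] with s hs0 hs1
    exact (h.2 s hs0.le hs1).2)
  exact h3.congr_deriv (by ring)

lemma Psol_gderiv {n : ℕ} {p κ β d c0 T : ℝ} (hp : 1 ≤ p) {u : ℝ → ℝ} (h : Psol n p κ β d c0 T u)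
    {r : ℝ} (h0 : 0 < r) (h1 : r < T) :
    HasDerivAt (fun s => u s ^ p) (p * u r ^ (p-1) * (-κ * Kop n β d (fun s => u s ^ p) r)) r := by
  have := (Psol_deriv hp h h0 h1).rpow_const (p := p) (Or.inr hp)
  exact this.congr_deriv (by ring)

/-- `Y = u + r u' / a` -/
noncomputable def Yop (n : ℕ) (p κ β d a : ℝ) (u : ℝ → ℝ) (r : ℝ) : ℝ :=
  u r + r * (-κ * Kop n β d (fun s => u s ^ p) r) / a

lemma Yop_cont (n : ℕ) {p : ℝ} (κ β d a : ℝ) (hp : 1 ≤ p) {u : ℝ → ℝ} (h : Continuous u) :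
    Continuous (Yop n p κ β d a u) := by
  have := Kop_cont n β d (gp_cont hp h)
  unfold Yop
  fun_prop

lemma h_eq {n : ℕ} {p κ β α a u K r : ℝ} (hu : 0 < u) (ha : a ≠ 0)
    (haα : a * (β * p) = α) :
    ((α - n * β) + n * β) * u ^ p + β * r * (p * u ^ (p-1) * (-κ * K))
      = α * u ^ (p-1) * (u + r * (-κ * K) / a) := by
  have : u ^ p = u ^ (p-1) * u := by
    rw [← rpow_add_one hu.ne']; congr 1; ring
  rw [this, ← haα]
  field_simp
  ring

lemma Y_deriv {n : ℕ} (hn : 1 ≤ n) {p κ β α a c0 T : ℝ} (hp : 1 ≤ p) (ha : a ≠ 0)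
    (haα : a * (β * p) = α) {u : ℝ → ℝ}
    (h : Psol n p κ β (α - n * β) c0 T u) {r : ℝ} (h0 : 0 < r) (h1 : r < T) :
    HasDerivAt (Yop n p κ β (α - n * β) a u)
      (((n:ℝ) - 2 - a) * u r / r - (((n:ℝ) - 2 - a) / r + κ * β * p * r * u r ^ (p-1))
        * Yop n p κ β (α - n * β) a u r) r := by
  have d1 := Psol_deriv hp h h0 h1
  have d2 := Kop_hasDeriv n hn β (α - n * β) (gp_cont hp h.1) h0 (Psol_gderiv hp h h0 h1)
  rw [h_eq (h.2 r h0.le h1).1 ha haα] at d2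
  have d3 := d1.add (((hasDerivAt_id r).mul (d2.const_mul (-κ))).div_const a)
  refine d3.congr_deriv ?_
  unfold Yop
  rw [← haα]
  simp only [id]
  field_simp
  ring

lemma Y_pos {n : ℕ} (hn : 1 ≤ n) {p κ β α a c0 T : ℝ} (hp : 1 ≤ p) (ha : a ≠ 0)
    (haα : a * (β * p) = α) (han : a ≤ (n:ℝ) - 2) (hc0 : 0 < c0) {u : ℝ → ℝ}
    (h : Psol n p κ β (α - n * β) c0 T u) {r : ℝ} (h0 : 0 < r) (h1 : r < T) :
    0 < Yop n p κ β (α - n * β) a u r := by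
  set Y := Yop n p κ β (α - n * β) a u with hY
  have Yc : Continuous Y := Yop_cont n κ β _ a hp h.1
  by_contra hneg
  push Not at hneg
  have hS : IsCompact (Icc 0 r ∩ {x | Y x ≤ 0}) :=
    isCompact_Icc.inter_right (isClosed_le Yc continuous_const)
  obtain ⟨r1, hr1, hmin⟩ := hS.exists_isLeast ⟨r, ⟨h0.le, le_rfl⟩, hneg⟩
  have hY0 : Y 0 = c0 := by
    simp only [hY, Yop]; rw [Psol_zero h (h0.trans h1)]; simp
  have hr1pos : 0 < r1 := by
    rcases hr1.1.1.lt_or_eq with h | h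
    · exact h
    · have := hr1.2
      rw [← h, mem_ofPred_eq, hY0] at this
      linarith
  have hlt : ∀ x, 0 ≤ x → x < r1 → 0 < Y x := by
    intro x hx0 hx1
    by_contra hh
    push Not at hh
    have := hmin ⟨⟨hx0, hx1.le.trans hr1.1.2⟩, hh⟩
    linarith
  have hc : ContinuousOn (fun x => ((n:ℝ) - 2 - a) / x + κ * β * p * x * u x ^ (p-1)) (Icc (r1/2) r1) := by
    have : Continuous fun x => u x ^ (p-1) := h.1.rpow_const fun _ => Or.inr (by linarith)
    apply ContinuousOn.add
    · apply ContinuousOn.div continuousOn_const continuousOn_id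
      intro x hx
      have : 0 < x := by linarith [hx.1]
      exact this.ne'
    · fun_prop
  obtain ⟨B, hB⟩ := isCompact_Icc.exists_bound_of_continuousOn hc
  have hmono : MonotoneOn (fun x => exp (B * x) * Y x) (Icc (r1/2) r1) := by
    apply monotoneOn_of_deriv_nonneg (convex_Icc _ _) (by fun_prop)
    · intro x hx
      rw [interior_Icc] at hx
      have := (Y_deriv hn hp ha haα h (by linarith [hx.1] : 0 < x) (by linarith [hx.2, hr1.1.2]))
      exact (DifferentiableAt.mul (by fun_prop) this.differentiableAt).differentiableWithinAt
    · intro x hx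
      rw [interior_Icc] at hx
      have hx0 : 0 < x := by linarith [hx.1]
      have hx1 : x < T := by linarith [hx.2, hr1.1.2]
      have d1 := (Y_deriv hn hp ha haα h hx0 hx1)
      have d2 := (((hasDerivAt_id x).const_mul B).exp).mul d1
      have d3 : deriv (fun x => exp (B * x) * Y x) x = _ := d2.deriv
      rw [d3]
      simp only [id, mul_one]
      have b := hB x ⟨hx.1.le, hx.2.le⟩
      rw [Real.norm_eq_abs] at b
      have b' := (abs_le.1 b).2
      have yp := hlt x hx0.le hx.2
      have up := (h.2 x hx0.le hx1).1
      rw [← hY]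
      have : 0 ≤ ((n:ℝ) - 2 - a) * u x / x :=
        div_nonneg (mul_nonneg (by linarith) up.le) hx0.le
      have key : 0 ≤ exp (B * x) * (((n:ℝ) - 2 - a) * u x / x +
        (B - (((n:ℝ) - 2 - a) / x + κ * β * p * x * u x ^ (p-1))) * Y x) := by
        apply mul_nonneg (exp_pos _).le
        apply add_nonneg this (mul_nonneg (by linarith) yp.le)
      linarith
  have := hmono (left_mem_Icc.2 (by linarith)) (right_mem_Icc.2 (by linarith)) (by linarith)
  simp only at this
  have a1 : 0 < exp (B * (r1/2)) * Y (r1/2) :=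
    mul_pos (exp_pos _) (hlt _ (by linarith) (by linarith))
  have a2 : exp (B * r1) * Y r1 ≤ 0 := mul_nonpos_of_nonneg_of_nonpos (exp_pos _).le hr1.2
  linarith

lemma K_sign {n : ℕ} (hn : 1 ≤ n) {p κ β α a c0 T : ℝ} (hp : 1 ≤ p) (ha : a ≠ 0)
    (haα : a * (β * p) = α) (han : a ≤ (n:ℝ) - 2) (hc0 : 0 < c0) {u : ℝ → ℝ}
    (h : Psol n p κ β (α - n * β) c0 T u) {r : ℝ} (h0 : 0 < r) (h1 : r < T) :
    0 ≤ α * Kop n β (α - n * β) (fun s => u s ^ p) r := by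
  have kc := Kop_cont n β (α - n * β) (gp_cont hp h.1)
  have hd : ∀ x ∈ Ioo 0 r, HasDerivAt
      (fun s => α * (s ^ (n-1) * Kop n β (α - n * β) (fun s => u s ^ p) s))
      (α * (x ^ (n-1) * (α * u x ^ (p-1) * Yop n p κ β (α - n * β) a u x))) x := by
    intro x hx
    have hx1 : x < T := hx.2.trans h1
    have := KopW_hasDeriv n hn β (α - n * β) (gp_cont hp h.1) (Psol_gderiv hp h hx.1 hx1)
    rw [h_eq (h.2 x hx.1.le hx1).1 ha haα] at this
    exact this.const_mul α
  have hmono : MonotoneOn (fun s => α * (s ^ (n-1) * Kop n β (α - n * β) (fun s => u s ^ p) s))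
      (Icc 0 r) := by
    apply monotoneOn_of_deriv_nonneg (convex_Icc _ _) (by fun_prop)
    · intro x hx
      rw [interior_Icc] at hx
      exact (hd x hx).differentiableAt.differentiableWithinAt
    · intro x hx
      rw [interior_Icc] at hx
      rw [(hd x hx).deriv]
      have hx1 : x < T := hx.2.trans h1
      have y := Y_pos hn hp ha haα han hc0 h hx.1 hx1
      have up := (h.2 x hx.1.le hx1).1
      have e : α * (x ^ (n-1) * (α * u x ^ (p-1) * Yop n p κ β (α - n * β) a u x))
        = α^2 * (x ^ (n-1) * (u x ^ (p-1) * Yop n p κ β (α - n * β) a u x)) := by ring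
      rw [e]
      have := hx.1
      positivity
  have := hmono (left_mem_Icc.2 h0.le) (right_mem_Icc.2 h0.le) h0.le
  simp only at this
  have e0 : Kop n β (α - n * β) (fun s => u s ^ p) 0 = 0 := by simp [Kop]
  rw [e0, mul_zero, mul_zero] at this
  have hp := pow_pos h0 (n-1)
  have e : α * (r ^ (n-1) * Kop n β (α - n * β) (fun s => u s ^ p) r)
    = r ^ (n-1) * (α * Kop n β (α - n * β) (fun s => u s ^ p) r) := by ring
  rw [e] at this
  exact nonneg_of_mul_nonneg_right this hp

lemma u_sign {n : ℕ} (hn : 1 ≤ n) {p κ β α a c0 R : ℝ} (hp : 1 ≤ p) (hκ : 0 < κ) (ha : a ≠ 0)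
    (haα : a * (β * p) = α) (han : a ≤ (n:ℝ) - 2) (hc0 : 0 < c0) {u : ℝ → ℝ}
    (h : Psol n p κ β (α - n * β) c0 R u) (hR : 0 < R) : α * u R ≤ α * c0 := by
  have hc := h.1
  have hd : ∀ x ∈ Ioo 0 R, HasDerivAt (fun s => α * u s)
      (α * (-κ * Kop n β (α - n * β) (fun s => u s ^ p) x)) x := fun x hx =>
    (Psol_deriv hp h hx.1 hx.2).const_mul α
  have hmono : AntitoneOn (fun s => α * u s) (Icc 0 R) := by
    apply antitoneOn_of_deriv_nonpos (convex_Icc _ _) (by fun_prop)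
    · intro x hx
      rw [interior_Icc] at hx
      exact (hd x hx).differentiableAt.differentiableWithinAt
    · intro x hx
      rw [interior_Icc] at hx
      rw [(hd x hx).deriv]
      have := K_sign hn hp ha haα han hc0 h hx.1 hx.2
      nlinarith
  have := hmono (left_mem_Icc.2 hR.le) (right_mem_Icc.2 hR.le) hR.le
  simp only at this
  rwa [Psol_zero h hR] at this

lemma u_pow {n : ℕ} (hn : 1 ≤ n) {p κ β α a c0 R : ℝ} (hp : 1 ≤ p) (ha : a ≠ 0)
    (haα : a * (β * p) = α) (han : a ≤ (n:ℝ) - 2) (hc0 : 0 < c0) {u : ℝ → ℝ}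
    (h : Psol n p κ β (α - n * β) c0 R u) {r : ℝ} (hr : 0 < r) (hrR : r ≤ R) :
    a * (r ^ a * u r) ≤ a * (R ^ a * u R) := by
  have hc := h.1
  have hd : ∀ x ∈ Ioo r R, HasDerivAt (fun s => a * (s ^ a * u s))
      (a ^ 2 * (x ^ (a-1) * Yop n p κ β (α - n * β) a u x)) x := fun x hx => by
    have hx0 : 0 < x := hr.trans hx.1
    have := ((Real.hasDerivAt_rpow_const (p := a) (Or.inl hx0.ne')).mul
      (Psol_deriv hp h hx0 hx.2)).const_mul a
    refine this.congr_deriv ?_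
    have e : x ^ a = x ^ (a-1) * x := by
      rw [← rpow_add_one hx0.ne']; congr 1; ring
    rw [e]
    unfold Yop
    field_simp
  have hmono : MonotoneOn (fun s => a * (s ^ a * u s)) (Icc r R) := by
    apply monotoneOn_of_deriv_nonneg (convex_Icc _ _)
    · refine continuousOn_const.mul (ContinuousOn.mul ?_ hc.continuousOn)
      exact continuousOn_id.rpow_const fun x hx => Or.inl (hr.trans_le hx.1).ne'
    · intro x hx
      rw [interior_Icc] at hx
      exact (hd x hx).differentiableAt.differentiableWithinAt
    · intro x hx
      rw [interior_Icc] at hx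
      rw [(hd x hx).deriv]
      have hx0 : 0 < x := hr.trans hx.1
      have := Y_pos hn hp ha haα han hc0 h hx0 hx.2
      positivity
  exact hmono (left_mem_Icc.2 hrR) (right_mem_Icc.2 hrR) hrR

lemma first_exit {n : ℕ} {p κ β d c0 M T : ℝ} (hM : c0 < M) (hc0 : 0 < c0)
    {u : ℝ → ℝ} (hc : Continuous u)
    (hu : ∀ r, 0 ≤ r → u r = c0 - κ * Oop n β d (fun s => trunc M p (u s)) r)
    (H : ∀ R, 0 < R → R ≤ T → Psol n p κ β d c0 R u → 0 < u R ∧ u R < M) :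
    Psol n p κ β d c0 T u := by
  have base : ∀ R, (∀ x, 0 ≤ x → x < R → 0 < u x ∧ u x < M) → Psol n p κ β d c0 R u := by
    intro R hR
    refine ⟨hc, fun r h0 h1 => ⟨(hR r h0 h1).1, ?_⟩⟩
    rw [hu r h0]
    congr 2
    apply Oop_congr n β d h0
    intro x hx0 hx1
    have := hR x hx0 (hx1.trans_lt h1)
    exact trunc_eq this.1.le this.2.le
  apply base
  by_contra hcon
  push Not at hcon
  obtain ⟨x, hx0, hxT, hx⟩ := hcon
  have hS : IsCompact (Icc 0 T ∩ {y | u y ≤ 0 ∨ M ≤ u y}) :=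
    isCompact_Icc.inter_right
      ((isClosed_le hc continuous_const).union (isClosed_le continuous_const hc))
  have hxS : x ∈ Icc 0 T ∩ {y | u y ≤ 0 ∨ M ≤ u y} := by
    refine ⟨⟨hx0, hxT.le⟩, ?_⟩
    rcases le_or_gt (u x) 0 with h | h
    · exact Or.inl h
    · exact Or.inr (hx h)
  obtain ⟨r1, hr1, hmin⟩ := hS.exists_isLeast ⟨x, hxS⟩
  have hu0 : u 0 = c0 := by rw [hu 0 le_rfl, Oop_zero]; ring
  have hr1pos : 0 < r1 := by
    rcases hr1.1.1.lt_or_eq with h | h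
    · exact h
    · have := hr1.2
      rw [← h, mem_ofPred_eq, hu0] at this
      rcases this with h | h <;> linarith
  have hP : Psol n p κ β d c0 r1 u := by
    apply base
    intro y hy0 hy1
    by_contra hh
    have : y ∈ Icc 0 T ∩ {y | u y ≤ 0 ∨ M ≤ u y} := by
      refine ⟨⟨hy0, hy1.le.trans hr1.1.2⟩, ?_⟩
      rcases le_or_gt (u y) 0 with h | h
      · exact Or.inl h
      · exact Or.inr (not_lt.1 fun h' => hh ⟨h, h'⟩)
    have := hmin this
    linarith
  have := H r1 hr1pos hr1.1.2 hP
  rcases hr1.2 with h | h <;> linarith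

lemma exists_T {n : ℕ} (hn : 1 ≤ n) {p κ β α a c0 : ℝ} (hp : 1 ≤ p) (hκ : 0 < κ) (hβ : 0 < β)
    (haα : a * (β * p) = α) (han : a ≤ (n:ℝ) - 2) (hc0 : 0 < c0) (T : ℝ) :
    ∃ u, Psol n p κ β (α - n * β) c0 T u := by
  have hbp : 0 < β * p := mul_pos hβ (by linarith)
  rcases lt_trichotomy a 0 with ha | ha | ha
  · have hα : α < 0 := by rw [← haα]; exact mul_neg_of_neg_of_pos ha hbp
    obtain ⟨u1, hc1, hu1⟩ := trunc_exists n β (α - n * β) κ c0 (2 * c0) p (by linarith) hp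
    have hu10 : u1 0 = c0 := by rw [hu1 0 le_rfl, Oop_zero]; ring
    have hev : ∀ᶠ x in nhds (0:ℝ), 0 < u1 x ∧ u1 x < 2 * c0 := by
      have h1 : ∀ᶠ x in nhds (0:ℝ), 0 < u1 x := hc1.continuousAt.eventually (lt_mem_nhds (by rw [hu10]; exact hc0))
      have h2 : ∀ᶠ x in nhds (0:ℝ), u1 x < 2 * c0 := hc1.continuousAt.eventually (gt_mem_nhds (by rw [hu10]; linarith))
      exact h1.and h2
    obtain ⟨r0, hr0, hball⟩ := Metric.eventually_nhds_iff.1 hev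
    have hin : ∀ x, 0 ≤ x → x < r0 → 0 < u1 x ∧ u1 x < 2 * c0 := fun x h0 h1 => by
      apply hball; rw [Real.dist_eq, sub_zero, abs_of_nonneg h0]; exact h1
    set r2 := r0 / 2 with hr2
    have hr2p : 0 < r2 := by positivity
    have P1 : Psol n p κ β (α - n * β) c0 r2 u1 := by
      apply first_exit (M := 2 * c0) (by linarith) hc0 hc1 hu1
      intro R hR hRT _
      exact hin R hR.le (by linarith)
    set M := 2 * c0 + 2 * c0 * (T / r2) ^ (-a) + 1 with hMdef
    have hTp : 0 ≤ 2 * c0 * |(T / r2) ^ (-a)| := by positivity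
    rcases le_or_gt T 0 with hT | hT
    · exact ⟨u1, hc1, fun r h0 h1 => absurd (h0.trans_lt h1) (not_lt.2 hT)⟩
    have hq : 0 < (T / r2) ^ (-a) := by positivity
    have hM : 2 * c0 < M := by
      have : 0 < 2 * c0 * (T / r2) ^ (-a) := by positivity
      linarith
    obtain ⟨u, hc, hu⟩ := trunc_exists n β (α - n * β) κ c0 M p (by linarith) hp
    refine ⟨u, first_exit (by linarith) hc0 hc hu ?_⟩
    intro R hR hRT hP
    have hlow : c0 ≤ u R := by
      have := u_sign hn hp hκ ha.ne haα han hc0 hP hR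
      nlinarith
    refine ⟨by linarith, ?_⟩
    rcases le_or_gt R r2 with hRr | hRr
    · have := Psol_unique hp hR hP (Psol_mono P1 hRr) ⟨hR.le, le_rfl⟩
      rw [this]
      have := (hin R hR.le (by linarith)).2
      linarith
    · have e := Psol_unique hp hr2p (Psol_mono hP hRr.le) P1 ⟨hr2p.le, le_rfl⟩
      have e2 := (hin r2 hr2p.le (by linarith)).2
      have e3 := u_pow hn hp ha.ne haα han hc0 hP hr2p hRr.le
      rw [e] at e3
      have e4 : R ^ a * u R ≤ r2 ^ a * u1 r2 := by nlinarith
      have hRa : 0 < R ^ a := rpow_pos_of_pos hR a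
      have e5 : u R ≤ (R / r2) ^ (-a) * u1 r2 := by
        rw [div_rpow hR.le hr2p.le, rpow_neg hR.le, rpow_neg hr2p.le]
        have : ((R ^ a)⁻¹ / (r2 ^ a)⁻¹) * u1 r2 = (r2 ^ a * u1 r2) / R ^ a := by
          field_simp
        rw [this, le_div_iff₀ hRa]
        linarith
      have e6 : (R / r2) ^ (-a) ≤ (T / r2) ^ (-a) :=
        rpow_le_rpow (by positivity) (by gcongr) (by linarith)
      have e7 : (R / r2) ^ (-a) * u1 r2 ≤ (T / r2) ^ (-a) * (2 * c0) :=
        mul_le_mul e6 e2.le (hin r2 hr2p.le (by linarith)).1.le hq.le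
      linarith
  · have hα : α = 0 := by rw [← haα, ha, zero_mul]
    refine ⟨fun _ => c0, continuous_const, fun r _ _ => ⟨hc0, ?_⟩⟩
    have : Oop n β (α - n * β) (fun _ => c0 ^ p) r = 0 := by
      have hJ : ∀ s, Kop n β (α - n * β) (fun _ => c0 ^ p) s = 0 := by
        intro s
        have hn0 : (n:ℝ) ≠ 0 := by positivity
        have : ((n - 1 : ℕ) : ℝ) + 1 = n := by
          have : n - 1 + 1 = n := by omega
          exact_mod_cast this
        have hJ' : Jop n (fun _ => c0 ^ p) s = c0 ^ p / n := by
          simp only [Jop]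
          rw [intervalIntegral.integral_mul_const, integral_pow]
          rw [this]
          have : n - 1 + 1 ≠ 0 := by omega
          simp
          ring
        rw [Kop, hJ', hα]
        field_simp
        ring
      simp [Oop, hJ]
    rw [this]; ring
  · have hα : 0 < α := by rw [← haα]; exact mul_pos ha hbp
    obtain ⟨u, hc, hu⟩ := trunc_exists n β (α - n * β) κ c0 (c0 + 1) p (by linarith) hp
    refine ⟨u, first_exit (by linarith) hc0 hc hu ?_⟩
    intro R hR hRT hP
    constructor
    · have e3 := u_pow hn hp ha.ne' haα han hc0 hP (half_pos hR) (by linarith)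
      have e4 := (hP.2 (R/2) (by linarith) (by linarith)).1
      have e5 : 0 < a * ((R/2) ^ a * u (R/2)) := by positivity
      have e6 : 0 < a * (R ^ a * u R) := by linarith
      have e7 : 0 < a * R ^ a := by positivity
      rw [← mul_assoc] at e6
      exact pos_of_mul_pos_right e6 e7.le
    · have := u_sign hn hp hκ ha.ne' haα han hc0 hP hR
      have := le_of_mul_le_mul_left this hα
      linarith

lemma exists_glob {n : ℕ} (hn : 1 ≤ n) {p κ β α a c0 : ℝ} (hp : 1 ≤ p) (hκ : 0 < κ) (hβ : 0 < β)
    (haα : a * (β * p) = α) (han : a ≤ (n:ℝ) - 2) (hc0 : 0 < c0) :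
    ∃ u, ∀ T, Psol n p κ β (α - n * β) c0 T u := by
  choose U hU using fun N : ℕ => exists_T hn hp hκ hβ haα han hc0 ((N:ℝ) + 1)
  have key : ∀ N : ℕ, ∀ r : ℝ, |r| < N + 1 → U ⌊|r|⌋₊ |r| = U N |r| := by
    intro N r hr
    have h1 : ⌊|r|⌋₊ ≤ N := by
      have : ⌊|r|⌋₊ < N + 1 := (Nat.floor_lt (abs_nonneg r)).2 (by exact_mod_cast hr)
      omega
    have h2 : (⌊|r|⌋₊ : ℝ) ≤ N := by exact_mod_cast h1
    exact Psol_unique hp (by positivity) (hU ⌊|r|⌋₊) (Psol_mono (hU N) (by linarith))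
      ⟨abs_nonneg r, (Nat.lt_floor_add_one _).le⟩
  have hcont : Continuous fun r : ℝ => U ⌊|r|⌋₊ |r| := by
    rw [continuous_iff_continuousAt]
    intro r
    obtain ⟨N, hN⟩ := exists_nat_gt |r|
    have h1 : ContinuousAt (fun s : ℝ => U N |s|) r := ((hU N).1.comp continuous_abs).continuousAt
    refine h1.congr ?_
    have : ∀ᶠ s : ℝ in nhds r, |s| < N + 1 :=
      continuous_abs.continuousAt.eventually (gt_mem_nhds (by linarith))
    filter_upwards [this] with s hs
    exact (key N s hs).symm
  refine ⟨fun r => U ⌊|r|⌋₊ |r|, fun T => ⟨hcont, fun r h0 _ => ?_⟩⟩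
  obtain ⟨N, hN⟩ := exists_nat_gt r
  have hk : ∀ x, 0 ≤ x → x ≤ r → U ⌊|x|⌋₊ |x| = U N x := by
    intro x hx0 hx1
    rw [key N x (by rw [abs_of_nonneg hx0]; linarith), abs_of_nonneg hx0]
  have := (hU N).2 r h0 (by linarith)
  beta_reduce
  rw [hk r h0 le_rfl]
  refine ⟨this.1, ?_⟩
  rw [this.2]
  congr 2
  apply Oop_congr n β _ h0
  intro x hx0 hx1
  rw [hk x hx0 hx1]

lemma u_contDiff {n : ℕ} (hn : 1 ≤ n) {p κ β d c0 : ℝ} (hp : 1 ≤ p) {u : ℝ → ℝ}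
    (h : ∀ T, Psol n p κ β d c0 T u) : ContDiffOn ℝ 2 u (Ioi 0) := by
  have hc := (h 1).1
  have gc := gp_cont hp hc
  have kc := Kop_cont n β d gc
  have du : ∀ r : ℝ, 0 < r → HasDerivAt u (-κ * Kop n β d (fun s => u s ^ p) r) r :=
    fun r hr => Psol_deriv hp (h (r+1)) hr (by linarith)
  have dK : ∀ r : ℝ, 0 < r → HasDerivAt (Kop n β d (fun s => u s ^ p)) _ r :=
    fun r hr => Kop_hasDeriv n hn β d gc hr (Psol_gderiv hp (h (r+1)) hr (by linarith))
  have cK : ContDiffOn ℝ 1 (Kop n β d (fun s => u s ^ p)) (Ioi 0) := by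
    rw [show (1 : WithTop ℕ∞) = 0 + 1 from rfl, contDiffOn_succ_iff_deriv_of_isOpen isOpen_Ioi]
    refine ⟨fun r hr => (dK r hr).differentiableAt.differentiableWithinAt, by simp, ?_⟩
    rw [contDiffOn_zero]
    have : ContinuousOn (fun r => (d + n * β) * u r ^ p
        + β * r * (p * u r ^ (p-1) * (-κ * Kop n β d (fun s => u s ^ p) r))
        - ((n:ℝ) - 1) * Kop n β d (fun s => u s ^ p) r / r) (Ioi 0) := by
      have : Continuous fun x => u x ^ (p-1) := hc.rpow_const fun _ => Or.inr (by linarith)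
      apply ContinuousOn.sub
      · fun_prop
      · apply ContinuousOn.div (by fun_prop) continuousOn_id
        intro x hx
        exact ne_of_gt hx
    exact this.congr fun r hr => (dK r hr).deriv
  rw [show (2 : WithTop ℕ∞) = 1 + 1 from by norm_num, contDiffOn_succ_iff_deriv_of_isOpen isOpen_Ioi]
  refine ⟨fun r hr => (du r hr).differentiableAt.differentiableWithinAt, by simp, ?_⟩
  exact (contDiffOn_const.mul cK).congr fun r hr => (du r hr).deriv

lemma radial_of_Psol {n : ℕ} (hn : 3 ≤ n) {m α β η : ℝ} (hη : 0 < η) (hm : 0 < m) (hm1 : m ≤ 1)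
    {u : ℝ → ℝ} (h : ∀ T, Psol n (1/m) (m / ((n:ℝ) - 1)) β (α - n * β) (η ^ m) T u) :
    IsRadialSol n m α β η (fun r => u r ^ (1/m)) := by
  have hp : 1 ≤ 1/m := by rw [le_div_iff₀ hm]; linarith
  have hc := (h 1).1
  have gc := gp_cont hp hc
  have hpos : ∀ r : ℝ, 0 ≤ r → 0 < u r := fun r hr => ((h (r+1)).2 r hr (by linarith)).1
  have hn1 : 0 < (n:ℝ) - 1 := by
    have : (3:ℝ) ≤ n := by exact_mod_cast hn
    linarith
  have du : ∀ r : ℝ, 0 < r → HasDerivAt u _ r :=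
    fun r hr => Psol_deriv hp (h (r+1)) hr (by linarith)
  have hu0 : u 0 = η ^ m := Psol_zero (h 1) one_pos
  refine ⟨fun r hr => rpow_pos_of_pos (hpos r hr) _, gc.continuousOn, ?_, ?_, ?_, ?_⟩
  · exact (u_contDiff (by omega) hp h).rpow_const_of_ne fun x hx => (hpos x (le_of_lt hx)).ne'
  · have h2 := (((Oop_hasDeriv n β (α - n * β) gc 0).const_mul (m / ((n:ℝ) - 1))).const_sub
      (η ^ m)).hasDerivWithinAt (s := Ici 0)
    have h3 := h2.congr (f₁ := u) (fun s hs => ((h (s+1)).2 s hs (by linarith)).2)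
      ((h 1).2 0 le_rfl one_pos).2
    have h4 := h3.rpow_const (p := 1/m) (Or.inr hp)
    exact h4.congr_deriv (by simp [Kop])
  · simp only
    rw [hu0, ← rpow_mul hη.le, mul_one_div_cancel hm.ne', rpow_one]
  · intro r hr
    have hr : 0 < r := hr
    have hvm : ∀ s : ℝ, 0 < s → (u s ^ (1/m)) ^ m = u s := fun s hs => by
      rw [← rpow_mul (hpos s hs.le).le, one_div_mul_cancel hm.ne', rpow_one]
    have e1 : (fun s => (u s ^ (1/m)) ^ m) =ᶠ[nhds r] u := by
      filter_upwards [lt_mem_nhds hr] with s hs using hvm s hs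
    have e2 : deriv u =ᶠ[nhds r] fun s => -(m / ((n:ℝ) - 1)) * Kop n β (α - n * β) (fun s => u s ^ (1/m)) s := by
      filter_upwards [lt_mem_nhds hr] with s hs using (du s hs).deriv
    have dg := Psol_gderiv hp (h (r+1)) hr (by linarith)
    have dK := Kop_hasDeriv n (by omega) β (α - n * β) gc hr dg
    have e3 := (dK.const_mul (-(m / ((n:ℝ) - 1)))).deriv
    rw [e1.deriv.deriv_eq, e1.deriv_eq, e2.deriv_eq, e3, (du r hr).deriv, dg.deriv]
    field_simp
    ring

lemma Psol_of_radial {n : ℕ} (hn : 3 ≤ n) {m α β η : ℝ} (hm : 0 < m) (hm1 : m ≤ 1)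
    {v : ℝ → ℝ} (h : IsRadialSol n m α β η v) (T : ℝ) :
    Psol n (1/m) (m / ((n:ℝ) - 1)) β (α - n * β) (η ^ m) T (fun r => v |r| ^ m) := by
  obtain ⟨hpos, hc, hcd, -, h0, hode⟩ := h
  have hp : 1 ≤ 1/m := by rw [le_div_iff₀ hm]; linarith
  have hn1 : 0 < (n:ℝ) - 1 := by
    have : (3:ℝ) ≤ n := by exact_mod_cast hn
    linarith
  have gc : Continuous fun r => v |r| :=
    hc.comp_continuous continuous_abs fun x => abs_nonneg x
  have wc : Continuous fun r => v |r| ^ m := gc.rpow_const fun _ => Or.inr hm.le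
  set g : ℝ → ℝ := fun r => v |r| with hg
  set κ := m / ((n:ℝ) - 1) with hκ
  set d := α - n * β with hd
  have hgg : (fun s => (v |s| ^ m) ^ (1/m)) = g := by
    funext s
    rw [← rpow_mul (hpos _ (abs_nonneg s)).le, mul_one_div_cancel hm.ne', rpow_one]
  set f : ℝ → ℝ := fun s => v s ^ m with hf
  have fcd : ContDiffOn ℝ 2 f (Ioi 0) :=
    hcd.rpow_const_of_ne fun x hx => (hpos x (mem_Ici.2 (mem_Ioi.1 hx).le)).ne'
  have df : ∀ r : ℝ, 0 < r → HasDerivAt f (deriv f r) r := fun r hr =>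
    ((fcd.differentiableOn (by norm_num)).differentiableAt (Ioi_mem_nhds hr)).hasDerivAt
  have dv : ∀ r : ℝ, 0 < r → HasDerivAt v (deriv v r) r := fun r hr =>
    ((hcd.differentiableOn (by norm_num)).differentiableAt (Ioi_mem_nhds hr)).hasDerivAt
  have hg_eq : ∀ r : ℝ, 0 < r → g =ᶠ[nhds r] v := fun r hr => by
    filter_upwards [lt_mem_nhds hr] with s hs
    simp only [hg, abs_of_pos hs]
  have hw_eq : ∀ r : ℝ, 0 < r → (fun s => v |s| ^ m) =ᶠ[nhds r] f := fun r hr => by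
    filter_upwards [lt_mem_nhds hr] with s hs
    simp only [hf, abs_of_pos hs]
  have dg : ∀ r : ℝ, 0 < r → HasDerivAt g (deriv v r) r := fun r hr =>
    (dv r hr).congr_of_eventuallyEq (hg_eq r hr)
  have ddf : ∀ r : ℝ, 0 < r → HasDerivAt (deriv f) (deriv (deriv f) r) r := by
    intro r hr
    rw [show (2 : WithTop ℕ∞) = 1 + 1 from by norm_num,
      contDiffOn_succ_iff_deriv_of_isOpen isOpen_Ioi] at fcd
    exact ((fcd.2.2.differentiableOn (by norm_num)).differentiableAt (Ioi_mem_nhds hr)).hasDerivAt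
  have kc := Kop_cont n β d gc
  -- the flux is constant
  have dF : ∀ r : ℝ, 0 < r →
      HasDerivAt (fun s => s ^ (n-1) * deriv f s + κ * (s ^ (n-1) * Kop n β d g s)) 0 r := by
    intro r hr
    have h1 := ((hasDerivAt_pow (n-1) r).mul (ddf r hr)).add
      ((KopW_hasDeriv n (by omega) β d gc (dg r hr)).const_mul κ)
    refine h1.congr_deriv ?_
    have o := hode r hr
    have hgr : g r = v r := by simp only [hg, abs_of_pos hr]
    rw [hgr]
    have o2 : (d + n * β) * v r + β * r * deriv v r
        = -(((n : ℝ) - 1) / m) * (deriv (deriv f) r + (((n : ℝ) - 1) / r) * deriv f r) := by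
      rw [hd]; linarith
    rw [o2]
    obtain ⟨k, rfl⟩ : ∃ k, n = k + 2 := ⟨n - 2, by omega⟩
    simp only [Nat.add_succ_sub_one, Nat.add_sub_cancel, hκ]
    push_cast
    push_cast at hn1
    have hk : (k:ℝ) + 2 - 1 ≠ 0 := hn1.ne'
    field_simp
    ring
  obtain ⟨C, hC⟩ := isOpen_Ioi.exists_is_const_of_deriv_eq_zero isPreconnected_Ioi
    (f := fun s => s ^ (n-1) * deriv f s + κ * (s ^ (n-1) * Kop n β d g s)) (s := Ioi (0:ℝ))
    (fun r hr => (dF r hr).differentiableAt.differentiableWithinAt) (fun r hr => (dF r hr).deriv)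
  have hC0 : C = 0 := by
    by_contra hne
    have hCp : 0 < |C| := abs_pos.2 hne
    have G0 : Continuous fun s => κ * (s ^ (n-1) * Kop n β d g s) := by fun_prop
    have G1 : κ * ((0:ℝ) ^ (n-1) * Kop n β d g 0) = 0 := by simp [Kop]
    obtain ⟨δ1, hδ1, H1⟩ := Metric.continuousAt_iff.1 (G0.continuousAt (x := 0)) (|C|/2) (by positivity)
    obtain ⟨δ2, hδ2, H2⟩ := Metric.continuousAt_iff.1 (wc.continuousAt (x := 0)) (|C|/2) (by positivity)
    set r := min (min δ1 δ2) 1 / 2 with hrdef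
    have hmin : 0 < min (min δ1 δ2) 1 := by positivity
    have m1 : min (min δ1 δ2) 1 ≤ δ1 := (min_le_left _ _).trans (min_le_left _ _)
    have m2 : min (min δ1 δ2) 1 ≤ δ2 := (min_le_left _ _).trans (min_le_right _ _)
    have m3 : min (min δ1 δ2) 1 ≤ 1 := min_le_right _ _
    have hr : 0 < r := by positivity
    obtain ⟨ξ, hξ, hs⟩ := exists_hasDerivAt_eq_slope (fun s => v |s| ^ m) (deriv f) hr wc.continuousOn
      (fun x hx => (df x hx.1).congr_of_eventuallyEq (hw_eq x hx.1))
    have a1 := @H1 ξ (by rw [Real.dist_eq, sub_zero, abs_of_pos hξ.1]; linarith [hξ.2])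
    have a2 := @H2 r (by rw [Real.dist_eq, sub_zero, abs_of_pos hr]; linarith)
    rw [G1, Real.dist_eq, sub_zero] at a1
    rw [Real.dist_eq] at a2
    have a3 := hC ξ hξ.1
    set Δ := v |r| ^ m - v |0| ^ m with hΔ
    have a4 : |ξ ^ (n-1) * deriv f ξ| ≤ |Δ| := by
      rw [hs, sub_zero, abs_mul, abs_div, abs_of_pos hr, abs_of_pos (pow_pos hξ.1 _)]
      have : ξ ^ (n-1) ≤ r := by
        have b1 : ξ ^ (n-1) ≤ ξ ^ 1 :=
          pow_le_pow_of_le_one hξ.1.le (by linarith [hξ.2]) (by omega)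
        rw [pow_one] at b1
        linarith [hξ.2]
      calc ξ ^ (n-1) * (|Δ| / r) ≤ r * (|Δ| / r) := by gcongr
        _ = |Δ| := by field_simp
    have a5 : |C| ≤ |ξ ^ (n-1) * deriv f ξ| + |κ * (ξ ^ (n-1) * Kop n β d g ξ)| := by
      rw [← a3]; exact abs_add_le _ _
    linarith
  have fin : ∀ r : ℝ, 0 < r → deriv f r = -κ * Kop n β d g r := by
    intro r hr
    have := hC r hr
    rw [hC0] at this
    have hp := pow_pos hr (n-1)
    have : r ^ (n-1) * (deriv f r + κ * Kop n β d g r) = 0 := by linarith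
    rcases mul_eq_zero.1 this with h | h
    · exact absurd h hp.ne'
    · linarith
  refine ⟨wc, fun r hr _ => ⟨rpow_pos_of_pos (hpos _ (abs_nonneg r)) _, ?_⟩⟩
  simp only
  rw [hgg]
  have := intervalIntegral.integral_eq_sub_of_hasDerivAt_of_le hr
    (f := fun s => v |s| ^ m) (f' := fun s => -κ * Kop n β d g s) wc.continuousOn
    (fun x hx => by
      have := (df x hx.1).congr_of_eventuallyEq (hw_eq x hx.1)
      rwa [fin x hx.1] at this)
    (Continuous.intervalIntegrable (by fun_prop) _ _)
  rw [intervalIntegral.integral_const_mul] at this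
  simp only [abs_zero, h0] at this
  unfold Oop
  linarith

theorem stmt1 (n : ℕ) (hn : 3 ≤ n) (m α β η : ℝ) (hη : 0 < η)
    (hm : 0 < m) (hm' : m ≤ ((n : ℝ) - 2) / n)
    (hβ : 0 < β) (hαβ : α ≤ β * ((n : ℝ) - 2) / m) :
    ∃ v : ℝ → ℝ, IsRadialSol n m α β η v ∧
      (∀ v' : ℝ → ℝ, IsRadialSol n m α β η v' → Set.EqOn v' v (Set.Ici (0:ℝ))) ∧
      (α ≠ 0 → ∀ r : ℝ, 0 < r →
        0 < deriv (fun s : ℝ => s ^ 2 * v s ^ (2 * (β / α))) r) := by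
  have hn3 : (3:ℝ) ≤ n := by exact_mod_cast hn
  have hm1 : m ≤ 1 := hm'.trans (by rw [div_le_one (by linarith)]; linarith)
  have hp : 1 ≤ 1/m := by rw [le_div_iff₀ hm]; linarith
  have hc0 : 0 < η ^ m := rpow_pos_of_pos hη m
  have hκ : 0 < m / ((n:ℝ) - 1) := div_pos hm (by linarith)
  have haα : (α * m / β) * (β * (1/m)) = α := by field_simp
  have han : α * m / β ≤ (n:ℝ) - 2 := by
    rw [div_le_iff₀ hβ]
    rw [le_div_iff₀ hm] at hαβ
    linarith
  obtain ⟨u, hu⟩ := exists_glob (by omega : 1 ≤ n) hp hκ hβ haα han hc0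
  have hpos : ∀ r : ℝ, 0 ≤ r → 0 < u r := fun r hr => ((hu (r+1)).2 r hr (by linarith)).1
  refine ⟨fun r => u r ^ (1/m), radial_of_Psol hn hη hm hm1 hu, ?_, ?_⟩
  · intro v' hv' r hr
    have hr : 0 ≤ r := hr
    have h1 := Psol_of_radial hn hm hm1 hv' (r+1)
    have h2 := Psol_unique hp (by linarith) h1 (hu (r+1)) ⟨hr, by linarith⟩
    simp only [abs_of_nonneg hr] at h2
    simp only
    rw [← h2, ← rpow_mul (hv'.1 r hr).le, mul_one_div_cancel hm.ne', rpow_one]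
  · intro hα r hr
    have ha : α * m / β ≠ 0 := by positivity
    have hY := Y_pos (by omega : 1 ≤ n) hp ha haα han hc0 (hu (r+1)) hr (by linarith)
    have up := hpos r hr.le
    have dg := Psol_gderiv hp (hu (r+1)) hr (by linarith)
    have he := h_eq (n := n) (κ := m / ((n:ℝ) - 1))
      (K := Kop n β (α - n * β) (fun s => u s ^ (1/m)) r) (r := r) up ha haα
    have vp : 0 < u r ^ (1/m) := rpow_pos_of_pos up _
    have hd := (hasDerivAt_pow 2 r).mul (dg.rpow_const (p := 2 * (β/α)) (Or.inl vp.ne'))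
    have hd' : deriv (fun s : ℝ => s ^ 2 * (u s ^ (1/m)) ^ (2 * (β / α))) r = _ := hd.deriv
    rw [hd']
    set V := u r ^ (1/m) with hV
    set G := 1 / m * u r ^ (1/m - 1) * (-(m / ((n:ℝ) - 1)) * Kop n β (α - n * β) (fun s => u s ^ (1/m)) r)
      with hG
    have e : V ^ (2 * (β/α)) = V ^ (2 * (β/α) - 1) * V := by
      rw [← rpow_add_one vp.ne']; congr 1; ring
    have he2 : V + β/α * r * G = u r ^ (1/m - 1) * Yop n (1/m) (m / ((n:ℝ) - 1)) β (α - n * β) (α * m / β) u r := by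
      have : α * (V + β/α * r * G) = α * (u r ^ (1/m - 1) * Yop n (1/m) (m / ((n:ℝ) - 1)) β (α - n * β) (α * m / β) u r) := by
        unfold Yop
        rw [← mul_assoc α (u r ^ (1/m - 1)), ← he]
        field_simp
        ring
      exact mul_left_cancel₀ hα this
    have : 0 < 2 * r * V ^ (2 * (β/α) - 1) * (V + β/α * r * G) := by
      rw [he2]; positivity
    have e2 : ((2:ℕ):ℝ) * r ^ (2-1) * V ^ (2 * (β/α)) + r ^ 2 * (G * (2 * (β/α)) * V ^ (2 * (β/α) - 1))
      = 2 * r * V ^ (2 * (β/α) - 1) * (V + β/α * r * G) := by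
      rw [e]; push_cast; ring
    calc 0 < _ := this
      _ = _ := e2.symm
end

section
/- Let n ≥ 3 be an integer, let η > 0, and let α, β be real numbers satisfying β > 0 or α = 0. For each m ∈ (0, (n−2)/n] for which a radial solution of (E) on [0,∞) exists (in particular for all sufficiently small m > 0), let v^{(m)} denote this radial solution. Then there exists a positive function u : [0,∞) → ℝ, twice continuously differentiable on (0,∞), with u(0) = η, u'(0) = 0, satisfying (n−1)·((log u)''(r) + ((n−1)/r)·(log u)'(r)) + α·u(r) + β·r·u'(r) = 0 for all r > 0, such that v^{(m)} converges to u uniformly on every compact subset of [0,∞) as m → 0⁺. -/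
open Real Set Filter

namespace RS

/-- continuity (first exit) argument -/
lemma exit_lemma {f : ℝ → ℝ} {R c : ℝ} (hf : Continuous f)
    (h : ∀ t ∈ Icc (0:ℝ) R, (∀ s ∈ Ico (0:ℝ) t, f s < c) → f t < c) :
    ∀ t ∈ Icc (0:ℝ) R, f t < c := by
  intro t ht
  by_contra hcon
  have hS : IsCompact (Icc (0:ℝ) R ∩ {t | c ≤ f t}) :=
    isCompact_Icc.inter_right (isClosed_le continuous_const hf)
  obtain ⟨x, hx, hmin⟩ := hS.exists_isLeast ⟨t, ht, not_lt.mp hcon⟩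
  have := h x hx.1 (fun s hs => by
    by_contra hc
    have := hmin (show s ∈ Icc (0:ℝ) R ∩ {t | c ≤ f t} from
      ⟨⟨hs.1, hs.2.le.trans hx.1.2⟩, not_lt.mp hc⟩)
    exact absurd hs.2 (not_lt.mpr this))
  exact absurd hx.2 (not_le.mpr this)

lemma weight_int {K r : ℝ} (hK : 0 < K) :
    ∫ s in (0:ℝ)..r, K * exp (2 * K * s) = (exp (2 * K * r) - 1) / 2 := by
  have : ∀ x ∈ uIcc 0 r, HasDerivAt (fun s => exp (2 * K * s) / 2) (K * exp (2 * K * x)) x := by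
    intro x _
    have h1 : HasDerivAt (fun s : ℝ => 2 * K * s) (2 * K) x := by
      simpa using (hasDerivAt_id x).const_mul (2 * K)
    exact (h1.exp.div_const 2).congr_deriv (by ring)
  rw [intervalIntegral.integral_eq_sub_of_hasDerivAt this
    ((by fun_prop : Continuous fun s => K * exp (2 * K * s)).intervalIntegrable _ _)]
  simp
  ring

/-- Picard iteration for Volterra type operators. -/
lemma picard {R K w0 : ℝ} (hR : 0 < R) (hK : 0 < K) (N : (ℝ → ℝ) → ℝ → ℝ)
    (hc : ∀ f, Continuous f → Continuous (N f))
    (hL : ∀ f g, Continuous f → Continuous g → ∀ t ∈ Icc (0:ℝ) R, ∀ D,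
      (∀ s ∈ Icc (0:ℝ) t, |f s - g s| ≤ D) → |N f t - N g t| ≤ K * D) :
    ∃ w : ℝ → ℝ, Continuous w ∧ w 0 = w0 ∧ ∀ r ∈ Ioo (0:ℝ) R, HasDerivAt w (N w r) r := by
  let exf : C(Icc (0:ℝ) R, ℝ) → ℝ → ℝ := fun f s => exp (2 * K * s) * f (projIcc 0 R hR.le s)
  have hext : ∀ f, Continuous (exf f) := by
    intro f
    have : Continuous fun s => f (projIcc 0 R hR.le s) := f.continuous.comp continuous_projIcc
    show Continuous fun s => exp (2 * K * s) * f (projIcc 0 R hR.le s)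
    fun_prop
  have hprim : ∀ f, Continuous fun t => ∫ s in (0:ℝ)..t, N (exf f) s := fun f =>
    intervalIntegral.continuous_primitive
      (fun a b => (hc _ (hext f)).intervalIntegrable a b) 0
  let S : C(Icc (0:ℝ) R, ℝ) → C(Icc (0:ℝ) R, ℝ) := fun f =>
    ⟨fun t => exp (-(2 * K * t)) * (w0 + ∫ s in (0:ℝ)..t, N (exf f) s), by
      have := (hprim f).comp (continuous_subtype_val (p := fun x => x ∈ Icc (0:ℝ) R))
      have h2 : Continuous fun t : Icc (0:ℝ) R => ∫ s in (0:ℝ)..t, N (exf f) s := this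
      fun_prop⟩
  have hS : ContractingWith (1/2) S := by
    refine ⟨by rw [← NNReal.coe_lt_coe]; norm_num, LipschitzWith.of_dist_le_mul fun f g => ?_⟩
    rw [ContinuousMap.dist_le (by positivity)]
    intro t
    obtain ⟨t, ht⟩ := t
    have hD := dist_nonneg (x := f) (y := g)
    set D := dist f g with hDdef
    have hpt : ∀ s ∈ Icc (0:ℝ) R, |exf f s - exf g s| ≤ exp (2 * K * s) * D := by
      intro s hs
      show |exp (2 * K * s) * f (projIcc 0 R hR.le s) - exp (2 * K * s) * g (projIcc 0 R hR.le s)| ≤ _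
      rw [← mul_sub, abs_mul, abs_of_pos (exp_pos _)]
      gcongr
      exact ContinuousMap.dist_apply_le_dist (f := f) (g := g) _
    have hN : ∀ s ∈ Icc (0:ℝ) R, |N (exf f) s - N (exf g) s| ≤ K * exp (2 * K * s) * D := by
      intro s hs
      have := hL _ _ (hext f) (hext g) s hs (exp (2 * K * s) * D) (fun x hx => by
        refine (hpt x ⟨hx.1, hx.2.trans hs.2⟩).trans ?_
        have := hx.2
        gcongr)
      linarith
    have hIntB : |(∫ s in (0:ℝ)..t, N (exf f) s) - ∫ s in (0:ℝ)..t, N (exf g) s|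
        ≤ (exp (2 * K * t) - 1) / 2 * D := by
      rw [← intervalIntegral.integral_sub ((hc _ (hext f)).intervalIntegrable _ _)
        ((hc _ (hext g)).intervalIntegrable _ _), ← Real.norm_eq_abs]
      refine (intervalIntegral.norm_integral_le_of_norm_le (g := fun s => K * exp (2 * K * s) * D) ht.1 ?_
        ((by fun_prop : Continuous _).intervalIntegrable _ _)).trans ?_
      · refine MeasureTheory.ae_of_all _ fun s hs => ?_
        exact hN s ⟨hs.1.le, hs.2.trans ht.2⟩
      · rw [intervalIntegral.integral_mul_const, weight_int hK]
    show dist (exp (-(2 * K * t)) * (w0 + ∫ s in (0:ℝ)..t, N (exf f) s))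
      (exp (-(2 * K * t)) * (w0 + ∫ s in (0:ℝ)..t, N (exf g) s)) ≤ _
    rw [Real.dist_eq, ← mul_sub, abs_mul, abs_of_pos (exp_pos _), add_sub_add_left_eq_sub]
    calc _ ≤ exp (-(2 * K * t)) * ((exp (2 * K * t)) / 2 * D) := by
          gcongr
          refine hIntB.trans ?_
          gcongr
          linarith
      _ = (exp (-(2 * K * t)) * exp (2 * K * t)) * (D / 2) := by ring
      _ = D / 2 := by rw [← exp_add]; simp
      _ ≤ _ := by simp; linarith
  have : Nonempty (Icc (0:ℝ) R) := ⟨⟨0, le_refl _, hR.le⟩⟩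
  obtain ⟨f, hf⟩ : ∃ f, S f = f := ⟨_, hS.fixedPoint_isFixedPt⟩
  have hw : ∀ t ∈ Icc (0:ℝ) R, exf f t = w0 + ∫ s in (0:ℝ)..t, N (exf f) s := by
    intro t ht
    have h1 : f ⟨t, ht⟩ = exp (-(2 * K * t)) * (w0 + ∫ s in (0:ℝ)..t, N (exf f) s) :=
      (congrArg (fun g : C(Icc (0:ℝ) R, ℝ) => g ⟨t, ht⟩) hf).symm
    show exp (2 * K * t) * f (projIcc 0 R hR.le t) = _
    rw [projIcc_of_mem hR.le ht, h1, ← mul_assoc, ← exp_add]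
    simp
  refine ⟨exf f, hext f, ?_, ?_⟩
  · rw [hw 0 ⟨le_refl _, hR.le⟩]; simp
  · intro r hr
    have h1 : HasDerivAt (fun t => w0 + ∫ s in (0:ℝ)..t, N (exf f) s) (N (exf f) r) r :=
      (intervalIntegral.integral_hasDerivAt_right ((hc _ (hext f)).intervalIntegrable _ _)
        ((hc _ (hext f)).stronglyMeasurableAtFilter _ _) (hc _ (hext f)).continuousAt).const_add w0
    refine h1.congr_of_eventuallyEq ?_
    filter_upwards [Ioo_mem_nhds hr.1 hr.2] with t ht using hw t ⟨ht.1.le, ht.2.le⟩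

/-- Gronwall type estimate for Volterra type inequalities. -/
lemma gron {R K ε : ℝ} (hR : 0 ≤ R) (hK : 0 < K) (hε : 0 ≤ ε) {w₁ w₂ N₁ N₂ : ℝ → ℝ}
    (h1 : Continuous w₁) (h2 : Continuous w₂) (hN1 : Continuous N₁) (hN2 : Continuous N₂)
    (h0 : w₁ 0 = w₂ 0)
    (hd1 : ∀ r ∈ Ioo (0:ℝ) R, HasDerivAt w₁ (N₁ r) r)
    (hd2 : ∀ r ∈ Ioo (0:ℝ) R, HasDerivAt w₂ (N₂ r) r)
    (hL : ∀ t ∈ Icc (0:ℝ) R, ∀ D, (∀ s ∈ Icc (0:ℝ) t, |w₁ s - w₂ s| ≤ D) →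
      |N₁ t - N₂ t| ≤ K * D + ε) :
    ∀ t ∈ Icc (0:ℝ) R, |w₁ t - w₂ t| ≤ exp (2 * K * R) * (2 * R) * ε := by
  have hcont : Continuous fun t => exp (-(2 * K * t)) * |w₁ t - w₂ t| := by fun_prop
  obtain ⟨x, hx, hmax⟩ := isCompact_Icc.exists_isMaxOn (nonempty_Icc.mpr hR) hcont.continuousOn
  set D := exp (-(2 * K * x)) * |w₁ x - w₂ x| with hDdef
  have hD : 0 ≤ D := by positivity
  have hpt : ∀ t ∈ Icc (0:ℝ) R, |w₁ t - w₂ t| ≤ exp (2 * K * t) * D := by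
    intro t ht
    have h : exp (-(2 * K * t)) * |w₁ t - w₂ t| ≤ D := hmax ht
    calc |w₁ t - w₂ t| = exp (2 * K * t) * (exp (-(2 * K * t)) * |w₁ t - w₂ t|) := by
          rw [← mul_assoc, ← exp_add]; simp
      _ ≤ _ := by gcongr
  have hN : ∀ s ∈ Icc (0:ℝ) R, |N₁ s - N₂ s| ≤ K * exp (2 * K * s) * D + ε := by
    intro s hs
    have := hL s hs (exp (2 * K * s) * D) (fun y hy => by
      refine (hpt y ⟨hy.1, hy.2.trans hs.2⟩).trans ?_
      have := hy.2
      gcongr)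
    linarith
  have hIntB : |w₁ x - w₂ x| ≤ (exp (2 * K * x) - 1) / 2 * D + x * ε := by
    have e : ∫ s in (0:ℝ)..x, (N₁ s - N₂ s) = (w₁ x - w₂ x) - (w₁ 0 - w₂ 0) :=
      intervalIntegral.integral_eq_sub_of_hasDerivAt_of_le (f := fun s => w₁ s - w₂ s) hx.1
        (by fun_prop) (fun s hs => (hd1 s ⟨hs.1, hs.2.trans_le hx.2⟩).sub
          (hd2 s ⟨hs.1, hs.2.trans_le hx.2⟩)) ((by fun_prop : Continuous _).intervalIntegrable _ _)
    rw [h0, sub_self, sub_zero] at e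
    rw [← e, ← Real.norm_eq_abs]
    refine (intervalIntegral.norm_integral_le_of_norm_le
      (g := fun s => K * exp (2 * K * s) * D + ε) hx.1 ?_
      ((by fun_prop : Continuous _).intervalIntegrable _ _)).trans ?_
    · refine MeasureTheory.ae_of_all _ fun s hs => ?_
      exact hN s ⟨hs.1.le, hs.2.trans hx.2⟩
    · rw [intervalIntegral.integral_add ((by fun_prop : Continuous _).intervalIntegrable _ _)
        ((by fun_prop : Continuous _).intervalIntegrable _ _),
        intervalIntegral.integral_mul_const, weight_int hK]
      simp
  have hDle : D ≤ 2 * R * ε := by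
    have h3 : D ≤ exp (-(2 * K * x)) * (exp (2 * K * x) / 2 * D + x * ε) := by
      rw [hDdef]
      gcongr
      refine hIntB.trans ?_
      gcongr
      linarith
    have h4 : exp (-(2 * K * x)) * (exp (2 * K * x) / 2 * D + x * ε)
        = D / 2 + exp (-(2 * K * x)) * (x * ε) := by
      have : exp (-(2 * K * x)) * exp (2 * K * x) = 1 := by rw [← exp_add]; simp
      linear_combination (D / 2) * this
    have h5 : exp (-(2 * K * x)) * (x * ε) ≤ 1 * (R * ε) := by
      have := hx.1
      have := hx.2
      gcongr
      rw [exp_le_one_iff]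
      have : 0 ≤ 2 * K * x := by positivity
      linarith
    linarith
  intro t ht
  refine (hpt t ht).trans ?_
  have := ht.2
  calc exp (2 * K * t) * D ≤ exp (2 * K * R) * (2 * R * ε) := by gcongr
    _ = _ := by ring

noncomputable def Jb (n : ℕ) (w : ℝ → ℝ) (t : ℝ) : ℝ :=
  ∫ σ in (0:ℝ)..1, σ ^ (n - 1) * exp (w (t * σ))

noncomputable def Bk (n : ℕ) (α β : ℝ) (w : ℝ → ℝ) (t : ℝ) : ℝ :=
  -(1 / ((n : ℝ) - 1)) * (β * t * exp (w t) + (α - n * β) * (t * Jb n w t))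

noncomputable def NN (n : ℕ) (α β m : ℝ) (w : ℝ → ℝ) (t : ℝ) : ℝ :=
  exp (-(m * w t)) * Bk n α β w t

def Sol (n : ℕ) (α β w0 m R : ℝ) (w : ℝ → ℝ) : Prop :=
  Continuous w ∧ w 0 = w0 ∧ ∀ r ∈ Ioo (0:ℝ) R, HasDerivAt w (NN n α β m w r) r

lemma Jb_cont (n : ℕ) {w : ℝ → ℝ} (hw : Continuous w) : Continuous (Jb n w) := by
  unfold Jb
  apply intervalIntegral.continuous_parametric_intervalIntegral_of_continuous'
  fun_prop

lemma Bk_cont (n : ℕ) (α β : ℝ) {w : ℝ → ℝ} (hw : Continuous w) : Continuous (Bk n α β w) := by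
  have := Jb_cont n hw
  unfold Bk
  fun_prop

lemma NN_cont (n : ℕ) (α β m : ℝ) {w : ℝ → ℝ} (hw : Continuous w) :
    Continuous (NN n α β m w) := by
  have := Bk_cont n α β hw
  unfold NN
  fun_prop

lemma Jb_congr (n : ℕ) {w₁ w₂ : ℝ → ℝ} {t : ℝ} (ht : 0 ≤ t)
    (h : ∀ s ∈ Icc (0:ℝ) t, w₁ s = w₂ s) : Jb n w₁ t = Jb n w₂ t := by
  unfold Jb
  apply intervalIntegral.integral_congr
  intro σ hσ
  rw [uIcc_of_le zero_le_one] at hσ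
  simp only
  rw [h (t * σ) ⟨mul_nonneg ht hσ.1, by nlinarith [hσ.2]⟩]

lemma NN_congr (n : ℕ) (α β m : ℝ) {w₁ w₂ : ℝ → ℝ} {t : ℝ} (ht : 0 ≤ t)
    (h : ∀ s ∈ Icc (0:ℝ) t, w₁ s = w₂ s) : NN n α β m w₁ t = NN n α β m w₂ t := by
  unfold NN Bk
  rw [Jb_congr n ht h, h t ⟨ht, le_refl _⟩]

lemma Jb_diff (n : ℕ) {w₁ w₂ : ℝ → ℝ} (h1 : Continuous w₁) (h2 : Continuous w₂) {t C : ℝ}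
    (h : ∀ σ ∈ Icc (0:ℝ) 1, |exp (w₁ (t * σ)) - exp (w₂ (t * σ))| ≤ C) :
    |Jb n w₁ t - Jb n w₂ t| ≤ C := by
  unfold Jb
  rw [← intervalIntegral.integral_sub ((by fun_prop : Continuous _).intervalIntegrable _ _)
    ((by fun_prop : Continuous _).intervalIntegrable _ _), ← Real.norm_eq_abs]
  have := intervalIntegral.norm_integral_le_of_norm_le_const (a := (0:ℝ)) (b := 1) (C := C)
    (f := fun σ => σ ^ (n - 1) * exp (w₁ (t * σ)) - σ ^ (n - 1) * exp (w₂ (t * σ))) (by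
      intro σ hσ
      rw [uIoc_of_le zero_le_one] at hσ
      have h3 := h σ ⟨hσ.1.le, hσ.2⟩
      rw [← mul_sub, Real.norm_eq_abs, abs_mul, abs_pow, abs_of_pos hσ.1]
      have h4 : σ ^ (n - 1) ≤ 1 := pow_le_one₀ hσ.1.le hσ.2
      calc _ ≤ 1 * |exp (w₁ (t * σ)) - exp (w₂ (t * σ))| := by gcongr
        _ ≤ C := by rw [one_mul]; exact h3)
  simpa using this

lemma Jb_bound (n : ℕ) {w : ℝ → ℝ} {t C : ℝ}
    (h : ∀ σ ∈ Icc (0:ℝ) 1, exp (w (t * σ)) ≤ C) :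
    |Jb n w t| ≤ C := by
  unfold Jb
  rw [← Real.norm_eq_abs]
  have := intervalIntegral.norm_integral_le_of_norm_le_const (a := (0:ℝ)) (b := 1) (C := C)
    (f := fun σ => σ ^ (n - 1) * exp (w (t * σ))) (by
      intro σ hσ
      rw [uIoc_of_le zero_le_one] at hσ
      have h3 := h σ ⟨hσ.1.le, hσ.2⟩
      rw [Real.norm_eq_abs, abs_mul, abs_pow, abs_of_pos hσ.1, abs_of_pos (exp_pos _)]
      have h4 : σ ^ (n - 1) ≤ 1 := pow_le_one₀ hσ.1.le hσ.2
      calc _ ≤ 1 * exp (w (t * σ)) := by gcongr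
        _ ≤ C := by rw [one_mul]; exact h3)
  simpa using this

lemma Jb_prim {n : ℕ} (hn : 1 ≤ n) (w : ℝ → ℝ) (t : ℝ) :
    t ^ n * Jb n w t = ∫ s in (0:ℝ)..t, s ^ (n - 1) * exp (w s) := by
  have h := intervalIntegral.mul_integral_comp_mul_left (a := 0) (b := 1)
    (f := fun s => s ^ (n - 1) * exp (w s)) t
  rw [mul_zero, mul_one] at h
  rw [← h]
  have e : t ^ n = t * t ^ (n - 1) := by
    rw [← pow_succ']; congr 1; omega
  unfold Jb
  rw [e, mul_assoc, ← intervalIntegral.integral_const_mul]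
  congr 1
  apply intervalIntegral.integral_congr
  intro σ _
  simp only
  ring

lemma Jb_deriv {n : ℕ} (hn : 1 ≤ n) {w : ℝ → ℝ} (hw : Continuous w) (t : ℝ) :
    HasDerivAt (fun t => t ^ n * Jb n w t) (t ^ (n - 1) * exp (w t)) t := by
  have : (fun t => t ^ n * Jb n w t) = fun t => ∫ s in (0:ℝ)..t, s ^ (n - 1) * exp (w s) :=
    funext (Jb_prim hn w)
  rw [this]
  have hc : Continuous fun s => s ^ (n - 1) * exp (w s) := by fun_prop
  exact intervalIntegral.integral_hasDerivAt_right (hc.intervalIntegrable _ _)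
    (hc.stronglyMeasurableAtFilter _ _) hc.continuousAt

/-- derivative of `r^(n-1) y`. -/
lemma gB_deriv {n : ℕ} (hn : 3 ≤ n) (α β : ℝ) {w : ℝ → ℝ} (hw : Continuous w) {r w' : ℝ}
    (hd : HasDerivAt w w' r) :
    HasDerivAt (fun t => t ^ (n - 1) * Bk n α β w t)
      (-(1 / ((n : ℝ) - 1)) * (r ^ (n - 1) * exp (w r) * (α + β * (r * w')))) r := by
  have e : (fun t => t ^ (n - 1) * Bk n α β w t) = fun t => -(1 / ((n : ℝ) - 1)) *
      (β * (t ^ n * exp (w t)) + (α - n * β) * (t ^ n * Jb n w t)) := by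
    funext t
    have e : t ^ n = t * t ^ (n - 1) := by
      rw [← pow_succ']; congr 1; omega
    unfold Bk
    rw [e]; ring
  rw [e]
  have h1 := (((hasDerivAt_pow n r).mul hd.exp).const_mul β).add
    ((Jb_deriv (by omega : 1 ≤ n) hw r).const_mul (α - n * β))
  refine (h1.const_mul (-(1 / ((n : ℝ) - 1)))).congr_deriv ?_
  have e : r ^ n = r * r ^ (n - 1) := by
    rw [← pow_succ']; congr 1; omega
  rw [e]; ring

lemma Bk_deriv {n : ℕ} (hn : 3 ≤ n) (α β : ℝ) {w : ℝ → ℝ} (hw : Continuous w) {r w' : ℝ}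
    (hr : 0 < r) (hd : HasDerivAt w w' r) :
    HasDerivAt (Bk n α β w) (-(1 / ((n : ℝ) - 1)) * (exp (w r) * (α + β * (r * w')))
      - ((n : ℝ) - 1) / r * Bk n α β w r) r := by
  have h1 := (gB_deriv hn α β hw hd).div (hasDerivAt_pow (n - 1) r) (by positivity)
  have h2 := h1.congr_of_eventuallyEq (f₁ := Bk n α β w) (by
    filter_upwards [lt_mem_nhds hr] with t ht
    simp only [Pi.div_apply]
    field_simp)
  refine h2.congr_deriv ?_
  have e : r ^ (n - 1) = r * r ^ (n - 1 - 1) := by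
    rw [← pow_succ']; congr 1; omega
  have e2 : ((n - 1 : ℕ) : ℝ) = (n : ℝ) - 1 := by
    rw [Nat.cast_sub (by omega)]; simp
  have h3 : (n : ℝ) - 1 ≠ 0 := by
    have : (3:ℝ) ≤ n := by exact_mod_cast hn
    linarith
  rw [e, e2]
  have h4 : r ^ (n - 1 - 1) ≠ 0 := by positivity
  field_simp

lemma exp_lip {a b L : ℝ} (ha : a ≤ L) (hb : b ≤ L) : |exp a - exp b| ≤ exp L * |a - b| := by
  have key : ∀ x y : ℝ, x ≤ L → y ≤ x → exp x - exp y ≤ exp L * (x - y) := by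
    intro x y hx hxy
    have h1 : exp y = exp x * exp (y - x) := by rw [← exp_add]; ring_nf
    have h2 := add_one_le_exp (y - x)
    have h3 : exp x ≤ exp L := exp_le_exp.mpr hx
    have h4 := exp_pos x
    rw [h1]
    nlinarith [mul_le_mul_of_nonneg_left h2 h4.le,
      mul_le_mul_of_nonneg_right h3 (sub_nonneg.mpr hxy)]
  rcases le_total a b with h | h
  · rw [abs_sub_comm, abs_sub_comm a b, abs_of_nonneg (sub_nonneg.mpr h),
      abs_of_nonneg (sub_nonneg.mpr (exp_le_exp.mpr h))]
    exact key b a hb h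
  · rw [abs_of_nonneg (sub_nonneg.mpr h), abs_of_nonneg (sub_nonneg.mpr (exp_le_exp.mpr h))]
    exact key a b ha h

lemma inv_n {n : ℕ} (hn : 3 ≤ n) : 0 ≤ 1 / ((n : ℝ) - 1) ∧ 1 / ((n : ℝ) - 1) ≤ 1 := by
  have : (3:ℝ) ≤ n := by exact_mod_cast hn
  constructor
  · apply div_nonneg zero_le_one; linarith
  · rw [div_le_one (by linarith)]; linarith

lemma seg_mem {t σ : ℝ} (ht : 0 ≤ t) (hσ : σ ∈ Icc (0:ℝ) 1) : t * σ ∈ Icc (0:ℝ) t :=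
  ⟨mul_nonneg ht hσ.1, by nlinarith [hσ.2]⟩

lemma Bk_bound {n : ℕ} (hn : 3 ≤ n) (α β : ℝ) {w : ℝ → ℝ} {t L : ℝ}
    (ht : 0 ≤ t) (h : ∀ s ∈ Icc (0:ℝ) t, |w s| ≤ L) :
    |Bk n α β w t| ≤ (|β| + |α - n * β|) * exp L * t := by
  have hJ : |Jb n w t| ≤ exp L := Jb_bound n fun σ hσ =>
    exp_le_exp.mpr ((le_abs_self _).trans (h _ (seg_mem ht hσ)))
  have hE : exp (w t) ≤ exp L := exp_le_exp.mpr ((le_abs_self _).trans (h t ⟨ht, le_refl _⟩))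
  obtain ⟨c0, c1⟩ := inv_n hn
  unfold Bk
  rw [abs_mul, abs_neg, abs_of_nonneg c0]
  calc _ ≤ 1 * (|β| * t * exp L + |α - n * β| * (t * exp L)) := by
        gcongr
        refine (abs_add_le _ _).trans ?_
        rw [abs_mul, abs_mul, abs_mul, abs_mul, abs_of_nonneg ht, abs_of_pos (exp_pos _)]
        gcongr
    _ = _ := by ring

lemma Bk_diff {n : ℕ} (hn : 3 ≤ n) (α β : ℝ) {w₁ w₂ : ℝ → ℝ} (h1 : Continuous w₁)
    (h2 : Continuous w₂) {t L D : ℝ}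
    (ht : 0 ≤ t) (hb1 : ∀ s ∈ Icc (0:ℝ) t, |w₁ s| ≤ L) (hb2 : ∀ s ∈ Icc (0:ℝ) t, |w₂ s| ≤ L)
    (hD : ∀ s ∈ Icc (0:ℝ) t, |w₁ s - w₂ s| ≤ D) :
    |Bk n α β w₁ t - Bk n α β w₂ t| ≤ (|β| + |α - n * β|) * exp L * t * D := by
  have hE : ∀ s ∈ Icc (0:ℝ) t, |exp (w₁ s) - exp (w₂ s)| ≤ exp L * D := fun s hs => by
    refine (exp_lip ((le_abs_self _).trans (hb1 s hs)) ((le_abs_self _).trans (hb2 s hs))).trans ?_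
    have := hD s hs
    gcongr
  have hJ : |Jb n w₁ t - Jb n w₂ t| ≤ exp L * D := Jb_diff n h1 h2 fun σ hσ =>
    hE _ (seg_mem ht hσ)
  have hE' := hE t ⟨ht, le_refl _⟩
  obtain ⟨c0, c1⟩ := inv_n hn
  unfold Bk
  rw [← mul_sub, abs_mul, abs_neg, abs_of_nonneg c0]
  have e : (β * t * exp (w₁ t) + (α - n * β) * (t * Jb n w₁ t)
      - (β * t * exp (w₂ t) + (α - n * β) * (t * Jb n w₂ t)))
      = β * t * (exp (w₁ t) - exp (w₂ t)) + (α - n * β) * (t * (Jb n w₁ t - Jb n w₂ t)) := by ring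
  rw [e]
  calc _ ≤ 1 * (|β| * t * (exp L * D) + |α - n * β| * (t * (exp L * D))) := by
        gcongr
        refine (abs_add_le _ _).trans ?_
        rw [abs_mul, abs_mul, abs_mul, abs_mul, abs_of_nonneg ht]
        gcongr
    _ = _ := by ring

lemma NN_diff {n : ℕ} (hn : 3 ≤ n) (α β : ℝ) {w₁ w₂ : ℝ → ℝ} (h1 : Continuous w₁)
    (h2 : Continuous w₂) {t L D m₁ m₂ : ℝ} (hm1 : m₁ ∈ Icc (0:ℝ) 1) (hm2 : m₂ ∈ Icc (0:ℝ) 1)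
    (ht : 0 ≤ t) (hb1 : ∀ s ∈ Icc (0:ℝ) t, |w₁ s| ≤ L) (hb2 : ∀ s ∈ Icc (0:ℝ) t, |w₂ s| ≤ L)
    (hD : ∀ s ∈ Icc (0:ℝ) t, |w₁ s - w₂ s| ≤ D) :
    |NN n α β m₁ w₁ t - NN n α β m₂ w₂ t|
      ≤ (|β| + |α - n * β|) * exp L * exp L * t * (2 * D + L * |m₁ - m₂|) := by
  have htt : t ∈ Icc (0:ℝ) t := ⟨ht, le_refl _⟩
  have b1 := hb1 t htt
  have b2 := hb2 t htt
  have bD := hD t htt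
  have hB := Bk_bound hn α β ht hb2
  have hBD := Bk_diff hn α β h1 h2 ht hb1 hb2 hD
  have hL : 0 ≤ L := (abs_nonneg _).trans b1
  have hD0 : 0 ≤ D := (abs_nonneg _).trans bD
  have small : ∀ m ∈ Icc (0:ℝ) 1, ∀ x : ℝ, |x| ≤ L → -(m * x) ≤ L := by
    intro m hm x hx
    have h3 : |m * x| ≤ 1 * L := by
      rw [abs_mul, abs_of_nonneg hm.1]
      have := hm.2
      gcongr
    have := neg_abs_le (m * x)
    linarith
  have hx1 := small m₁ hm1 _ b1
  have hx2 := small m₂ hm2 _ b2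
  have hE : |exp (-(m₁ * w₁ t)) - exp (-(m₂ * w₂ t))| ≤ exp L * (D + L * |m₁ - m₂|) := by
    refine (exp_lip hx1 hx2).trans ?_
    gcongr
    have e : -(m₁ * w₁ t) - -(m₂ * w₂ t) = -(m₁ * (w₁ t - w₂ t)) + -(w₂ t * (m₁ - m₂)) := by ring
    rw [e]
    refine (abs_add_le _ _).trans ?_
    rw [abs_neg, abs_neg, abs_mul, abs_mul, abs_of_nonneg hm1.1]
    have : m₁ * |w₁ t - w₂ t| ≤ 1 * D := by
      have := hm1.2
      gcongr
    have : |w₂ t| * |m₁ - m₂| ≤ L * |m₁ - m₂| := by gcongr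
    linarith
  have hE1 : exp (-(m₁ * w₁ t)) ≤ exp L := exp_le_exp.mpr hx1
  unfold NN
  have e : exp (-(m₁ * w₁ t)) * Bk n α β w₁ t - exp (-(m₂ * w₂ t)) * Bk n α β w₂ t
    = exp (-(m₁ * w₁ t)) * (Bk n α β w₁ t - Bk n α β w₂ t)
      + (exp (-(m₁ * w₁ t)) - exp (-(m₂ * w₂ t))) * Bk n α β w₂ t := by ring
  rw [e]
  refine (abs_add_le _ _).trans ?_
  rw [abs_mul, abs_mul, abs_of_pos (exp_pos _)]
  calc _ ≤ exp L * ((|β| + |α - n * β|) * exp L * t * D)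
        + exp L * (D + L * |m₁ - m₂|) * ((|β| + |α - n * β|) * exp L * t) := by gcongr
    _ = _ := by ring

/-- stability estimate -/
lemma stab {n : ℕ} (hn : 3 ≤ n) (α β w0 : ℝ) {L R : ℝ} (hR : 0 ≤ R) :
    ∃ C : ℝ, 0 ≤ C ∧ ∀ m₁ ∈ Icc (0:ℝ) 1, ∀ m₂ ∈ Icc (0:ℝ) 1, ∀ w₁ w₂ : ℝ → ℝ,
      Sol n α β w0 m₁ R w₁ → Sol n α β w0 m₂ R w₂ →
      (∀ s ∈ Icc (0:ℝ) R, |w₁ s| ≤ L) → (∀ s ∈ Icc (0:ℝ) R, |w₂ s| ≤ L) →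
      ∀ t ∈ Icc (0:ℝ) R, |w₁ t - w₂ t| ≤ C * |m₁ - m₂| := by
  set A := (|β| + |α - n * β|) * exp L * exp L with hA
  have hA0 : 0 ≤ A := by positivity
  set K := 2 * (A * R) + 1 with hK
  have hK0 : 0 < K := by positivity
  refine ⟨exp (2 * K * R) * (2 * R) * (A * R * |L|), by positivity, ?_⟩
  intro m₁ hm1 m₂ hm2 w₁ w₂ hs1 hs2 hb1 hb2 t ht
  have := gron hR hK0 (ε := A * R * |L| * |m₁ - m₂|) (by positivity) hs1.1 hs2.1
    (NN_cont n α β m₁ hs1.1) (NN_cont n α β m₂ hs2.1) (hs1.2.1.trans hs2.2.1.symm)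
    hs1.2.2 hs2.2.2 (by
      intro x hx D hD
      have h1 := NN_diff hn α β hs1.1 hs2.1 hm1 hm2 hx.1
        (fun s hs => hb1 s ⟨hs.1, hs.2.trans hx.2⟩) (fun s hs => hb2 s ⟨hs.1, hs.2.trans hx.2⟩) hD
      have hD0 : 0 ≤ D := (abs_nonneg _).trans (hD x ⟨hx.1, le_refl _⟩)
      refine h1.trans ?_
      have hx2 := hx.2
      have hx1 := hx.1
      calc A * x * (2 * D + L * |m₁ - m₂|) ≤ A * x * (2 * D + |L| * |m₁ - m₂|) := by
            gcongr; exact le_abs_self L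
        _ ≤ A * R * (2 * D + |L| * |m₁ - m₂|) := by gcongr
        _ ≤ _ := by rw [hK]; nlinarith) t ht
  refine this.trans (le_of_eq ?_)
  ring

lemma sol_unique {n : ℕ} (hn : 3 ≤ n) (α β w0 : ℝ) {m R : ℝ} (hm : m ∈ Icc (0:ℝ) 1)
    {w₁ w₂ : ℝ → ℝ} (h1 : Sol n α β w0 m R w₁) (h2 : Sol n α β w0 m R w₂) :
    ∀ t ∈ Icc (0:ℝ) R, w₁ t = w₂ t := by
  intro t ht
  obtain ⟨L1, hL1⟩ := (isCompact_Icc (a := (0:ℝ)) (b := R)).exists_bound_of_continuousOn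
    h1.1.continuousOn
  obtain ⟨L2, hL2⟩ := (isCompact_Icc (a := (0:ℝ)) (b := R)).exists_bound_of_continuousOn
    h2.1.continuousOn
  obtain ⟨C, -, hC⟩ := stab hn α β w0 (L := max L1 L2) (ht.1.trans ht.2)
  have := hC m hm m hm w₁ w₂ h1 h2 (fun s hs => (hL1 s hs).trans (le_max_left _ _))
    (fun s hs => (hL2 s hs).trans (le_max_right _ _)) t ht
  simp only [sub_self, abs_zero, mul_zero] at this
  exact sub_eq_zero.mp (abs_nonpos_iff.mp this)

lemma sign_g {n : ℕ} (hn : 3 ≤ n) {α β w0 m R : ℝ} (hα : α ≠ 0) (hβ : 0 < β)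
    {w : ℝ → ℝ} (hs : Sol n α β w0 m R w) {r : ℝ} (hr : r ∈ Ioo (0:ℝ) R) :
    α * Bk n α β w r ≤ 0 := by
  obtain ⟨hw, -, hd⟩ := hs
  have hn' : (3:ℝ) ≤ n := by exact_mod_cast hn
  have hBc := Bk_cont n α β hw
  have hGc : Continuous fun t => α * (t ^ (n - 1) * Bk n α β w t) := by fun_prop
  have key : ∀ δ > 0, α * (r ^ (n - 1) * Bk n α β w r) ≤ δ := by
    intro δ hδ
    have h0 : α * ((0:ℝ) ^ (n - 1) * Bk n α β w 0) < δ := by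
      rw [zero_pow (by omega)]; simpa using hδ
    have hev : ∀ᶠ t in nhdsWithin (0:ℝ) (Ioi 0), α * (t ^ (n - 1) * Bk n α β w t) < δ :=
      (hGc.continuousAt.eventually_lt_const h0).filter_mono nhdsWithin_le_nhds
    obtain ⟨ε, h1, h2⟩ := (hev.and (Ioo_mem_nhdsGT hr.1)).exists
    refine image_le_of_deriv_right_lt_deriv_boundary
      (f := fun t => α * (t ^ (n - 1) * Bk n α β w t)) (a := ε) (b := r)
      (f' := fun x => α * (-(1 / ((n : ℝ) - 1)) *
        (x ^ (n - 1) * exp (w x) * (α + β * (x * NN n α β m w x)))))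
      (B := fun _ => δ) (B' := fun _ => 0) hGc.continuousOn ?_ h1.le
      (fun x => hasDerivAt_const x δ) ?_ ⟨h2.2.le, le_refl _⟩
    · intro x hx
      exact ((gB_deriv hn α β hw (hd x ⟨h2.1.trans_le hx.1, hx.2.trans hr.2⟩)).const_mul
        α).hasDerivWithinAt
    · intro x hx he
      have hx0 : 0 < x := h2.1.trans_le hx.1
      have he' : α * (x ^ (n - 1) * Bk n α β w x) = δ := he
      have hp : 0 < x ^ (n - 1) := by positivity
      have hB : 0 < α * Bk n α β w x := by
        have : 0 < x ^ (n - 1) * (α * Bk n α β w x) := by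
          calc 0 < δ := hδ
            _ = _ := by rw [← he']; ring
        exact (mul_pos_iff_of_pos_left hp).mp this
      have e : α * (-(1 / ((n : ℝ) - 1)) *
        (x ^ (n - 1) * exp (w x) * (α + β * (x * NN n α β m w x))))
        = -((1 / ((n : ℝ) - 1)) * (x ^ (n - 1) * exp (w x)) * (α ^ 2 +
          β * x * exp (-(m * w x)) * (α * Bk n α β w x))) := by
        unfold NN; ring
      show α * (-(1 / ((n : ℝ) - 1)) *
        (x ^ (n - 1) * exp (w x) * (α + β * (x * NN n α β m w x)))) < 0
      rw [e, neg_lt_zero]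
      have : 0 < 1 / ((n : ℝ) - 1) := by apply div_pos one_pos; linarith
      positivity
  have h := le_of_forall_pos_le_add (a := α * (r ^ (n - 1) * Bk n α β w r)) (b := 0)
    (fun δ hδ => by simpa using key δ hδ)
  have hp : 0 < r ^ (n - 1) := pow_pos hr.1 _
  by_contra hc
  push Not at hc
  have : 0 < r ^ (n - 1) * (α * Bk n α β w r) := mul_pos hp hc
  linarith [mul_left_comm α (r ^ (n - 1)) (Bk n α β w r)]

lemma q_deriv {n : ℕ} (hn : 3 ≤ n) (α β m : ℝ) {w : ℝ → ℝ} (hw : Continuous w) {r : ℝ}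
    (hr : 0 < r) (hd : HasDerivAt w (NN n α β m w r) r) :
    HasDerivAt (fun t => t * NN n α β m w t)
      ((-((n : ℝ) - 2) * (r * NN n α β m w r) - m * (r * NN n α β m w r) ^ 2
       - (1 / ((n : ℝ) - 1)) * r ^ 2 * exp (-(m * w r)) * exp (w r) *
        (α + β * (r * NN n α β m w r))) / r) r := by
  have h1 := ((hd.const_mul m).neg.exp).mul (Bk_deriv hn α β hw hr hd)
  have h2 := (hasDerivAt_id r).mul h1
  refine h2.congr_deriv ?_
  simp only [Pi.mul_apply, Pi.neg_apply, id, NN]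
  have h3 : (n : ℝ) - 1 ≠ 0 := by
    have : (3:ℝ) ≤ n := by exact_mod_cast hn
    linarith
  field_simp
  ring

lemma sign_h {n : ℕ} (hn : 3 ≤ n) {α β w0 m R : ℝ} (hα : α ≠ 0) (hβ : 0 < β)
    (hm : m * α < ((n : ℝ) - 2) * β)
    {w : ℝ → ℝ} (hs : Sol n α β w0 m R w) {r : ℝ} (hr : r ∈ Ioo (0:ℝ) R) :
    0 ≤ α ^ 2 + β * α * (r * NN n α β m w r) := by
  obtain ⟨hw, -, hd⟩ := hs
  have hNc := NN_cont n α β m hw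
  have hα2 : 0 < α ^ 2 := by positivity
  have hGc : Continuous fun t => -(β * α) * (t * NN n α β m w t) := by fun_prop
  have h0 : -(β * α) * ((0:ℝ) * NN n α β m w 0) < α ^ 2 := by simpa using hα2
  have hev : ∀ᶠ t in nhdsWithin (0:ℝ) (Ioi 0), -(β * α) * (t * NN n α β m w t) < α ^ 2 :=
    (hGc.continuousAt.eventually_lt_const h0).filter_mono nhdsWithin_le_nhds
  obtain ⟨ε, h1, h2⟩ := (hev.and (Ioo_mem_nhdsGT hr.1)).exists
  have := image_le_of_deriv_right_lt_deriv_boundary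
    (f := fun t => -(β * α) * (t * NN n α β m w t)) (a := ε) (b := r)
    (f' := fun r => -(β * α) * ((-((n : ℝ) - 2) * (r * NN n α β m w r)
       - m * (r * NN n α β m w r) ^ 2
       - (1 / ((n : ℝ) - 1)) * r ^ 2 * exp (-(m * w r)) * exp (w r) *
        (α + β * (r * NN n α β m w r))) / r))
    (B := fun _ => α ^ 2) (B' := fun _ => 0) hGc.continuousOn ?_ h1.le
    (fun x => hasDerivAt_const x _) ?_ (x := r) ⟨h2.2.le, le_refl _⟩
  · linarith
  · intro x hx
    have hx0 : 0 < x := h2.1.trans_le hx.1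
    exact ((q_deriv hn α β m hw hx0 (hd x ⟨hx0, hx.2.trans hr.2⟩)).const_mul _).hasDerivWithinAt
  · intro x hx he
    have hx0 : 0 < x := h2.1.trans_le hx.1
    have hq : α + β * (x * NN n α β m w x) = 0 := by
      apply mul_left_cancel₀ hα
      linarith
    have hq2 : x * NN n α β m w x = -(α / β) := by
      field_simp
      linarith
    rw [hq, hq2]
    have e : -(β * α) * ((-((n:ℝ) - 2) * -(α / β) - m * (-(α / β)) ^ 2
      - 1 / ((n:ℝ) - 1) * x ^ 2 * exp (-(m * w x)) * exp (w x) * 0) / x)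
      = -(α ^ 2 * (((n:ℝ) - 2) * β - m * α) / (x * β)) := by
      field_simp
      ring
    rw [e, neg_lt_zero]
    have : 0 < ((n:ℝ) - 2) * β - m * α := by linarith
    positivity

lemma q_bound {n : ℕ} (hn : 3 ≤ n) {α β w0 m R : ℝ} (hα : α ≠ 0) (hβ : 0 < β)
    (hm : m * α < ((n : ℝ) - 2) * β)
    {w : ℝ → ℝ} (hs : Sol n α β w0 m R w) {r : ℝ} (hr : r ∈ Ioo (0:ℝ) R) :
    r * |NN n α β m w r| ≤ |α| / β := by
  have h1 := sign_g hn hα hβ hs hr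
  have h2 := sign_h hn hα hβ hm hs hr
  have h3 : α * (r * NN n α β m w r) ≤ 0 := by
    have : α * (r * NN n α β m w r) = (r * exp (-(m * w r))) * (α * Bk n α β w r) := by
      unfold NN; ring
    rw [this]
    exact mul_nonpos_of_nonneg_of_nonpos (mul_nonneg hr.1.le (exp_pos _).le) h1
  have hr0 := hr.1
  have e : r * |NN n α β m w r| = |r * NN n α β m w r| := by
    rw [abs_mul, abs_of_pos hr.1]
  rw [e, le_div_iff₀ hβ]
  have hα' : 0 < |α| := abs_pos.mpr hα
  refine le_of_mul_le_mul_left ?_ hα'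
  have : |α| * (|r * NN n α β m w r| * β) = β * -(α * (r * NN n α β m w r)) := by
    rw [← mul_assoc, ← abs_mul, abs_of_nonpos h3]; ring
  rw [this, abs_mul_abs_self]
  nlinarith

/-- A priori bound. -/
lemma apriori {n : ℕ} (hn : 3 ≤ n) {α β : ℝ} (w0 : ℝ) (hα : α ≠ 0) (hβ : 0 < β) :
    ∃ κ : ℝ, 0 ≤ κ ∧ ∀ m ∈ Icc (0:ℝ) 1, m * α < ((n : ℝ) - 2) * β → ∀ R : ℝ, ∀ w : ℝ → ℝ,
      Sol n α β w0 m R w → ∀ t ∈ Icc (0:ℝ) R, |w t| ≤ |w0| + 1 + κ * R := by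
  set Λ := |w0| + 1 with hΛ
  set C := exp Λ * ((|β| + |α - n * β|) * exp Λ) with hC
  have hC0 : 0 ≤ C := by positivity
  set r0 := 1 / (C + 1) with hr0
  have hr0p : 0 < r0 := by positivity
  have hCr : C * r0 * r0 < 1 := by
    have h1 : C * r0 < 1 := by
      rw [hr0, mul_one_div, div_lt_one (by positivity)]; linarith
    have h2 : r0 ≤ 1 := by
      rw [hr0, div_le_one (by positivity)]; linarith
    nlinarith
  refine ⟨|α| / β / r0, by positivity, ?_⟩
  intro m hm hmα R w hs
  have hloc : ∀ t ∈ Icc (0:ℝ) (min R r0), |w t - w0| < 1 := by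
    have hwc := hs.1
    apply exit_lemma (f := fun t => |w t - w0|) (by fun_prop)
    intro t ht hlt
    have ht1 : t ≤ R := ht.2.trans (min_le_left _ _)
    have ht2 : t ≤ r0 := ht.2.trans (min_le_right _ _)
    rcases ht.1.eq_or_lt with h0 | h0
    · rw [← h0, hs.2.1]; simp
    · obtain ⟨c, hc, he⟩ := exists_hasDerivAt_eq_slope w (NN n α β m w) h0
        hs.1.continuousOn (fun x hx => hs.2.2 x ⟨hx.1, hx.2.trans_le ht1⟩)
      rw [hs.2.1, sub_zero] at he
      have hb : ∀ s ∈ Icc (0:ℝ) c, |w s| ≤ Λ := by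
        intro s hs'
        have := hlt s ⟨hs'.1, hs'.2.trans_lt hc.2⟩
        have h4 := abs_sub_abs_le_abs_sub (w s) w0
        rw [hΛ]; linarith
      have hB := Bk_bound hn α β hc.1.le hb
      have hE : exp (-(m * w c)) ≤ exp Λ := by
        apply exp_le_exp.mpr
        have h5 := hb c ⟨hc.1.le, le_refl _⟩
        have h3 : |m * w c| ≤ 1 * Λ := by
          rw [abs_mul, abs_of_nonneg hm.1]
          have := hm.2
          gcongr
        have := neg_abs_le (m * w c)
        linarith
      have hN : |NN n α β m w c| ≤ C * c := by
        unfold NN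
        rw [abs_mul, abs_of_pos (exp_pos _)]
        calc _ ≤ exp Λ * ((|β| + |α - n * β|) * exp Λ * c) := by gcongr
          _ = _ := by rw [hC]; ring
      have e : w t - w0 = NN n α β m w c * t := by
        rw [he]; field_simp
      rw [e, abs_mul, abs_of_pos h0]
      calc _ ≤ C * c * t := by gcongr
        _ ≤ C * r0 * r0 := by
          have := hc.2
          have := hc.1
          gcongr
          linarith
        _ < 1 := hCr
  intro t ht
  have hR0 : 0 ≤ R := ht.1.trans ht.2
  have hκ : 0 ≤ |α| / β / r0 * R := by positivity
  rcases le_or_gt t r0 with h | h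
  · have := hloc t ⟨ht.1, le_min ht.2 h⟩
    have h4 := abs_sub_abs_le_abs_sub (w t) w0
    rw [hΛ]; linarith
  · have h1 := hloc r0 ⟨hr0p.le, le_min (h.le.trans ht.2) (le_refl _)⟩
    have h4 := abs_sub_abs_le_abs_sub (w r0) w0
    obtain ⟨c, hc, he⟩ := exists_hasDerivAt_eq_slope w (NN n α β m w) h
        hs.1.continuousOn (fun x hx => hs.2.2 x ⟨hr0p.trans hx.1, hx.2.trans_le ht.2⟩)
    have hcp : 0 < c := hr0p.trans hc.1
    have hq := q_bound hn hα hβ hmα hs (r := c) ⟨hcp, hc.2.trans_le ht.2⟩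
    have hN : |NN n α β m w c| ≤ |α| / β / r0 := by
      rw [le_div_iff₀ hr0p]
      refine le_trans ?_ hq
      rw [mul_comm]
      have := hc.1
      gcongr
    have htr : 0 < t - r0 := by linarith
    have e : w t - w r0 = NN n α β m w c * (t - r0) := by
      rw [he]; field_simp
    have h5 : |w t - w r0| ≤ |α| / β / r0 * R := by
      rw [e, abs_mul, abs_of_pos htr]
      have := ht.2
      gcongr
      linarith
    have h6 := abs_sub_abs_le_abs_sub (w t) (w r0)
    rw [hΛ]; linarith

lemma clamp_lip (Λ x y : ℝ) : |max (-Λ) (min x Λ) - max (-Λ) (min y Λ)| ≤ |x - y| := by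
  refine (abs_max_sub_max_le_max _ _ _ _).trans ?_
  simp only [sub_self, abs_zero]
  refine max_le (abs_nonneg _) ((abs_min_sub_min_le_max _ _ _ _).trans ?_)
  simp

lemma exist_R {n : ℕ} (hn : 3 ≤ n) {α β : ℝ} (w0 : ℝ) (hα : α ≠ 0) (hβ : 0 < β) {m : ℝ}
    (hm : m ∈ Icc (0:ℝ) 1) (hmα : m * α < ((n : ℝ) - 2) * β) {R : ℝ} (hR : 0 < R) :
    ∃ w, Sol n α β w0 m R w := by
  obtain ⟨κ, hκ, hap⟩ := apriori hn w0 hα hβ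
  set Λ := |w0| + 1 + κ * R + 1 with hΛ
  have hΛ0 : 0 ≤ Λ := by positivity
  let cl : (ℝ → ℝ) → ℝ → ℝ := fun f s => max (-Λ) (min (f s) Λ)
  have hclc : ∀ f, Continuous f → Continuous (cl f) := fun f hf => by
    show Continuous fun s => max (-Λ) (min (f s) Λ)
    fun_prop
  have hclb : ∀ f s, |cl f s| ≤ Λ := fun f s => by
    rw [abs_le]
    exact ⟨le_max_left _ _, max_le (by linarith) (min_le_right _ _)⟩
  set A := (|β| + |α - n * β|) * exp Λ * exp Λ with hA
  have hA0 : 0 ≤ A := by positivity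
  obtain ⟨w, hw, h0, hd⟩ := picard (w0 := w0) (K := A * R * 2 + 1) hR (by positivity)
    (fun f => NN n α β m (cl f)) (fun f hf => NN_cont n α β m (hclc f hf)) (by
      intro f g hf hg t ht D hD
      have h1 := NN_diff hn α β (hclc f hf) (hclc g hg) hm hm ht.1 (L := Λ) (D := D)
        (fun s _ => hclb f s) (fun s _ => hclb g s)
        (fun s hs => (clamp_lip Λ (f s) (g s)).trans (hD s hs))
      have hD0 : 0 ≤ D := (abs_nonneg _).trans (hD t ⟨ht.1, le_refl _⟩)
      refine h1.trans ?_
      have hx2 := ht.2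
      have hx1 := ht.1
      simp only [sub_self, abs_zero, mul_zero, add_zero]
      calc A * t * (2 * D) ≤ A * R * (2 * D) := by gcongr
        _ ≤ _ := by nlinarith)
  have hcl : ∀ s, |w s| < Λ → cl w s = w s := by
    intro s hs
    have := abs_lt.mp hs
    show max (-Λ) (min (w s) Λ) = w s
    rw [min_eq_left this.2.le, max_eq_right this.1.le]
  have hlt : ∀ t ∈ Icc (0:ℝ) R, |w t| < Λ := by
    apply exit_lemma (f := fun t => |w t|) (by fun_prop)
    intro t ht hlt
    have hs : Sol n α β w0 m t w := by
      refine ⟨hw, h0, fun r hr => ?_⟩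
      have := hd r ⟨hr.1, hr.2.trans_le ht.2⟩
      rwa [NN_congr n α β m hr.1.le (w₂ := w)
        (fun s hs => hcl s (hlt s ⟨hs.1, hs.2.trans_lt hr.2⟩))] at this
    have h1 := hap m hm hmα t w hs t ⟨ht.1, le_refl _⟩
    have h2 : κ * t ≤ κ * R := by
      have := ht.2
      gcongr
    linarith
  refine ⟨w, hw, h0, fun r hr => ?_⟩
  have := hd r hr
  rwa [NN_congr n α β m hr.1.le (w₂ := w)
    (fun s hs => hcl s (hlt s ⟨hs.1, hs.2.trans hr.2.le⟩))] at this

lemma exist_all {n : ℕ} (hn : 3 ≤ n) {α β : ℝ} (w0 : ℝ) (hα : α ≠ 0) (hβ : 0 < β) {m : ℝ}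
    (hm : m ∈ Icc (0:ℝ) 1) (hmα : m * α < ((n : ℝ) - 2) * β) :
    ∃ w, ∀ R, Sol n α β w0 m R w := by
  have hex : ∀ N : ℕ, ∃ w, Sol n α β w0 m ((N:ℝ) + 1) w := fun N =>
    exist_R hn w0 hα hβ hm hmα (by positivity)
  choose W hW using hex
  have hmono : ∀ N M : ℕ, N ≤ M → ∀ t ∈ Icc (0:ℝ) ((N:ℝ) + 1), W M t = W N t := by
    intro N M hNM
    have hNM' : (N:ℝ) ≤ M := by exact_mod_cast hNM
    exact sol_unique hn α β w0 hm
      ⟨(hW M).1, (hW M).2.1, fun r hr => (hW M).2.2 r ⟨hr.1, hr.2.trans_le (by linarith)⟩⟩ (hW N)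
  let w : ℝ → ℝ := fun r => W ⌈r⌉₊ (max r 0)
  have hw : ∀ N : ℕ, ∀ r ≤ (N:ℝ), w r = W N (max r 0) := by
    intro N r hr
    have h1 : ⌈r⌉₊ ≤ N := Nat.ceil_le.mpr hr
    have h2 : r ≤ (⌈r⌉₊ : ℝ) := Nat.le_ceil r
    refine (hmono _ _ h1 _ ⟨le_max_right _ _, ?_⟩).symm
    apply max_le
    · linarith
    · positivity
  refine ⟨w, fun R => ⟨?_, ?_, ?_⟩⟩
  · rw [continuous_iff_continuousAt]
    intro r
    obtain ⟨N, hN⟩ := exists_nat_gt r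
    have h1 : Continuous fun r => W N (max r 0) :=
      (hW N).1.comp (continuous_id.max continuous_const)
    refine h1.continuousAt.congr ?_
    filter_upwards [gt_mem_nhds hN] with t ht using (hw N t ht.le).symm
  · rw [hw 0 0 (by simp)]
    simpa using (hW 0).2.1
  · intro r hr
    obtain ⟨N, hN⟩ := exists_nat_gt r
    have h1 := (hW N).2.2 r ⟨hr.1, by linarith⟩
    rw [NN_congr n α β m hr.1.le (w₂ := w) (fun s hs => by
      rw [hw N s (hs.2.trans hN.le), max_eq_left hs.1])] at h1
    refine h1.congr_of_eventuallyEq ?_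
    filter_upwards [gt_mem_nhds hN, lt_mem_nhds hr.1] with t ht ht2
    rw [hw N t ht.le, max_eq_left ht2.le]

lemma back_facts {n : ℕ} (hn : 3 ≤ n) {α β w0 m : ℝ} {w : ℝ → ℝ}
    (hs : ∀ R, Sol n α β w0 m R w) :
    (∀ r > 0, HasDerivAt w (NN n α β m w r) r) ∧ ContDiffOn ℝ 2 w (Ioi 0) ∧
      HasDerivWithinAt w 0 (Ici 0) 0 := by
  have hw : Continuous w := (hs 0).1
  have hd : ∀ r > 0, HasDerivAt w (NN n α β m w r) r := fun r hr =>
    (hs (r + 1)).2.2 r ⟨hr, by linarith⟩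
  have hNc := NN_cont n α β m hw
  have hBc := Bk_cont n α β hw
  have hNd : ∀ r > 0, HasDerivAt (NN n α β m w) (exp (-(m * w r)) * -(m * NN n α β m w r) *
      Bk n α β w r + exp (-(m * w r)) * (-(1 / ((n : ℝ) - 1)) * (exp (w r) *
        (α + β * (r * NN n α β m w r))) - ((n : ℝ) - 1) / r * Bk n α β w r)) r := by
    intro r hr
    exact ((((hd r hr).const_mul m).neg.exp).mul (Bk_deriv hn α β hw hr (hd r hr)))
  refine ⟨hd, ?_, ?_⟩
  · have h1 : ContDiffOn ℝ 1 (NN n α β m w) (Ioi 0) := by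
      have : ContDiffOn ℝ (0 + 1) (NN n α β m w) (Ioi 0) := by
        rw [contDiffOn_succ_iff_deriv_of_isOpen isOpen_Ioi]
        refine ⟨fun r hr => (hNd r hr).differentiableAt.differentiableWithinAt, by simp, ?_⟩
        rw [contDiffOn_zero]
        refine ContinuousOn.congr ?_ (fun r hr => (hNd r hr).deriv)
        have : ContinuousOn (fun r : ℝ => ((n : ℝ) - 1) / r) (Ioi 0) :=
          continuousOn_const.div continuousOn_id (fun r hr => ne_of_gt hr)
        fun_prop
      simpa using this
    have : ContDiffOn ℝ (1 + 1) w (Ioi 0) := by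
      rw [contDiffOn_succ_iff_deriv_of_isOpen isOpen_Ioi]
      exact ⟨fun r hr => (hd r hr).differentiableAt.differentiableWithinAt, by simp,
        h1.congr (fun r hr => (hd r hr).deriv)⟩
    rw [one_add_one_eq_two] at this
    exact this
  · have h0 : NN n α β m w 0 = 0 := by simp [NN, Bk]
    refine hasDerivWithinAt_Ici_of_tendsto_deriv (s := Ioi 0)
      (fun r hr => (hd r hr).differentiableAt.differentiableWithinAt)
      hw.continuousWithinAt self_mem_nhdsWithin ?_
    have h2 : Tendsto (NN n α β m w) (nhdsWithin 0 (Ioi 0)) (nhds 0) := by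
      have := hNc.tendsto 0
      rw [h0] at this
      exact this.mono_left nhdsWithin_le_nhds
    refine h2.congr' ?_
    filter_upwards [self_mem_nhdsWithin] with r hr using (hd r hr).deriv.symm

lemma back_exp {n : ℕ} (hn : 3 ≤ n) {α β w0 m : ℝ} {w : ℝ → ℝ}
    (hs : ∀ R, Sol n α β w0 m R w) :
    (∀ r ∈ Set.Ici (0:ℝ), 0 < exp (w r)) ∧ ContinuousOn (fun r => exp (w r)) (Ici 0) ∧
    ContDiffOn ℝ 2 (fun r => exp (w r)) (Ioi 0) ∧
    HasDerivWithinAt (fun r => exp (w r)) 0 (Ici 0) 0 := by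
  obtain ⟨_, h2, h3⟩ := back_facts hn hs
  have hw : Continuous w := (hs 0).1
  refine ⟨fun r _ => exp_pos _, by fun_prop, h2.exp, ?_⟩
  simpa using h3.exp

/-- the limit equation -/
lemma back_zero {n : ℕ} (hn : 3 ≤ n) {α β w0 : ℝ} {w : ℝ → ℝ}
    (hs : ∀ R, Sol n α β w0 0 R w) : ∀ r ∈ Set.Ioi (0:ℝ),
        ((n : ℝ) - 1) * (deriv (deriv (fun s => Real.log (exp (w s)))) r
          + (((n : ℝ) - 1) / r) * deriv (fun s => Real.log (exp (w s))) r)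
        + α * exp (w r) + β * r * deriv (fun s => exp (w s)) r = 0 := by
  obtain ⟨hd, -, -⟩ := back_facts hn hs
  have hw : Continuous w := (hs 0).1
  intro r hr
  have hr0 : 0 < r := hr
  simp only [Real.log_exp]
  have e1 : NN n α β 0 w = Bk n α β w := by funext t; simp [NN]
  rw [e1] at hd
  have h1 : deriv w =ᶠ[nhds r] Bk n α β w := by
    filter_upwards [lt_mem_nhds hr0] with t ht using (hd t ht).deriv
  have h2 := Bk_deriv hn α β hw hr0 (hd r hr0)
  rw [h1.deriv_eq, h2.deriv, (hd r hr0).deriv, ((hd r hr0).exp).deriv]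
  have h3 : (n : ℝ) - 1 ≠ 0 := by
    have : (3:ℝ) ≤ n := by exact_mod_cast hn
    linarith
  field_simp
  ring

lemma back_pos {n : ℕ} (hn : 3 ≤ n) {α β η m : ℝ} (hη : 0 < η) (hm : 0 < m) {w : ℝ → ℝ}
    (hs : ∀ R, Sol n α β (log η) m R w) : IsRadialSol n m α β η (fun r => exp (w r)) := by
  obtain ⟨h1, h2, h3, h4⟩ := back_exp hn hs
  refine ⟨h1, h2, h3, h4, by
    show exp (w 0) = η
    rw [(hs 0).2.1, exp_log hη], ?_⟩
  obtain ⟨hd, -, -⟩ := back_facts hn hs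
  have hw : Continuous w := (hs 0).1
  intro r hr
  have hr0 : 0 < r := hr
  have e0 : (fun s => exp (w s) ^ m) = fun s => exp (m * w s) := by
    funext s; rw [← exp_mul, mul_comm]
  have hdm : ∀ t > 0, HasDerivAt (fun s => exp (m * w s)) (m * Bk n α β w t) t := by
    intro t ht
    refine (((hd t ht).const_mul m).exp).congr_deriv ?_
    have : exp (m * w t) * exp (-(m * w t)) = 1 := by rw [← exp_add]; simp
    unfold NN
    linear_combination (m * Bk n α β w t) * this
  rw [e0]
  have h1 : deriv (fun s => exp (m * w s)) =ᶠ[nhds r] fun t => m * Bk n α β w t := by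
    filter_upwards [lt_mem_nhds hr0] with t ht using (hdm t ht).deriv
  have h2 := (Bk_deriv hn α β hw hr0 (hd r hr0)).const_mul m
  rw [h1.deriv_eq, h2.deriv, (hdm r hr0).deriv, ((hd r hr0).exp).deriv]
  have h3 : (n : ℝ) - 1 ≠ 0 := by
    have : (3:ℝ) ≤ n := by exact_mod_cast hn
    linarith
  field_simp
  ring

lemma forward {n : ℕ} (hn : 3 ≤ n) {α β η m : ℝ} (hm : 0 < m) {v : ℝ → ℝ}
    (hv : IsRadialSol n m α β η v) :
    ∀ R, Sol n α β (log η) m R (fun r => log (v (max r 0))) := by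
  obtain ⟨hpos, hc, hC2, hd0, h0, heq⟩ := hv
  set w : ℝ → ℝ := fun r => log (v (max r 0)) with hwdef
  have hvc : Continuous fun r => v (max r 0) :=
    hc.comp_continuous (continuous_id.max continuous_const) (fun r => mem_Ici.mpr (le_max_right _ _))
  have hw : Continuous w := hvc.log (fun r => (hpos _ (mem_Ici.mpr (le_max_right _ _))).ne')
  have hwe : ∀ r ≥ 0, exp (w r) = v r := by
    intro r hr
    show exp (log (v (max r 0))) = v r
    rw [max_eq_left hr, exp_log (hpos r hr)]
  have h3 : (n : ℝ) - 1 ≠ 0 := by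
    have : (3:ℝ) ≤ n := by exact_mod_cast hn
    linarith
  have hvd : ∀ r > 0, HasDerivAt v (deriv v r) r := fun r hr =>
    ((hC2.contDiffAt (Ioi_mem_nhds hr)).differentiableAt (by norm_num)).hasDerivAt
  have hwd : ∀ r > 0, HasDerivAt w (deriv v r / v r) r := by
    intro r hr
    refine ((hvd r hr).log (hpos r hr.le).ne').congr_of_eventuallyEq ?_
    filter_upwards [lt_mem_nhds hr] with t ht
    show log (v (max t 0)) = _
    rw [max_eq_left ht.le]
  set P : ℝ → ℝ := fun s => v s ^ m with hP
  have hPC : ContDiffOn ℝ 2 P (Ioi 0) :=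
    hC2.rpow_const_of_ne (fun r hr => (hpos r (Ioi_subset_Ici_self hr)).ne')
  have hPd : ∀ r > 0, HasDerivAt P (deriv P r) r := fun r hr =>
    ((hPC.contDiffAt (Ioi_mem_nhds hr)).differentiableAt (by norm_num)).hasDerivAt
  have hFd : ∀ r > 0, HasDerivAt (deriv P) (deriv (deriv P) r) r := by
    intro r hr
    have : ContDiffOn ℝ (1 + 1) P (Ioi 0) := by rw [one_add_one_eq_two]; exact hPC
    rw [contDiffOn_succ_iff_deriv_of_isOpen isOpen_Ioi] at this
    exact ((this.2.2.contDiffAt (Ioi_mem_nhds hr)).differentiableAt (by norm_num)).hasDerivAt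
  -- first integral
  set Ψ : ℝ → ℝ := fun r => r ^ (n - 1) * (deriv P r) / m - r ^ (n - 1) * Bk n α β w r with hΨ
  have hΨd : ∀ r > 0, HasDerivAt Ψ 0 r := by
    intro r hr
    have h1 := (((hasDerivAt_pow (n - 1) r).mul (hFd r hr)).div_const m).sub
      (gB_deriv hn α β hw (hwd r hr))
    refine h1.congr_deriv ?_
    have e := heq r hr
    have e1 : r ^ (n - 1) = r * r ^ (n - 1 - 1) := by
      rw [← pow_succ']; congr 1; omega
    have e2 : ((n - 1 : ℕ) : ℝ) = (n : ℝ) - 1 := by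
      rw [Nat.cast_sub (by omega)]; simp
    rw [e1, e2, hwe r hr.le]
    have hv0 := (hpos r hr.le).ne'
    have hr' := hr.ne'
    field_simp at e ⊢
    linear_combination (r ^ (n - 1 - 1)) * e
  obtain ⟨C, hC⟩ : ∃ C, ∀ r ∈ Ioi (0:ℝ), Ψ r = C :=
    isOpen_Ioi.exists_is_const_of_deriv_eq_zero isPreconnected_Ioi
      (fun r hr => (hΨd r hr).differentiableAt.differentiableWithinAt)
      (fun r hr => (hΨd r hr).deriv)
  have hBc := Bk_cont n α β hw
  have hCz : C = 0 := by
    have hP0 : HasDerivWithinAt P 0 (Ici 0) 0 := by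
      have := hd0.rpow_const (p := m) (Or.inl (hpos 0 self_mem_Ici).ne')
      simpa using this
    have hsm : ∀ᶠ r in nhdsWithin (0:ℝ) (Ici 0), |P r - P 0| ≤ 1 * |r - 0| := by
      have := hP0.isLittleO.def (c := 1) one_pos
      simpa using this
    have key : ∀ δ > 0, |C| ≤ δ := by
      intro δ hδ
      have hcont : Continuous fun s => s * (1 / m + |Bk n α β w s|) := by fun_prop
      have hev : ∀ᶠ s in nhds (0:ℝ), s * (1 / m + |Bk n α β w s|) < δ :=
        hcont.continuousAt.eventually_lt_const (by simpa using hδ)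
      obtain ⟨ρ, hρ, hb⟩ := Metric.eventually_nhds_iff.mp hev
      obtain ⟨r, h1, h2⟩ := ((hsm.filter_mono (nhdsWithin_mono _ Ioi_subset_Ici_self)).and
        (Ioo_mem_nhdsGT (lt_min hρ one_pos))).exists
      have hPc : ContinuousOn P (Icc 0 r) := by
        refine ContinuousOn.rpow_const (hc.mono Icc_subset_Ici_self) ?_
        intro x hx
        exact Or.inl (hpos x hx.1).ne'
      obtain ⟨ξ, hξ, he⟩ := exists_hasDerivAt_eq_slope P (deriv P) h2.1 hPc
        (fun x hx => hPd x hx.1)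
      have hF : |deriv P ξ| ≤ 1 := by
        rw [he, abs_div, sub_zero, abs_of_pos h2.1, div_le_one h2.1]
        rw [sub_zero, abs_of_pos h2.1, one_mul] at h1
        exact h1
      have hξ1 : ξ < 1 := hξ.2.trans (h2.2.trans_le (min_le_right _ _))
      have hξρ : ξ < ρ := hξ.2.trans (h2.2.trans_le (min_le_left _ _))
      have hb' := hb (y := ξ) (by rw [Real.dist_eq, sub_zero, abs_of_pos hξ.1]; exact hξρ)
      have hpow : ξ ^ (n - 1) ≤ ξ := by
        calc ξ ^ (n - 1) ≤ ξ ^ 1 := pow_le_pow_of_le_one hξ.1.le hξ1.le (by omega)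
          _ = ξ := pow_one _
      have hξ0 := hξ.1
      rw [← hC ξ hξ.1]
      have e : Ψ ξ = ξ ^ (n - 1) * (deriv P ξ / m - Bk n α β w ξ) := by
        rw [hΨ]; ring
      rw [e, abs_mul, abs_of_pos (pow_pos hξ.1 _)]
      refine le_trans ?_ hb'.le
      have h5 : |deriv P ξ / m - Bk n α β w ξ| ≤ 1 / m + |Bk n α β w ξ| := by
        refine (abs_sub _ _).trans ?_
        rw [abs_div, abs_of_pos hm]
        gcongr
      gcongr
    have : |C| ≤ 0 := le_of_forall_pos_le_add (fun δ hδ => by simpa using key δ hδ)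
    exact abs_nonpos_iff.mp this
  intro R
  refine ⟨hw, ?_, ?_⟩
  · show log (v (max 0 0)) = log η
    rw [max_self, h0]
  · intro r hr
    have hr0 := hr.1
    refine (hwd r hr0).congr_deriv ?_
    have e := hC r hr0
    rw [hCz, hΨ] at e
    have hB : deriv P r = m * Bk n α β w r := by
      have hp : r ^ (n - 1) ≠ 0 := by positivity
      field_simp at e
      rw [mul_zero] at e
      exact sub_eq_zero.mp ((mul_eq_zero.mp e).resolve_left hp)
    have hP' : deriv P r = m * (exp (m * w r) * (deriv v r / v r)) := by
      have h7 := (((hwd r hr0).const_mul m).exp).congr_of_eventuallyEq (f₁ := P) (by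
        filter_upwards [lt_mem_nhds hr0] with t ht
        show v t ^ m = _
        rw [← hwe t ht.le, ← exp_mul, mul_comm])
      rw [h7.deriv]; ring
    have h8 : exp (m * w r) * (deriv v r / v r) = Bk n α β w r := by
      apply mul_left_cancel₀ hm.ne'
      rw [← hP', hB]
    unfold NN
    rw [← h8, ← mul_assoc, ← exp_add]
    simp

end RS

theorem stmt2 (n : ℕ) (hn : 3 ≤ n) (α β η : ℝ) (hη : 0 < η)
    (hαβ : 0 < β ∨ α = 0)
    (V : ℝ → ℝ → ℝ)
    (hV : ∀ m ∈ Set.Ioc (0:ℝ) (((n : ℝ) - 2) / n),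
      (∃ v : ℝ → ℝ, IsRadialSol n m α β η v) → IsRadialSol n m α β η (V m)) :
    ∃ u : ℝ → ℝ,
      (∀ r ∈ Set.Ici (0:ℝ), 0 < u r) ∧
      ContinuousOn u (Set.Ici (0:ℝ)) ∧
      ContDiffOn ℝ 2 u (Set.Ioi (0:ℝ)) ∧
      u 0 = η ∧
      HasDerivWithinAt u 0 (Set.Ici (0:ℝ)) 0 ∧
      (∀ r ∈ Set.Ioi (0:ℝ),
        ((n : ℝ) - 1) * (deriv (deriv (fun s => Real.log (u s))) r
          + (((n : ℝ) - 1) / r) * deriv (fun s => Real.log (u s)) r)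
        + α * u r + β * r * deriv u r = 0) ∧
      (∀ K : Set ℝ, K ⊆ Set.Ici (0:ℝ) → IsCompact K →
        TendstoUniformlyOn V u (nhdsWithin (0:ℝ) (Set.Ioi (0:ℝ))) K) := by
  have hn' : (3:ℝ) ≤ n := by exact_mod_cast hn
  have hm0 : 0 < ((n:ℝ) - 2) / n := by apply div_pos <;> linarith
  have hm01 : ((n:ℝ) - 2) / n ≤ 1 := by rw [div_le_one (by linarith)]; linarith
  have hKb : ∀ K : Set ℝ, K ⊆ Set.Ici (0:ℝ) → IsCompact K → ∃ R : ℝ, 0 ≤ R ∧ K ⊆ Icc 0 R := by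
    intro K hK hKc
    obtain ⟨R, hR⟩ := hKc.bddAbove
    exact ⟨max R 0, le_max_right _ _, fun x hx => ⟨hK hx, (hR hx).trans (le_max_left _ _)⟩⟩
  have hVe : ∀ m ∈ Set.Ioc (0:ℝ) (((n : ℝ) - 2) / n),
      IsRadialSol n m α β η (V m) → ∀ r ≥ 0, V m r = exp (log (V m (max r 0))) := by
    intro m _ h r hr
    rw [max_eq_left hr, exp_log (h.1 r hr)]
  by_cases hα : α = 0
  · -- constant solutions
    have hconst : ∀ m R, RS.Sol n α β (log η) m R (fun _ => log η) := by
      intro m R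
      refine ⟨continuous_const, rfl, fun r hr => ?_⟩
      have e : RS.NN n α β m (fun _ => log η) r = 0 := by
        have hJ : RS.Jb n (fun _ => log η) r = exp (log η) / n := by
          unfold RS.Jb
          rw [intervalIntegral.integral_mul_const, integral_pow]
          have e2 : ((n - 1 : ℕ) : ℝ) + 1 = n := by
            rw [Nat.cast_sub (by omega)]; simp
          rw [e2, Nat.sub_add_cancel (by omega)]
          simp [show n ≠ 0 by omega]
          ring
        unfold RS.NN RS.Bk
        rw [hJ, hα]
        have : (n:ℝ) ≠ 0 := by linarith
        field_simp
        ring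
      rw [e]
      exact hasDerivAt_const r _
    have hb := RS.back_exp hn (hconst 0)
    have hz := RS.back_zero hn (hconst 0)
    refine ⟨fun r => exp (log η), hb.1, hb.2.1, hb.2.2.1, exp_log hη, hb.2.2.2, hz, ?_⟩
    intro K hK hKc
    rw [Metric.tendstoUniformlyOn_iff]
    intro ε hε
    filter_upwards [Ioc_mem_nhdsGT hm0] with m hm x hx
    have hsol := hV m hm ⟨_, RS.back_pos hn hη hm.1 (hconst m)⟩
    have hx0 : 0 ≤ x := hK hx
    have := RS.sol_unique hn α β (log η) ⟨hm.1.le, hm.2.trans hm01⟩ (hconst m x)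
      (RS.forward hn hm.1 hsol x) x ⟨hx0, le_refl _⟩
    rw [hVe m hm hsol x hx0, ← this]
    simpa using hε
  · have hβ : 0 < β := hαβ.resolve_right hα
    have hsmall : ∀ᶠ m in nhdsWithin (0:ℝ) (Ioi 0), m * α < ((n:ℝ) - 2) * β := by
      have hc : Continuous fun m : ℝ => m * α := by fun_prop
      refine (hc.continuousAt.eventually_lt_const ?_).filter_mono nhdsWithin_le_nhds
      beta_reduce
      rw [zero_mul]
      apply mul_pos _ hβ
      linarith
    have hz0 : (0:ℝ) * α < ((n:ℝ) - 2) * β := by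
      rw [zero_mul]
      apply mul_pos _ hβ
      linarith
    obtain ⟨w, hw⟩ := RS.exist_all hn (log η) hα hβ (m := 0) ⟨le_refl _, zero_le_one⟩ hz0
    obtain ⟨κ, hκ, hap⟩ := RS.apriori hn (log η) hα hβ
    have hb := RS.back_exp hn hw
    have hz := RS.back_zero hn hw
    refine ⟨fun r => exp (w r), hb.1, hb.2.1, hb.2.2.1, by
      show exp (w 0) = η
      rw [(hw 0).2.1, exp_log hη],
      hb.2.2.2, hz, ?_⟩
    intro K hK hKc
    obtain ⟨R, hR, hKR⟩ := hKb K hK hKc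
    set L := |log η| + 1 + κ * R with hL
    obtain ⟨C, hC0, hC⟩ := RS.stab hn α β (log η) (L := L) hR
    rw [Metric.tendstoUniformlyOn_iff]
    intro ε hε
    have hsm2 : ∀ᶠ m in nhdsWithin (0:ℝ) (Ioi 0), exp L * (C * |0 - m|) < ε := by
      have hc : Continuous fun m : ℝ => exp L * (C * |0 - m|) := by fun_prop
      refine (hc.continuousAt.eventually_lt_const ?_).filter_mono nhdsWithin_le_nhds
      simpa using hε
    filter_upwards [Ioc_mem_nhdsGT hm0, hsmall, hsm2] with m hm hmα hmε x hx
    have hm1 : m ∈ Icc (0:ℝ) 1 := ⟨hm.1.le, hm.2.trans hm01⟩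
    obtain ⟨w', hw'⟩ := RS.exist_all hn (log η) hα hβ hm1 hmα
    have hsol := hV m hm ⟨_, RS.back_pos hn hη hm.1 hw'⟩
    have hf := RS.forward hn hm.1 hsol R
    have hx0 : 0 ≤ x := hK hx
    have hbd1 := hap 0 ⟨le_refl _, zero_le_one⟩ hz0 R w (hw R)
    have hbd2 := hap m hm1 hmα R _ hf
    have hst := hC 0 ⟨le_refl _, zero_le_one⟩ m hm1 _ _ (hw R) hf hbd1 hbd2 x (hKR hx)
    rw [hVe m hm hsol x hx0, Real.dist_eq]
    refine lt_of_le_of_lt ?_ hmε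
    refine (RS.exp_lip ((le_abs_self _).trans (hbd1 x (hKR hx)))
      ((le_abs_self _).trans (hbd2 x (hKR hx)))).trans ?_
    gcongr
end

section
/- Let n ≥ 3 be an integer, let η > 0, and let m, α, β satisfy 0 < m ≤ (n−2)/n and 2β/(1−m) ≥ α > 0. Let v be a radial solution of (E) on [0,∞). Then h(r) = v(r) + ((1−m)/2)·r·v'(r) > 0 for all r ≥ 0, and the function w(r) = r²·v(r)^{1−m} satisfies w'(r) > 0 for all r > 0. -/
open Real Set

lemma aux_algebra (N m α β r V D E X : ℝ) (hN : 3 ≤ N) (hm : 0 < m) (hm1 : m < 1)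
    (hmN : m * N ≤ N - 2) (hαβ : α * (1 - m) ≤ 2 * β) (hr : 0 < r) (hV : 0 < V) (hX : 0 < X)
    (ode : ((N - 1) / m) * ((E * m * X + D * m * ((m - 1) * (X / V) * D))
      + ((N - 1) / r) * (D * m * X)) + α * V + β * r * D = 0) :
    0 ≤ ((1 * D + r * E) * V - r * D * D) / V ^ 2 + (r * D / V + 2 / (1 - m)) *
      ((m * (r * D / V - 2 / (1 - m)) + (N - 2) + r ^ 2 * X⁻¹ * β / (N - 1)) / r) := by
  have h1 : 0 < 1 - m := by linarith
  have hN1 : 0 < N - 1 := by linarith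
  have hE : E = -(m - 1) * D ^ 2 / V - (N - 1) * D / r - X⁻¹ * (α * V + β * r * D) / (N - 1) := by
    field_simp at ode ⊢
    linear_combination ode
  have key : ((1 * D + r * E) * V - r * D * D) / V ^ 2 + (r * D / V + 2 / (1 - m)) *
      ((m * (r * D / V - 2 / (1 - m)) + (N - 2) + r ^ 2 * X⁻¹ * β / (N - 1)) / r)
      = (2 * ((N - 2) - m * N) / (1 - m) ^ 2
        + r ^ 2 * X⁻¹ * (2 * β - α * (1 - m)) / ((1 - m) * (N - 1))) / r := by
    rw [hE]
    field_simp
    ring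
  rw [key]
  have a1 : 0 ≤ (N - 2) - m * N := by linarith
  have a2 : 0 ≤ 2 * β - α * (1 - m) := by linarith
  positivity

lemma aux_gronwall (p p' A : ℝ → ℝ) (a b : ℝ) (ha : 0 < a) (hab : a ≤ b)
    (hp : ∀ r, 0 < r → HasDerivAt p (p' r) r) (hA : ContinuousOn A (Ioi 0))
    (hineq : ∀ r, 0 < r → 0 ≤ p' r + p r * A r) (hpa : 0 < p a) : 0 < p b := by
  have hI : ∀ x, 0 < x → HasDerivAt (fun y => ∫ t in a..y, A t) (A x) x := by
    intro x hx
    have hsub : uIcc a x ⊆ Ioi 0 := fun y hy => lt_of_lt_of_le (lt_min ha hx) hy.1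
    apply intervalIntegral.integral_hasDerivAt_right
    · exact (hA.mono hsub).intervalIntegrable
    · exact hA.stronglyMeasurableAtFilter isOpen_Ioi x hx
    · exact hA.continuousAt (isOpen_Ioi.mem_nhds hx)
  have hd : ∀ x, 0 < x → HasDerivAt (fun y => p y * exp (∫ t in a..y, A t))
      (p' x * exp (∫ t in a..x, A t) + p x * (exp (∫ t in a..x, A t) * A x)) x :=
    fun x hx => (hp x hx).mul (hI x hx).exp
  have hmono : MonotoneOn (fun y => p y * exp (∫ t in a..y, A t)) (Ioi 0) := by
    apply monotoneOn_of_deriv_nonneg (convex_Ioi 0)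
    · exact fun x hx => (hd x hx).continuousAt.continuousWithinAt
    · rw [interior_Ioi]
      exact fun x hx => (hd x hx).differentiableAt.differentiableWithinAt
    · rw [interior_Ioi]
      intro x hx
      rw [(hd x hx).deriv]
      have := mul_nonneg (hineq x hx) (exp_pos (∫ t in a..x, A t)).le
      linarith
  have h := hmono ha (lt_of_lt_of_le ha hab : (0:ℝ) < b) hab
  simp only [intervalIntegral.integral_same, exp_zero, mul_one] at h
  exact pos_of_mul_pos_left (lt_of_lt_of_le hpa h) (exp_pos _).le

theorem stmt3 (n : ℕ) (hn : 3 ≤ n) (m α β η : ℝ) (hη : 0 < η)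
    (hm : 0 < m) (hm' : m ≤ ((n : ℝ) - 2) / n)
    (hα : 0 < α) (hαβ : α ≤ 2 * β / (1 - m))
    (v : ℝ → ℝ) (hv : IsRadialSol n m α β η v) :
    (∀ r : ℝ, 0 ≤ r → 0 < v r + ((1 - m) / 2) * r * deriv v r) ∧
    (∀ r : ℝ, 0 < r → 0 < deriv (fun s : ℝ => s ^ 2 * v s ^ (1 - m)) r) := by
  obtain ⟨hpos, hcont, hC2, -, hv0, hode⟩ := hv
  have hN : (3:ℝ) ≤ n := by exact_mod_cast hn
  have hN0 : (0:ℝ) < n := by linarith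
  have hmN : m * n ≤ n - 2 := by rwa [le_div_iff₀ hN0] at hm'
  have hm1 : m < 1 := by nlinarith
  have h1 : 0 < 1 - m := by linarith
  have hαβ' : α * (1 - m) ≤ 2 * β := by rwa [le_div_iff₀ h1] at hαβ
  have hvpos : ∀ r, 0 < r → 0 < v r := fun r hr => hpos r hr.le
  have hC1 : ContDiffOn ℝ 1 (deriv v) (Ioi 0) := hC2.deriv_of_isOpen isOpen_Ioi (by norm_num)
  have hD : ∀ r, 0 < r → HasDerivAt v (deriv v r) r := fun r hr =>
    ((hC2.differentiableOn (by norm_num)).differentiableAt (isOpen_Ioi.mem_nhds hr)).hasDerivAt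
  have hE : ∀ r, 0 < r → HasDerivAt (deriv v) (deriv (deriv v) r) r := fun r hr =>
    ((hC1.differentiableOn (by norm_num)).differentiableAt (isOpen_Ioi.mem_nhds hr)).hasDerivAt
  have hpow : ∀ (k : ℝ) r, 0 < r → HasDerivAt (fun s => v s ^ k)
      (deriv v r * k * v r ^ (k - 1)) r := fun k r hr =>
    (hD r hr).rpow_const (Or.inl (hvpos r hr).ne')
  have hode' : ∀ r, 0 < r → (((n:ℝ) - 1) / m) * ((deriv (deriv v) r * m * v r ^ (m - 1)
      + deriv v r * m * ((m - 1) * (v r ^ (m - 1) / v r) * deriv v r))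
      + (((n:ℝ) - 1) / r) * (deriv v r * m * v r ^ (m - 1)))
      + α * v r + β * r * deriv v r = 0 := by
    intro r hr
    have h := hode r hr
    have e : deriv (fun s => v s ^ m) =ᶠ[nhds r]
        fun s => deriv v s * m * v s ^ (m - 1) := by
      filter_upwards [isOpen_Ioi.mem_nhds hr] with s hs
      exact (hpow m s hs).deriv
    have e2 : deriv (fun s => deriv v s * m * v s ^ (m - 1)) r
        = deriv (deriv v) r * m * v r ^ (m - 1)
          + deriv v r * m * (deriv v r * (m - 1) * v r ^ (m - 1 - 1)) :=
      (((hE r hr).mul_const m).mul (hpow (m - 1) r hr)).deriv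
    rw [e.deriv_eq, (hpow m r hr).deriv, e2, rpow_sub_one (hvpos r hr).ne' (m - 1)] at h
    rw [← h]
    ring
  have hcv : ContinuousOn v (Ioi 0) := fun r hr => (hD r hr).continuousAt.continuousWithinAt
  have hcd : ContinuousOn (deriv v) (Ioi 0) := hC1.continuousOn
  let p : ℝ → ℝ := fun r => r * deriv v r / v r + 2 / (1 - m)
  let p' : ℝ → ℝ := fun r =>
    ((1 * deriv v r + r * deriv (deriv v) r) * v r - r * deriv v r * deriv v r) / v r ^ 2
  let A : ℝ → ℝ := fun r => (m * (r * deriv v r / v r - 2 / (1 - m)) + ((n:ℝ) - 2)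
    + r ^ 2 * (v r ^ (m - 1))⁻¹ * β / ((n:ℝ) - 1)) / r
  have hp : ∀ r, 0 < r → HasDerivAt p (p' r) r := fun r hr =>
    ((((hasDerivAt_id r).mul (hE r hr)).div (hD r hr) (hvpos r hr).ne').add_const _)
  have hcp : ContinuousOn (fun r => v r ^ (m - 1)) (Ioi 0) := fun r hr =>
    (hpow (m - 1) r hr).continuousAt.continuousWithinAt
  have hcq : ContinuousOn (fun r => r * deriv v r / v r) (Ioi 0) :=
    (continuousOn_id.mul hcd).div hcv fun r hr => (hvpos r hr).ne'
  have hci : ContinuousOn (fun r => (v r ^ (m - 1))⁻¹) (Ioi 0) :=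
    hcp.inv₀ fun r hr => (rpow_pos_of_pos (hvpos r hr) _).ne'
  have hA : ContinuousOn A (Ioi 0) := by
    refine ContinuousOn.div ?_ continuousOn_id fun r hr => (ne_of_gt hr)
    have := (((continuousOn_const (c := m)).mul (hcq.sub (continuousOn_const (c := 2 / (1 - m))))).add
      (continuousOn_const (c := (n:ℝ) - 2))).add
      ((((continuousOn_id.pow 2).mul hci).mul (continuousOn_const (c := β))).div_const ((n:ℝ) - 1))
    exact this
  have hineq : ∀ r, 0 < r → 0 ≤ p' r + p r * A r := fun r hr =>
    aux_algebra n m α β r (v r) (deriv v r) (deriv (deriv v) r) (v r ^ (m - 1)) hN hm hm1 hmN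
      hαβ' hr (hvpos r hr) (rpow_pos_of_pos (hvpos r hr) _) (hode' r hr)
  have hw : ∀ r, 0 < r → HasDerivAt (fun s : ℝ => s ^ 2 * v s ^ (1 - m))
      (p r * (r * v r ^ (1 - m) * (1 - m))) r := by
    intro r hr
    have h := (hasDerivAt_pow 2 r).mul (hpow (1 - m) r hr)
    refine h.congr_deriv ?_
    have hv := (hvpos r hr).ne'
    rw [rpow_sub_one hv]
    simp only [p]
    field_simp
    ring
  have hfac : ∀ r, 0 < r → 0 < r * v r ^ (1 - m) * (1 - m) := fun r hr =>
    mul_pos (mul_pos hr (rpow_pos_of_pos (hvpos r hr) _)) h1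
  have hppos : ∀ r, 0 < r → 0 < p r := by
    intro R hR
    have hc : ContinuousOn (fun s : ℝ => s ^ 2 * v s ^ (1 - m)) (Icc 0 R) := by
      refine (continuousOn_id.pow 2).mul ?_
      exact (hcont.mono Icc_subset_Ici_self).rpow_const fun x hx => Or.inl (hpos x hx.1).ne'
    obtain ⟨a, ha, hs⟩ := exists_hasDerivAt_eq_slope _ _ hR hc (fun x hx => hw x hx.1)
    have hpa : 0 < p a * (a * v a ^ (1 - m) * (1 - m)) := by
      rw [hs]
      have := rpow_pos_of_pos (hvpos R hR) (1 - m)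
      simp only [ne_eq, OfNat.ofNat_ne_zero, not_false_eq_true, zero_pow, zero_mul, sub_zero]
      positivity
    exact aux_gronwall p p' A a R ha.1 ha.2.le hp hA hineq
      (pos_of_mul_pos_left hpa (hfac a ha.1).le)
  refine ⟨fun r hr => ?_, fun r hr => ?_⟩
  · rcases hr.eq_or_lt with rfl | hr
    · simpa using hpos 0 self_mem_Ici
    · have h := mul_pos (hppos r hr) (mul_pos (hvpos r hr) h1)
      have hv := (hvpos r hr).ne'
      have e : p r * (v r * (1 - m)) = 2 * (v r + ((1 - m) / 2) * r * deriv v r) := by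
        simp only [p]
        field_simp
        ring
      linarith
  · rw [(hw r hr).deriv]
    exact mul_pos (hppos r hr) (hfac r hr)
end

section
/- Let n ≥ 3 be an integer, let η > 0, and let m, α, β satisfy 0 < m < (n−2)/n, β > 0, and α = 2β/(1−m). Let v be a radial solution of (E) on [0,∞) and set w(r) = r²·v(r)^{1−m}. Then there exist constants C₁ > 0, C₂ > 0, C₃ > 0 such that r·w'(r)/w(r) ≤ C₁ for all r > 0, and C₂ ≤ r·w'(r) ≤ C₃ for all r ≥ 1. Moreover w(r) → ∞ as r → ∞. -/
open Real Set Filter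

/-- Forward barrier: a function lying below `c` at `a` whose derivative is negative at contact
stays below `c`. -/
lemma barrier_le (f f' : ℝ → ℝ) (a b c : ℝ) (ha : 0 < a) (hab : a ≤ b)
    (hf : ∀ r, 0 < r → HasDerivAt f (f' r) r) (h0 : f a ≤ c)
    (hc : ∀ r, a ≤ r → f r = c → f' r < 0) : f b ≤ c := by
  have := image_le_of_deriv_right_lt_deriv_boundary' (f := f) (f' := f') (a := a) (b := b)
    (B := fun _ => c) (B' := fun _ => 0)
    (fun x hx => (hf x (lt_of_lt_of_le ha hx.1)).continuousAt.continuousWithinAt)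
    (fun x hx => (hf x (lt_of_lt_of_le ha hx.1)).hasDerivWithinAt) h0
    continuousOn_const (fun x _ => hasDerivWithinAt_const _ _ _)
    (fun x hx h => hc x hx.1 h)
  exact this ⟨hab, le_rfl⟩

lemma mono_of_deriv (f f' : ℝ → ℝ) (a b : ℝ) (ha : 0 < a) (hab : a ≤ b)
    (hf : ∀ r, 0 < r → HasDerivAt f (f' r) r)
    (hc : ∀ r, a ≤ r → r ≤ b → 0 ≤ f' r) : f a ≤ f b := by
  have : MonotoneOn f (Icc a b) := by
    apply monotoneOn_of_deriv_nonneg (convex_Icc a b)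
    · exact fun x hx => (hf x (lt_of_lt_of_le ha hx.1)).continuousAt.continuousWithinAt
    · intro x hx
      rw [interior_Icc] at hx
      exact (hf x (ha.trans hx.1)).differentiableAt.differentiableWithinAt
    · intro x hx
      rw [interior_Icc] at hx
      rw [(hf x (ha.trans hx.1)).deriv]
      exact hc x hx.1.le hx.2.le
  exact this ⟨le_rfl, hab⟩ ⟨hab, le_rfl⟩ hab

lemma core (k N b L : ℝ) (hk : 0 < k) (hN : 0 < N) (hb : 0 < b) (hL : 0 < L)
    (hA : 0 < 2 * N - 4 * k) (w q : ℝ → ℝ) (hwpos : ∀ r, 0 < r → 0 < w r)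
    (hwd : ∀ r, 0 < r → HasDerivAt w (w r * q r / r) r)
    (hqd : ∀ r, 0 < r → HasDerivAt q
      ((-k * (q r - 2) ^ 2 - N * (q r - 2) - b * w r * q r) / r) r)
    (hw0 : Tendsto w (nhdsWithin 0 (Ioi 0)) (nhds 0))
    (hwL : Tendsto (fun r => w r / r ^ 2) (nhdsWithin 0 (Ioi 0)) (nhds L)) :
    (∃ C₁ > (0:ℝ), ∃ C₂ > (0:ℝ), ∃ C₃ > (0:ℝ),
      (∀ r : ℝ, 0 < r → r * deriv w r / w r ≤ C₁) ∧
      (∀ r : ℝ, 1 ≤ r → C₂ ≤ r * deriv w r ∧ r * deriv w r ≤ C₃)) ∧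
    Tendsto w atTop atTop := by
  -- q ≥ 0
  have hq0 : ∀ r, 0 < r → 0 ≤ q r := by
    intro r0 hr0
    by_contra! hneg
    have h1 : ∀ r, 0 < r → r ≤ r0 → q r ≤ 0 := by
      intro r hr hrr
      by_contra! hpos
      have := barrier_le (fun r => - q r) _ r r0 0 hr hrr (fun r hr => (hqd r hr).neg)
        (by linarith) (by
          intro s hs hs0
          have hs' : q s = 0 := by linarith
          have hspos : 0 < s := by linarith
          rw [hs']
          have : 0 < (-k * (0 - 2) ^ 2 - N * (0 - 2) - b * w s * 0) / s := by
            apply div_pos _ hspos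
            nlinarith
          linarith)
      linarith
    have h2 : ∀ r, 0 < r → r ≤ r0 → w r0 ≤ w r := by
      intro r hr hrr
      have := mono_of_deriv (fun r => - w r) _ r r0 hr hrr (fun r hr => (hwd r hr).neg)
        (by
          intro s hs hs0
          have hspos : 0 < s := by linarith
          have : w s * q s / s ≤ 0 := by
            apply div_nonpos_of_nonpos_of_nonneg _ hspos.le
            exact mul_nonpos_of_nonneg_of_nonpos (hwpos s hspos).le (h1 s hspos hs0)
          linarith)
      linarith
    have h3 : w r0 ≤ 0 := by
      apply ge_of_tendsto hw0
      filter_upwards [Ioo_mem_nhdsGT hr0] with r hr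
      exact h2 r hr.1 hr.2.le
    linarith [hwpos r0 hr0]
  -- q ≤ 2
  have hq2 : ∀ r, 0 < r → q r ≤ 2 := by
    intro r0 hr0
    by_contra! hgt
    obtain ⟨c, hc2, hc⟩ := exists_between hgt
    have h1 : ∀ r, 0 < r → r ≤ r0 → c ≤ q r := by
      intro r hr hrr
      by_contra! hlt
      have := barrier_le q _ r r0 c hr hrr hqd hlt.le (by
          intro s hs hs0
          have hspos : 0 < s := by linarith
          rw [hs0]
          apply div_neg_of_neg_of_pos _ hspos
          have e1 : 0 < N * (c - 2) := mul_pos hN (by linarith)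
          have e2 : 0 < b * w s * c := mul_pos (mul_pos hb (hwpos s hspos)) (by linarith)
          have e3 : 0 ≤ k * (c - 2) ^ 2 := by positivity
          linarith)
      linarith
    have h2 : ∀ r, 0 < r → r ≤ r0 → w r * r ^ (-c) ≤ w r0 * r0 ^ (-c) := by
      intro r hr hrr
      apply mono_of_deriv (fun r => w r * r ^ (-c)) _ r r0 hr hrr
        (fun r hr => (hwd r hr).mul (Real.hasDerivAt_rpow_const (p := -c) (Or.inl hr.ne')))
      intro s hs hs0
      have hspos : 0 < s := by linarith
      rw [Real.rpow_sub_one hspos.ne']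
      have : w s * q s / s * s ^ (-c) + w s * (-c * (s ^ (-c) / s))
        = w s * s ^ (-c) * (q s - c) / s := by field_simp; ring
      rw [this]
      have := hwpos s hspos
      have := h1 s hspos hs0
      have : 0 ≤ q s - c := by linarith
      positivity
    have h3 : Tendsto (fun r : ℝ => w r0 * r0 ^ (-c) * r ^ (c - 2)) (nhdsWithin 0 (Ioi 0))
        (nhds 0) := by
      have : Tendsto (fun r : ℝ => r ^ (c - 2)) (nhdsWithin 0 (Ioi 0)) (nhds 0) := by
        have := (Real.continuousAt_rpow_const 0 (c - 2) (Or.inr (by linarith))).tendsto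
        rw [Real.zero_rpow (by linarith)] at this
        exact this.mono_left nhdsWithin_le_nhds
      simpa using this.const_mul (w r0 * r0 ^ (-c))
    have h4 : L ≤ 0 := by
      apply le_of_tendsto_of_tendsto hwL h3
      filter_upwards [Ioo_mem_nhdsGT hr0] with r hr
      have := h2 r hr.1 hr.2.le
      have e : w r / r ^ 2 = w r * r ^ (-c) * r ^ (c - 2) := by
        rw [mul_assoc, ← Real.rpow_add hr.1, div_eq_mul_inv]
        congr 1
        rw [show -c + (c - 2) = -(2:ℝ) by ring, Real.rpow_neg hr.1.le]
        norm_num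
      simp only [e]
      exact mul_le_mul_of_nonneg_right this (Real.rpow_nonneg hr.1.le _)
    linarith
  have hq1 : 0 < q 1 := by
    rcases (hq0 1 one_pos).lt_or_eq with h | h
    · exact h
    exfalso
    have hmin : IsLocalMin q 1 := by
      filter_upwards [Ioi_mem_nhds (zero_lt_one (α := ℝ))] with r hr
      rw [← h]; exact hq0 r hr
    have := hmin.hasDerivAt_eq_zero (hqd 1 one_pos)
    rw [← h] at this
    norm_num at this
    linarith
  have hyd : ∀ r, 0 < r → HasDerivAt (fun r => w r * q r)
      (w r * ((2 * N - 4 * k) + (4 * k - N) * q r + (1 - k) * q r ^ 2 - b * (w r * q r)) / r) r := by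
    intro r hr
    refine ((hwd r hr).mul (hqd r hr)).congr_deriv ?_
    field_simp
    ring
  have hwm : ∀ r, 1 ≤ r → w 1 ≤ w r := by
    intro r hr
    apply mono_of_deriv w _ 1 r one_pos hr hwd
    intro s hs _
    have hs : 0 < s := by linarith
    have := hwpos s hs
    have := hq0 s hs
    positivity
  have hw1 := hwpos 1 one_pos
  set D := |4 * k - N| + 2 * |1 - k| with hD
  have hD0 : 0 ≤ D := by positivity
  have hG : ∀ r, 0 < r → |(4 * k - N) * q r + (1 - k) * q r ^ 2| ≤ D * q r := by
    intro r hr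
    have h0 := hq0 r hr
    have h2 := hq2 r hr
    calc _ ≤ |(4 * k - N) * q r| + |(1 - k) * q r ^ 2| := abs_add_le _ _
      _ = |4 * k - N| * q r + |1 - k| * (q r * q r) := by
        rw [abs_mul, abs_mul, abs_of_nonneg h0, abs_of_nonneg (sq_nonneg (q r))]; ring
      _ ≤ |4 * k - N| * q r + |1 - k| * (2 * q r) := by gcongr
      _ = D * q r := by rw [hD]; ring
  set A := 2 * N - 4 * k with hAdef
  -- upper bound
  have hup : ∀ r, 1 ≤ r → w r * q r ≤ max (w 1 * q 1) ((A + 2 * D + 1) / b) := by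
    intro r hr
    apply barrier_le (fun r => w r * q r) _ 1 r _ one_pos hr hyd (le_max_left _ _)
    intro s hs h
    have hspos : 0 < s := by linarith
    have hy : (A + 2 * D + 1) / b ≤ w s * q s := by
      change w s * q s = _ at h; rw [h]; exact le_max_right _ _
    rw [div_le_iff₀ hb] at hy
    apply div_neg_of_neg_of_pos _ hspos
    apply mul_neg_of_pos_of_neg (hwpos s hspos)
    have := (abs_le.1 (hG s hspos)).2
    have : D * q s ≤ D * 2 := by gcongr; exact hq2 s hspos
    linarith
  -- lower bound
  set δ := A / (2 * (D / w 1 + b)) with hδ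
  have hden : 0 < D / w 1 + b := by positivity
  have hδ0 : 0 < δ := by positivity
  have hC2 : 0 < min (w 1 * q 1) δ := lt_min (by positivity) hδ0
  have hlow : ∀ r, 1 ≤ r → min (w 1 * q 1) δ ≤ w r * q r := by
    intro r hr
    have := barrier_le (fun r => - (w r * q r)) _ 1 r (- min (w 1 * q 1) δ) one_pos hr
      (fun r hr => (hyd r hr).neg) (neg_le_neg (min_le_left _ _)) (by
      intro s hs h
      have hspos : 0 < s := by linarith
      have hy : w s * q s ≤ δ := by
        have h' : w s * q s = min (w 1 * q 1) δ := neg_injective h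
        rw [h']; exact min_le_right _ _
      rw [neg_lt_zero]
      apply div_pos _ hspos
      apply mul_pos (hwpos s hspos)
      have h1 := (abs_le.1 (hG s hspos)).1
      have h2 : q s ≤ δ / w 1 := by
        rw [le_div_iff₀ hw1]
        have := mul_le_mul_of_nonneg_right (hwm s hs) (hq0 s hspos)
        linarith
      have h3 : D * q s ≤ D * (δ / w 1) := by gcongr
      have h4 : b * (w s * q s) ≤ b * δ := by gcongr
      have h5 : D * (δ / w 1) + b * δ = A / 2 := by
        have : D * (δ / w 1) + b * δ = (D / w 1 + b) * δ := by ring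
        rw [this, hδ]
        field_simp
      linarith)
    linarith
  have hrd : ∀ r, 0 < r → r * deriv w r = w r * q r := by
    intro r hr
    rw [(hwd r hr).deriv]
    field_simp
  refine ⟨⟨2, two_pos, _, hC2, _, lt_of_lt_of_le (by positivity : 0 < w 1 * q 1) (le_max_left _ ((A + 2 * D + 1) / b)), ?_, ?_⟩, ?_⟩
  · intro r hr
    rw [hrd r hr, mul_div_cancel_left₀ _ (hwpos r hr).ne']
    exact hq2 r hr
  · intro r hr
    rw [hrd r (by linarith)]
    exact ⟨hlow r hr, hup r hr⟩
  · set C := min (w 1 * q 1) δ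
    have h1 : ∀ r, 1 ≤ r → w 1 + C * Real.log r ≤ w r := by
      intro r hr
      have := mono_of_deriv (fun r => w r - C * Real.log r) _ 1 r one_pos hr
        (fun r hr => (hwd r hr).sub ((Real.hasDerivAt_log hr.ne').const_mul C)) (by
        intro s hs _
        have hspos : 0 < s := by linarith
        have : w s * q s / s - C * s⁻¹ = (w s * q s - C) / s := by field_simp
        rw [this]
        apply div_nonneg _ hspos.le
        linarith [hlow s hs])
      simp only [Real.log_one] at this
      linarith
    apply tendsto_atTop_mono' atTop (f₁ := fun r => w 1 + C * Real.log r)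
    · filter_upwards [eventually_ge_atTop 1] with r hr using h1 r hr
    · exact tendsto_atTop_add_const_left _ _ (Real.tendsto_log_atTop.const_mul_atTop hC2)

theorem stmt4 (n : ℕ) (hn : 3 ≤ n) (m α β η : ℝ) (hη : 0 < η)
    (hm : 0 < m) (hm' : m < ((n : ℝ) - 2) / n)
    (hβ : 0 < β) (hα : α = 2 * β / (1 - m))
    (v : ℝ → ℝ) (hv : IsRadialSol n m α β η v)
    (w : ℝ → ℝ) (hw : ∀ r : ℝ, w r = r ^ 2 * v r ^ (1 - m)) :
    (∃ C₁ > (0:ℝ), ∃ C₂ > (0:ℝ), ∃ C₃ > (0:ℝ),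
      (∀ r : ℝ, 0 < r → r * deriv w r / w r ≤ C₁) ∧
      (∀ r : ℝ, 1 ≤ r → C₂ ≤ r * deriv w r ∧ r * deriv w r ≤ C₃)) ∧
    Tendsto w atTop atTop := by
  obtain ⟨hpos, hcont, hC2, -, hv0, hode⟩ := hv
  have hn' : (3:ℝ) ≤ n := by exact_mod_cast hn
  have hn0 : (0:ℝ) < n := by linarith
  rw [lt_div_iff₀ hn0] at hm'
  have hm1 : 0 < 1 - m := by nlinarith
  have hvp : ∀ r, 0 < r → 0 < v r := fun r hr => hpos r (le_of_lt hr)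
  have hvd : ∀ r, 0 < r → HasDerivAt v (deriv v r) r := fun r hr =>
    ((hC2.differentiableOn (by norm_num)).differentiableAt (Ioi_mem_nhds hr)).hasDerivAt
  have hvdd : ∀ r, 0 < r → HasDerivAt (deriv v) (deriv (deriv v) r) r := by
    intro r hr
    have : ContDiffOn ℝ 1 (deriv v) (Ioi 0) := by
      apply ((contDiffOn_succ_iff_deriv_of_isOpen (n := 1) isOpen_Ioi).1 _).2.2
      rw [one_add_one_eq_two]
      exact hC2
    exact ((this.differentiableOn (by norm_num)).differentiableAt (Ioi_mem_nhds hr)).hasDerivAt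
  have hd1 : ∀ r, 0 < r → deriv (fun s => v s ^ m) r = m * (v r ^ (m - 1) * deriv v r) := by
    intro r hr
    rw [((hvd r hr).rpow_const (p := m) (Or.inl (hvp r hr).ne')).deriv]
    ring
  have hd2 : ∀ r, 0 < r → deriv (deriv (fun s => v s ^ m)) r =
      m * ((m - 1) * (v r ^ (m - 1) / v r) * deriv v r ^ 2
        + v r ^ (m - 1) * deriv (deriv v) r) := by
    intro r hr
    have he : deriv (fun s => v s ^ m) =ᶠ[nhds r] fun r => m * (v r ^ (m - 1) * deriv v r) := by
      filter_upwards [Ioi_mem_nhds hr] with s hs using hd1 s hs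
    rw [he.deriv_eq]
    have := ((((hvd r hr).rpow_const (p := m - 1) (Or.inl (hvp r hr).ne'))).mul
      (hvdd r hr)).const_mul m
    rw [Real.rpow_sub_one (hvp r hr).ne'] at this
    refine this.deriv.trans ?_
    ring
  have hlim : Tendsto (fun r => v r ^ (1 - m)) (nhdsWithin 0 (Ioi 0)) (nhds (η ^ (1 - m))) := by
    have h := (hcont 0 (by simp)).tendsto
    rw [hv0] at h
    exact (h.mono_left (nhdsWithin_mono _ Ioi_subset_Ici_self)).rpow_const (Or.inl hη.ne')
  have hwfun : w = fun r => r ^ 2 * v r ^ (1 - m) := funext hw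
  apply core (m / (1 - m)) ((n:ℝ) - 2) (β / ((n:ℝ) - 1)) (η ^ (1 - m)) (by positivity)
    (by linarith) (div_pos hβ (by linarith)) (by positivity) ?_ w
    (fun r => 2 + (1 - m) * (r * deriv v r / v r)) ?_ ?_ ?_ ?_ ?_
  · have : 2 * ((n:ℝ) - 2) - 4 * (m / (1 - m)) = 2 * (n - 2 - m * n) / (1 - m) := by
      field_simp
      ring
    rw [this]
    apply div_pos _ hm1
    linarith
  · intro r hr
    rw [hw]
    have := hvp r hr
    positivity
  · intro r hr
    have hvr := hvp r hr
    rw [hwfun]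
    have := (hasDerivAt_pow 2 r).mul
      ((hvd r hr).rpow_const (p := 1 - m) (Or.inl (hvp r hr).ne'))
    rw [Real.rpow_sub_one hvr.ne'] at this
    refine this.congr_deriv ?_
    field_simp
    push_cast
    ring
  · intro r hr
    have hvr := hvp r hr
    have hE := Real.rpow_pos_of_pos hvr (m - 1)
    have := ((((hasDerivAt_id r).mul (hvdd r hr)).div (hvd r hr) hvr.ne').const_mul
      (1 - m)).const_add 2
    refine this.congr_deriv ?_
    clear this
    simp only [Pi.mul_apply, id]
    have ho := hode r hr
    rw [hd1 r hr, hd2 r hr, hα] at ho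
    rw [hw, show 1 - m = -(m - 1) by ring, Real.rpow_neg hvr.le,
      show -(m - 1) = 1 - m by ring]
    generalize v r ^ (m - 1) = E at *
    generalize deriv (deriv v) r = v2 at *
    generalize deriv v r = v1 at *
    generalize v r = v0 at *
    have hn1 : (n:ℝ) - 1 ≠ 0 := by linarith
    have hE' := hE.ne'
    have hsol : v2 = -(m - 1) * v1 ^ 2 / v0 - (n - 1) / r * v1
        - (2 * β / (1 - m) * v0 + β * r * v1) / ((n - 1) * E) := by
      field_simp at ho ⊢
      linear_combination ho
    rw [hsol]
    field_simp
    ring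
  · rw [hwfun]
    have h2 : Tendsto (fun r : ℝ => r ^ 2) (nhdsWithin 0 (Ioi 0)) (nhds 0) := by
      have := (continuous_pow 2 : Continuous fun r : ℝ => r ^ 2).tendsto 0
      simp only [ne_eq, OfNat.ofNat_ne_zero, not_false_eq_true, zero_pow] at this
      exact this.mono_left nhdsWithin_le_nhds
    simpa using h2.mul hlim
  · apply hlim.congr'
    filter_upwards [self_mem_nhdsWithin] with r hr
    have hr' : r ≠ 0 := ne_of_gt hr
    rw [hw]
    field_simp
end
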